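/- arXiv:2505.15826 — 2 statements merged into one kernel-verified Lean document; each statement's English description precedes it below -/
import Mathlib

section
/- (Lackner–Panholzer, Theorem 4.10, critical case m = n/2) As k → ∞, with n = 2k, the total number M_{n,n/2} of (n, n/2)-mapping parking functions satisfies M_{2k,k} / ( (√2 · 3^(1/6) · Γ(2/3) / √π) · (2k)^(3k − 1/6) ) → 1, i.e., M_{n,n/2} ∼ (√2 · 3^(1/6) · Γ(2/3) / √π) · n^(3n/2 − 1/6) along even n. -/
/-- A rooted labelled tree on the vertex set `Fin n`, encoded by its root and its parent
map: the root is its own parent and every vertex reaches the root by iterating the parent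
map (this data is equivalent to a tree on `{1,…,n}` with a distinguished root). -/
structure LabelledRootedTree (n : ℕ) where
  root : Fin n
  parent : Fin n → Fin n
  parent_root : parent root = root
  reaches_root : ∀ v : Fin n, ∃ k : ℕ, parent^[k] v = root

/-- The parking procedure driven by a step map `f` on `Fin n` (the parent map of a tree, or
an `n`-mapping).  `occ` is the list of occupied vertices; the drivers in the list arrive in
order, and the driver starting at `v` parks at `f^[i] v` for the least `i` such that
`f^[i] v` is unoccupied (searching `i < n` suffices, since the forward orbit of `v` has at
most `n` distinct vertices, all appearing among the first `n` iterates, in visit order).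
The result is `none` if some driver finds every vertex on its route occupied. -/
def parkAux (n : ℕ) (f : Fin n → Fin n) : List (Fin n) → List (Fin n) → Option (List (Fin n))
  | occ, [] => some occ
  | occ, v :: rest =>
    match (List.range n).find? (fun i => decide (f^[i] v ∉ occ)) with
    | none => none
    | some i => parkAux n f (f^[i] v :: occ) rest

/-- `s : Fin m → Fin n` is a parking function for the step map `f` on `Fin n`:
all `m` drivers, arriving in order with preferences `s 1, …, s m`, park successfully. -/
def ParkingSucceeds {n m : ℕ} (f : Fin n → Fin n) (s : Fin m → Fin n) : Prop :=
  (parkAux n f [] (List.ofFn s)).isSome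

/-- `s` is a tree parking function for the rooted labelled tree `T`: each driver `k` starts
at `s k` and drives towards the root, parking at the first unoccupied vertex. -/
def IsTreeParking {n m : ℕ} (T : LabelledRootedTree n) (s : Fin m → Fin n) : Prop :=
  ParkingSucceeds T.parent s

/-- `M_{n,m}`: the number of pairs `(f, s)` with `f` an `n`-mapping and
`s ∈ {1,…,n}^m` a mapping parking function for `f`. -/
noncomputable def MCount (n m : ℕ) : ℕ :=
  Nat.card {p : (Fin n → Fin n) × (Fin m → Fin n) // ParkingSucceeds p.1 p.2}

/-- `F_{n,m}`: the number of pairs `(T, s)` with `T` a rooted labelled tree on `{1,…,n}`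
and `s ∈ {1,…,n}^m` a tree parking function for `T`. -/
noncomputable def FCount (n m : ℕ) : ℕ :=
  Nat.card {p : LabelledRootedTree n × (Fin m → Fin n) // IsTreeParking p.1 p.2}

open Filter

/-!
Reveal the image of a vertex only when a driver parks there. The starting points from which a
driver would park at a given free vertex then form its block, and only the block sizes matter: a
driver enters a block of size `x` in `x` ways, and the revealed edge merges it into another block of
size `y` in `y` ways, or destroys it. Weighting the block sizes by `blockWeight` gives a functional
that one step of this process reproduces up to a constant, with one block fewer, whence
`M_{2k,k} = (2k)^k (2k)! [z^{2k}] B^k (1 - B)^{k-1}`, where `B = z exp (2 B)`.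

Lagrange inversion turns the coefficient into a Cauchy integral over `|B| = 1 / 2`, a circle through
the double saddle point `B = 1 / 2`. The rest of the integrand vanishes there, and one integration
by parts absorbs this zero. On the scale `φ = k^{-1/3} x` dominated convergence gives the limit
`∫ (1 - cos (2 x³ / 3)) / x² dx`, which Laplace transforms evaluate in terms of `Γ (2 / 3)`, and
Stirling's formula for `(2k)!` finishes.
-/

namespace MappingParking

section Series

open PowerSeries Finset

/-- The weight `t n` of a block of `n` vertices whose only free vertex is the one at which it is
entered: `n! (n - 1)! t n` counts the rooted labelled trees on `n` vertices together with the
parking functions of `n - 1` drivers that leave the root free. The recursion splits such a block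
at the vertex taken by the last driver, which joined two smaller blocks. -/
def blockWeight : ℕ → ℚ
  | 0 => 0
  | 1 => 1
  | n + 2 => (∑ i : Fin (n + 1),
      ((i : ℕ) + 1) * blockWeight (i + 1) * ((n + 1 - i : ℕ) * blockWeight (n + 1 - i))) / (n + 1)
  decreasing_by all_goals omega

/-- The generating function `A` of the block weights. -/
def blockSeries : ℚ⟦X⟧ := mk blockWeight

/-- The generating function `B = z A'` of the block weights with a marked vertex. It is the
solution of `B = z exp (2 B)`. -/
def markedSeries : ℚ⟦X⟧ := mk fun n => n * blockWeight n

lemma blockWeight_zero : blockWeight 0 = 0 := by rw [blockWeight]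

lemma blockWeight_one : blockWeight 1 = 1 := by rw [blockWeight]

lemma succ_mul_blockWeight (n : ℕ) :
    ((n : ℚ) + 1) * blockWeight (n + 2) = ∑ i ∈ range (n + 1),
      (i + 1) * blockWeight (i + 1) * ((n + 1 - i : ℕ) * blockWeight (n + 1 - i)) := by
  rw [blockWeight, mul_div_cancel₀ _ (by positivity), sum_range]

lemma coeff_blockSeries (n : ℕ) : coeff n blockSeries = blockWeight n := coeff_mk _ _

lemma coeff_markedSeries (n : ℕ) : coeff n markedSeries = n * blockWeight n := coeff_mk _ _

lemma constantCoeff_markedSeries : constantCoeff markedSeries = 0 := by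
  rw [← coeff_zero_eq_constantCoeff_apply, coeff_markedSeries, Nat.cast_zero, zero_mul]

lemma coeff_markedSeries_sq (n : ℕ) :
    coeff n (markedSeries ^ 2) = ((n : ℚ) - 1) * blockWeight n := by
  rw [sq, coeff_mul]
  simp only [coeff_markedSeries]
  match n with
  | 0 => simp [blockWeight_zero]
  | 1 => simp [Nat.antidiagonal_succ]
  | n + 2 =>
    rw [Nat.sum_antidiagonal_eq_sum_range_succ
      (fun i j => (i * blockWeight i) * (j * blockWeight j) : ℕ → ℕ → ℚ), sum_range_succ,
      sum_range_succ']
    push_cast [Nat.sub_self, Nat.add_sub_add_right]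
    linear_combination -succ_mul_blockWeight n

lemma blockSeries_eq : blockSeries = markedSeries * (1 - markedSeries) := by
  have hsq : markedSeries ^ 2 = markedSeries - blockSeries := by
    ext n
    rw [coeff_markedSeries_sq, map_sub, coeff_markedSeries, coeff_blockSeries]
    ring
  linear_combination hsq

lemma coeff_X_mul_derivative {R : Type*} [CommSemiring R] (F : R⟦X⟧) (n : ℕ) :
    coeff n (X * d⁄dX R F) = n * coeff n F := by
  cases n with
  | zero => simp
  | succ n => rw [coeff_succ_X_mul, coeff_derivative, mul_comm]; push_cast; rfl

lemma X_mul_derivative_blockSeries : X * d⁄dX ℚ blockSeries = markedSeries := by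
  ext n
  rw [coeff_X_mul_derivative, coeff_markedSeries, coeff_blockSeries]

lemma X_mul_derivative_markedSeries :
    X * d⁄dX ℚ markedSeries * (1 - 2 * markedSeries) = markedSeries := by
  have h := X_mul_derivative_blockSeries
  rw [blockSeries_eq, Derivation.leibniz, map_sub, derivative_one] at h
  simp only [smul_eq_mul] at h
  linear_combination h

lemma coeff_markedSeries_pow_succ (n k : ℕ) :
    2 * k * n * coeff n (markedSeries ^ (k + 1)) =
      ((n : ℚ) - k) * (k + 1) * coeff n (markedSeries ^ k) := by
  have h : C (2 * k : ℚ) * (X * d⁄dX ℚ (markedSeries ^ (k + 1))) =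
      C (k + 1 : ℚ) * (X * d⁄dX ℚ (markedSeries ^ k)) - C (k * (k + 1) : ℚ) * markedSeries ^ k := by
    rw [derivative_pow, derivative_pow]
    have hC2 : (C (2 : ℚ) : ℚ⟦X⟧) = 2 := map_ofNat _ 2
    simp only [map_mul, map_add, map_natCast, map_one, hC2]
    cases k with
    | zero => simp
    | succ k =>
      push_cast [Nat.add_sub_cancel]
      linear_combination
        (-((k : ℚ⟦X⟧) + 2) * (k + 1) * markedSeries ^ k) * X_mul_derivative_markedSeries
  have hn := congrArg (coeff n) h
  simp only [map_sub, coeff_C_mul, coeff_X_mul_derivative] at hn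
  linear_combination hn

lemma coeff_markedSeries_pow_self (n : ℕ) : coeff n (markedSeries ^ n) = 1 := by
  have h : markedSeries = X * PowerSeries.mk fun n : ℕ => ((n : ℚ) + 1) * blockWeight (n + 1) := by
    ext n
    cases n with
    | zero => simp [constantCoeff_markedSeries]
    | succ n => rw [coeff_succ_X_mul, coeff_markedSeries, coeff_mk]; push_cast; rfl
  rw [h, mul_pow, coeff_X_pow_mul', if_pos le_rfl, Nat.sub_self,
    coeff_zero_eq_constantCoeff_apply, map_pow, ← coeff_zero_eq_constantCoeff_apply, coeff_mk]
  simp [blockWeight_one]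

lemma coeff_markedSeries_pow_of_lt {n k : ℕ} (h : n < k) : coeff n (markedSeries ^ k) = 0 := by
  refine coeff_of_lt_order _ (lt_of_lt_of_le (Nat.cast_lt.2 h) ?_)
  exact le_order_pow_of_constantCoeff_eq_zero k constantCoeff_markedSeries

/-- Lagrange inversion for `B = z exp (2 B)`. -/
lemma coeff_markedSeries_pow (k j : ℕ) :
    ((k : ℚ) + j) * j.factorial * coeff (k + j) (markedSeries ^ k) = k * (2 * (k + j)) ^ j := by
  induction j generalizing k with
  | zero => simp [coeff_markedSeries_pow_self]
  | succ j ih =>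
    have hrec := coeff_markedSeries_pow_succ (k + (j + 1)) k
    have hih := ih (k + 1)
    rw [show k + 1 + j = k + (j + 1) by ring] at hih
    have hk : (k : ℚ) + 1 ≠ 0 := by positivity
    apply mul_left_cancel₀ hk
    rw [Nat.factorial_succ]
    push_cast at hrec hih ⊢
    have hshift : (2 : ℚ) * (k + 1 + j) = 2 * (k + (j + 1)) := by ring
    rw [hshift] at hih
    linear_combination (-(k + (j + 1)) * j.factorial : ℚ) * hrec
      + (2 * k * (k + (j + 1)) : ℚ) * hih

lemma inv_one_sub_markedSeries_mul : (1 - markedSeries)⁻¹ * (1 - markedSeries) = 1 :=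
  PowerSeries.inv_mul_cancel _ (by simp [constantCoeff_markedSeries])

lemma inv_one_sub_markedSeries_mul_blockSeries_pow (d : ℕ) :
    (1 - markedSeries)⁻¹ * blockSeries ^ (d + 1) =
      markedSeries ^ (d + 1) * (1 - markedSeries) ^ d := by
  rw [blockSeries_eq, mul_pow, pow_succ (1 - markedSeries)]
  linear_combination
    (markedSeries ^ (d + 1) * (1 - markedSeries) ^ d) * inv_one_sub_markedSeries_mul

end Series

section Chain

open PowerSeries Finset

/-- The sum of `F x (s - {x})` over the elements `x` of the multiset `s`. -/
def sumErase (F : ℕ → Multiset ℕ → ℚ) (s : Multiset ℕ) : ℚ :=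
  (s.map fun x => F x (s.erase x)).sum

lemma sumErase_cons (F : ℕ → Multiset ℕ → ℚ) (x : ℕ) (s : Multiset ℕ) :
    sumErase F (x ::ₘ s) = F x s + sumErase (fun y t => F y (x ::ₘ t)) s := by
  rw [sumErase, sumErase, Multiset.map_cons, Multiset.sum_cons, Multiset.erase_cons_head]
  congr 2
  refine Multiset.map_congr rfl fun y hy => ?_
  rcases eq_or_ne x y with rfl | hne
  · rw [Multiset.erase_cons_head, Multiset.cons_erase hy]
  · rw [Multiset.erase_cons_tail _ hne]

lemma sumErase_map {V : Type*} [DecidableEq V] (F : ℕ → Multiset ℕ → ℚ) (T : Finset V) (c : V → ℕ) :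
    sumErase F (T.val.map c) = ∑ τ ∈ T, F (c τ) ((T.erase τ).val.map c) := by
  rw [sumErase, Multiset.map_map]
  refine sum_congr rfl fun τ hτ => ?_
  rw [erase_val, Multiset.map_erase_of_mem _ _ hτ]
  rfl

lemma mul_sumErase (g : ℕ → ℚ) (F : ℕ → Multiset ℕ → ℚ) (s : Multiset ℕ) :
    g s.sum * sumErase F s = sumErase (fun x t => g (x + t.sum) * F x t) s := by
  rw [sumErase, sumErase, ← Multiset.sum_map_mul_left]
  refine congrArg _ (Multiset.map_congr rfl fun x hx => ?_)
  rw [← Multiset.sum_cons, Multiset.cons_erase hx]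

lemma sumErase_sub_one_mul (φ : Multiset ℕ → ℚ) (s : Multiset ℕ) :
    sumErase (fun x t => ((x : ℚ) - 1) * φ (x ::ₘ t)) s = ((s.sum : ℚ) - s.card) * φ s := by
  calc sumErase (fun x t => ((x : ℚ) - 1) * φ (x ::ₘ t)) s
      = (s.map fun x : ℕ => ((x : ℚ) - 1) * φ s).sum :=
        congrArg _ (Multiset.map_congr rfl fun x hx => by simp only [Multiset.cons_erase hx])
    _ = ((s.sum : ℚ) - s.card) * φ s := by
        rw [Multiset.sum_map_mul_right, Multiset.sum_map_sub, Multiset.map_const',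
          Multiset.sum_replicate, nsmul_one, Nat.cast_multiset_sum]

/-- The sum of `φ` over the sequences of `d` block sizes at most `n`, each size `x` weighted by
`blockWeight x`. -/
def blockSum (n : ℕ) : ℕ → (Multiset ℕ → ℚ) →ₗ[ℚ] ℚ
  | 0 => LinearMap.proj 0
  | d + 1 => ∑ x ∈ range (n + 1), blockWeight x • (blockSum n d ∘ₗ LinearMap.funLeft ℚ ℚ (x ::ₘ ·))

variable (n : ℕ)

lemma blockSum_zero (φ : Multiset ℕ → ℚ) : blockSum n 0 φ = φ 0 := rfl

lemma blockSum_succ (d : ℕ) (φ : Multiset ℕ → ℚ) :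
    blockSum n (d + 1) φ =
      ∑ x ∈ range (n + 1), blockWeight x * blockSum n d fun s => φ (x ::ₘ s) := by
  simp only [blockSum, LinearMap.sum_apply, LinearMap.smul_apply, smul_eq_mul]
  rfl

lemma blockSum_const_mul (d : ℕ) (c : ℚ) (φ : Multiset ℕ → ℚ) :
    blockSum n d (fun s => c * φ s) = c * blockSum n d φ :=
  map_smul (blockSum n d) c φ

lemma blockSum_sum {ι : Type*} (I : Finset ι) (d : ℕ) (φ : ι → Multiset ℕ → ℚ) :
    blockSum n d (fun s => ∑ i ∈ I, φ i s) = ∑ i ∈ I, blockSum n d (φ i) := by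
  rw [← map_sum]
  congr 1
  ext s
  rw [Finset.sum_apply]

lemma blockSum_congr {d : ℕ} {φ ψ : Multiset ℕ → ℚ}
    (h : ∀ s : Multiset ℕ, s.card = d → (∀ x ∈ s, 0 < x) → φ s = ψ s) :
    blockSum n d φ = blockSum n d ψ := by
  induction d generalizing φ ψ with
  | zero => exact h 0 rfl (by simp)
  | succ d ih =>
    rw [blockSum_succ, blockSum_succ]
    refine sum_congr rfl fun x _ => ?_
    rcases Nat.eq_zero_or_pos x with rfl | hx
    · rw [blockWeight_zero, zero_mul, zero_mul]
    · exact congrArg _ (ih fun s hs hpos =>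
        h _ (by rw [Multiset.card_cons, hs]) (Multiset.forall_mem_cons.2 ⟨hx, hpos⟩))

lemma blockSum_succ_sumErase (d : ℕ) (F : ℕ → Multiset ℕ → ℚ) :
    blockSum n (d + 1) (sumErase F) =
      (d + 1) * ∑ x ∈ range (n + 1), blockWeight x * blockSum n d (F x) := by
  induction d generalizing F with
  | zero => simp [blockSum_succ, blockSum_zero, sumErase]
  | succ d ih =>
    have hcons (x : ℕ) : blockSum n (d + 1) (fun s => sumErase F (x ::ₘ s)) =
        blockSum n (d + 1) (F x) + (d + 1) *
          ∑ y ∈ range (n + 1), blockWeight y * blockSum n d fun s => F y (x ::ₘ s) := by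
      rw [← ih fun y s => F y (x ::ₘ s), ← map_add]
      exact congrArg _ (funext fun s => sumErase_cons F x s)
    have hswap : ∑ x ∈ range (n + 1), blockWeight x *
        ∑ y ∈ range (n + 1), blockWeight y * blockSum n d (fun s => F y (x ::ₘ s)) =
          ∑ y ∈ range (n + 1), blockWeight y * blockSum n (d + 1) (F y) := by
      simp only [blockSum_succ, mul_sum]
      rw [sum_comm]
      exact sum_congr rfl fun x _ => sum_congr rfl fun y _ => mul_left_comm _ _ _
    rw [blockSum_succ]
    simp only [hcons, mul_add, sum_add_distrib, mul_left_comm _ ((d : ℚ) + 1), ← mul_sum, hswap]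
    push_cast
    ring

lemma sum_range_coeff_mul_coeff_X_pow_mul {R : Type*} [CommSemiring R] (F G : R⟦X⟧) :
    ∑ x ∈ range (n + 1), coeff x F * coeff n (X ^ x * G) = coeff n (F * G) := by
  rw [coeff_mul, Nat.sum_antidiagonal_eq_sum_range_succ fun i j => coeff i F * coeff j G]
  refine sum_congr rfl fun x hx => ?_
  rw [coeff_X_pow_mul', if_pos (mem_range_succ_iff.1 hx)]

lemma sum_range_sum_range_coeff_mul {R : Type*} [CommSemiring R] (F G : R⟦X⟧) (f : ℕ → R)
    (hf : ∀ c, n < c → f c = 0) :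
    ∑ x ∈ range (n + 1), ∑ y ∈ range (n + 1), coeff x F * coeff y G * f (x + y) =
      ∑ c ∈ range (n + 1), coeff c (F * G) * f c := by
  simp only [coeff_mul, sum_mul]
  rw [← sum_product', sum_sigma']
  symm
  refine sum_bij_ne_zero (fun p _ _ => p.2) ?_ ?_ ?_ ?_
  · rintro ⟨c, a, b⟩ hp _
    simp only [mem_sigma, mem_product, mem_range, HasAntidiagonal.mem_antidiagonal] at hp ⊢
    omega
  · rintro ⟨c, a, b⟩ hp _ ⟨c', a', b'⟩ hp' _ h
    simp only [mem_sigma, HasAntidiagonal.mem_antidiagonal] at hp hp'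
    obtain ⟨rfl, rfl⟩ := Prod.mk.inj h
    rw [← hp.2, ← hp'.2]
  · rintro ⟨a, b⟩ _ hne
    have hab : a + b ≤ n := by
      by_contra! hlt
      exact hne (by rw [hf _ hlt, mul_zero])
    exact ⟨⟨a + b, a, b⟩, by simpa [Nat.lt_succ_iff] using hab, hne, rfl⟩
  · rintro ⟨c, p⟩ hp _
    rw [HasAntidiagonal.mem_antidiagonal.1 (mem_sigma.1 hp).2]

/-- The total weight of the ways to complete blocks of total size `σ` to a mapping on `n`
vertices. -/
noncomputable def completionWeight (σ : ℕ) : ℚ := coeff n (X ^ σ * (1 - markedSeries)⁻¹)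

lemma completionWeight_self : completionWeight n n = 1 := by
  have hzero := congrArg constantCoeff inv_one_sub_markedSeries_mul
  rw [map_mul, map_sub, constantCoeff_markedSeries, map_one, sub_zero, mul_one] at hzero
  rw [completionWeight, coeff_X_pow_mul', if_pos le_rfl, Nat.sub_self,
    coeff_zero_eq_constantCoeff_apply, hzero]

lemma completionWeight_of_lt {σ : ℕ} (h : n < σ) : completionWeight n σ = 0 := by
  rw [completionWeight, coeff_X_pow_mul', if_neg h.not_ge]

lemma sum_range_completionWeight_add {σ : ℕ} (h : n ≠ σ) :
    ∑ x ∈ range (n + 1), x * blockWeight x * completionWeight n (x + σ) =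
      completionWeight n σ := by
  simp only [completionWeight, ← coeff_markedSeries, pow_add, mul_assoc]
  rw [sum_range_coeff_mul_coeff_X_pow_mul]
  have hinv : markedSeries * (X ^ σ * (1 - markedSeries)⁻¹) =
      X ^ σ * (1 - markedSeries)⁻¹ - X ^ σ := by
    linear_combination (-X ^ σ : ℚ⟦X⟧) * inv_one_sub_markedSeries_mul
  rw [hinv, map_sub, coeff_X_pow, if_neg h, sub_zero]

/-- `parkStep n φ s` is the sum of `φ` over the states reached from block sizes `s` when a driver
arrives in one of the blocks and its free vertex is then sent to a uniformly chosen vertex out of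
`n`: inside another block, the two blocks merge; elsewhere, the block disappears. -/
def parkStep (φ : Multiset ℕ → ℚ) : Multiset ℕ → ℚ :=
  sumErase fun x t =>
    x * (sumErase (fun y r => y * φ ((x + y) ::ₘ r)) t + ((n : ℚ) - t.sum) * φ t)

/-- The number of successful sequences of `m` arrivals and edges, starting from given block
sizes. -/
def parkCount : ℕ → Multiset ℕ → ℚ
  | 0 => 1
  | m + 1 => parkStep n (parkCount m)

lemma blockSum_merge (d : ℕ) (ψ : Multiset ℕ → ℚ) (hψ : ∀ s : Multiset ℕ, n < s.sum → ψ s = 0) :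
    ∑ x ∈ range (n + 1), x * blockWeight x *
        blockSum n d (sumErase fun y r => y * ψ ((x + y) ::ₘ r)) =
      blockSum n d fun s => ((s.sum : ℚ) - d) * ψ s := by
  cases d with
  | zero => simp [blockSum_zero, sumErase]
  | succ d =>
    let f (c : ℕ) : ℚ := blockSum n d fun r => ψ (c ::ₘ r)
    have hf (c : ℕ) (hc : n < c) : f c = 0 := by
      have : (fun r => ψ (c ::ₘ r)) = 0 :=
        funext fun r => hψ _ (hc.trans_le (by rw [Multiset.sum_cons]; exact Nat.le_add_right _ _))
      simp only [f, this, map_zero]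
    calc ∑ x ∈ range (n + 1), x * blockWeight x *
          blockSum n (d + 1) (sumErase fun y r => y * ψ ((x + y) ::ₘ r))
        = (d + 1) * ∑ x ∈ range (n + 1), ∑ y ∈ range (n + 1),
            coeff x markedSeries * coeff y markedSeries * f (x + y) := by
          simp only [blockSum_succ_sumErase, blockSum_const_mul, coeff_markedSeries, mul_sum, f]
          exact sum_congr rfl fun x _ => sum_congr rfl fun y _ => by ring
      _ = (d + 1) * ∑ c ∈ range (n + 1), blockWeight c * (((c : ℚ) - 1) * f c) := by
          rw [sum_range_sum_range_coeff_mul n _ _ f hf, ← sq]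
          simp only [coeff_markedSeries_sq]
          exact congrArg _ (sum_congr rfl fun c _ => by ring)
      _ = blockSum n (d + 1) (sumErase fun c r => ((c : ℚ) - 1) * ψ (c ::ₘ r)) := by
          simp only [blockSum_succ_sumErase, blockSum_const_mul, f]
      _ = blockSum n (d + 1) fun s => ((s.sum : ℚ) - (d + 1 : ℕ)) * ψ s :=
          blockSum_congr n fun s hs _ => by rw [sumErase_sub_one_mul, hs]

lemma blockSum_leave (d : ℕ) (φ : Multiset ℕ → ℚ) :
    ∑ x ∈ range (n + 1), x * blockWeight x *
        blockSum n d (fun s => completionWeight n (x + s.sum) * (((n : ℚ) - s.sum) * φ s)) =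
      blockSum n d fun s => ((n : ℚ) - s.sum) * (completionWeight n s.sum * φ s) := by
  simp only [← blockSum_const_mul]
  rw [← blockSum_sum]
  refine congrArg _ (funext fun s => ?_)
  simp only [← mul_assoc, ← sum_mul]
  rcases eq_or_ne n s.sum with h | h
  · rw [← h, sub_self, mul_zero, zero_mul, zero_mul, zero_mul]
  · rw [sum_range_completionWeight_add n h, mul_comm (completionWeight n s.sum)]

lemma blockSum_parkStep (d : ℕ) (φ : Multiset ℕ → ℚ) :
    blockSum n (d + 1) (fun s => completionWeight n s.sum * parkStep n φ s) =
      (d + 1) * (n - d) * blockSum n d fun s => completionWeight n s.sum * φ s := by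
  let ψ (s : Multiset ℕ) : ℚ := completionWeight n s.sum * φ s
  have hψ (s : Multiset ℕ) (hs : n < s.sum) : ψ s = 0 := by
    simp only [ψ, completionWeight_of_lt n hs, zero_mul]
  have hsplit (x : ℕ) : blockWeight x * blockSum n d (fun s => completionWeight n (x + s.sum) *
      (x * (sumErase (fun y r => y * φ ((x + y) ::ₘ r)) s + ((n : ℚ) - s.sum) * φ s))) =
        x * blockWeight x * blockSum n d (sumErase fun y r => y * ψ ((x + y) ::ₘ r)) +
          x * blockWeight x * blockSum n d fun s =>
            completionWeight n (x + s.sum) * (((n : ℚ) - s.sum) * φ s) := by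
    rw [← mul_add, ← map_add, mul_comm (x : ℚ), mul_assoc, ← blockSum_const_mul n d (x : ℚ)]
    refine congrArg _ (congrArg _ (funext fun s => ?_))
    rw [mul_left_comm, mul_add, mul_sumErase fun σ => completionWeight n (x + σ)]
    simp only [Pi.add_apply, ψ, Multiset.sum_cons, add_assoc, mul_left_comm]
  simp only [parkStep, mul_sumErase, blockSum_succ_sumErase, hsplit, sum_add_distrib]
  rw [blockSum_merge n d ψ hψ, blockSum_leave, ← map_add, mul_assoc,
    ← blockSum_const_mul n d ((n : ℚ) - d)]
  exact congrArg _ (congrArg _ (funext fun s => by simp only [Pi.add_apply, ψ]; ring))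

lemma eq_replicate_one_of_sum_le_card {s : Multiset ℕ} (hpos : ∀ x ∈ s, 0 < x)
    (hsum : s.sum ≤ s.card) : s = Multiset.replicate s.card 1 := by
  induction s using Multiset.induction_on with
  | empty => rfl
  | cons a s ih =>
    obtain ⟨ha, hs⟩ := Multiset.forall_mem_cons.1 hpos
    have hcard : s.card ≤ s.sum := by
      simpa using Multiset.card_nsmul_le_sum hs
    rw [Multiset.sum_cons, Multiset.card_cons] at hsum
    rw [Multiset.card_cons, Multiset.replicate_succ, ← ih hs (by omega), show a = 1 by omega]

lemma blockSum_ite_replicate_one (hn : 0 < n) (d : ℕ) (c : ℚ) :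
    blockSum n d (fun s => if s = Multiset.replicate d 1 then c else 0) = c := by
  induction d with
  | zero => simp [blockSum_zero]
  | succ d ih =>
    rw [blockSum_succ, sum_eq_single_of_mem 1 (by simpa using hn), blockWeight_one, one_mul]
    · simpa only [Multiset.replicate_succ, Multiset.cons_inj_right] using ih
    · intro x _ hx
      have hne (s : Multiset ℕ) : x ::ₘ s ≠ Multiset.replicate (d + 1) 1 := fun h =>
        hx (Multiset.eq_of_mem_replicate (h ▸ Multiset.mem_cons_self x s))
      simp only [hne, if_false]
      exact mul_eq_zero_of_right _ (map_zero (blockSum n d))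

lemma blockSum_completionWeight_self (hn : 0 < n) (φ : Multiset ℕ → ℚ) :
    blockSum n n (fun s => completionWeight n s.sum * φ s) = φ (Multiset.replicate n 1) := by
  rw [← blockSum_ite_replicate_one n hn n (φ (Multiset.replicate n 1))]
  refine blockSum_congr n fun s hcard hpos => ?_
  split_ifs with hs
  · rw [hs, Multiset.sum_replicate, smul_eq_mul, mul_one, completionWeight_self, one_mul]
  · rw [completionWeight_of_lt, zero_mul]
    by_contra! hle
    exact hs (hcard ▸ eq_replicate_one_of_sum_le_card hpos (hcard.symm ▸ hle))

lemma blockSum_coeff_X_pow_mul (d : ℕ) (F : ℚ⟦X⟧) :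
    blockSum n d (fun s => coeff n (X ^ s.sum * F)) = coeff n (F * blockSeries ^ d) := by
  induction d generalizing F with
  | zero => simp [blockSum_zero]
  | succ d ih =>
    rw [blockSum_succ]
    simp only [Multiset.sum_cons, pow_add, mul_comm (X ^ _) (X ^ Multiset.sum _), mul_assoc, ih,
      ← coeff_blockSeries]
    rw [sum_range_coeff_mul_coeff_X_pow_mul, mul_left_comm, pow_one, mul_comm blockSeries]

lemma blockSum_parkCount {n d m : ℕ} (h : d + m ≤ n) :
    blockSum n (d + m) (fun s => completionWeight n s.sum * parkCount n m s) * d.factorial *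
        (n - d - m).factorial =
      (d + m).factorial * (n - d).factorial *
        coeff n ((1 - markedSeries)⁻¹ * blockSeries ^ d) := by
  induction m with
  | zero =>
    have hone := blockSum_coeff_X_pow_mul n d (1 - markedSeries)⁻¹
    simp only [parkCount, Pi.one_apply, mul_one, add_zero, Nat.sub_zero, completionWeight, hone]
    ring
  | succ m ih =>
    obtain ⟨e, rfl⟩ := Nat.exists_eq_add_of_le h
    have hih := ih (by omega)
    rw [show d + (m + 1) + e - d - m = e + 1 by omega, Nat.factorial_succ] at hih
    rw [← add_assoc, parkCount, blockSum_parkStep, Nat.factorial_succ (d + m),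
      show d + m + 1 + e - d - (m + 1) = e by omega]
    push_cast [← add_assoc] at hih ⊢
    linear_combination ((d : ℚ) + m + 1) * hih

lemma parkCount_replicate_one {n m : ℕ} (hn : 0 < n) (h : m ≤ n) :
    parkCount n m (Multiset.replicate n 1) * (n - m).factorial =
      n.factorial * m.factorial * coeff n ((1 - markedSeries)⁻¹ * blockSeries ^ (n - m)) := by
  obtain ⟨d, rfl⟩ := Nat.exists_eq_add_of_le' h
  have hcount := blockSum_parkCount (le_refl (d + m))
  rw [Nat.add_sub_cancel]
  rwa [blockSum_completionWeight_self _ hn, show d + m - d - m = 0 by omega, Nat.factorial_zero,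
    Nat.cast_one, mul_one, Nat.add_sub_cancel_left] at hcount

end Chain

section Exploration

open Finset

variable {V : Type*}

/-- `ParksAt f O v ρ`: a driver starting at `v` and following `f` parks at `ρ` when the vertices
in `O` are occupied. -/
inductive ParksAt (f : V → V) (O : Finset V) : V → V → Prop
  | here {v : V} (hv : v ∉ O) : ParksAt f O v v
  | step {v ρ : V} (hv : v ∈ O) (h : ParksAt f O (f v) ρ) : ParksAt f O v ρ

namespace ParksAt

variable {f g : V → V} {O : Finset V} {v ρ σ : V}

lemma notMem (h : ParksAt f O v ρ) : ρ ∉ O := by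
  induction h with
  | here hv => exact hv
  | step _ _ ih => exact ih

lemma unique (hρ : ParksAt f O v ρ) (hσ : ParksAt f O v σ) : ρ = σ := by
  induction hρ with
  | here hv =>
    cases hσ with
    | here => rfl
    | step hv' => exact absurd hv' hv
  | step hv _ ih =>
    cases hσ with
    | here hv' => exact absurd hv hv'
    | step _ h => exact ih h

lemma congr (hfg : Set.EqOn f g O) (h : ParksAt f O v ρ) : ParksAt g O v ρ := by
  induction h with
  | here hv => exact here hv
  | step hv _ ih => exact step hv (hfg hv ▸ ih)

lemma trans_of_subset {O' : Finset V} (hO : O ⊆ O') (hρ : ParksAt f O v ρ)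
    (hσ : ParksAt f O' ρ σ) : ParksAt f O' v σ := by
  induction hρ with
  | here => exact hσ
  | step hv _ ih => exact step (hO hv) (ih hσ)

lemma exists_iterate (h : ParksAt f O v ρ) : ∃ i, (∀ j < i, f^[j] v ∈ O) ∧ f^[i] v = ρ := by
  induction h with
  | here => exact ⟨0, by simp, rfl⟩
  | step hv _ ih =>
    obtain ⟨i, hi, hρ⟩ := ih
    refine ⟨i + 1, fun j hj => ?_, hρ⟩
    cases j with
    | zero => exact hv
    | succ j => exact hi j (by omega)

lemma of_iterate {i : ℕ} (hmem : ∀ j < i, f^[j] v ∈ O) (hi : f^[i] v ∉ O) :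
    ParksAt f O v (f^[i] v) := by
  induction i generalizing v with
  | zero => exact here hi
  | succ i ih =>
    exact step (hmem 0 i.succ_pos) (ih (fun j hj => hmem (j + 1) (by omega)) hi)

lemma exists_iterate_lt_card [Fintype V] (h : ParksAt f O v ρ) :
    ∃ i < Fintype.card V, f^[i] v = ρ := by
  obtain ⟨i, hmem, rfl⟩ := h.exists_iterate
  refine ⟨i, ?_, rfl⟩
  have hinj : Function.Injective fun j : Fin (i + 1) => f^[j] v := by
    intro a b heq
    by_contra hne
    wlog hlt : a < b generalizing a b
    · exact this heq.symm (Ne.symm hne) (lt_of_le_of_ne (not_lt.1 hlt) (Ne.symm hne))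
    rw [Fin.lt_def] at hlt
    have hshift : f^[i] v = f^[i - b + a] v := by
      rw [Function.iterate_add_apply]
      beta_reduce at heq
      rw [heq, ← Function.iterate_add_apply, Nat.sub_add_cancel (by omega)]
    exact h.notMem (hshift ▸ hmem _ (by omega))
  simpa using Fintype.card_le_of_injective _ hinj

variable [DecidableEq V]

lemma insert_iff (hρ : ρ ∉ O) (hσ : σ ≠ ρ) :
    ParksAt f (insert ρ O) v σ ↔ ParksAt f O v σ ∨ ParksAt f O v ρ ∧ ParksAt f O (f ρ) σ := by
  have hsub : O ⊆ insert ρ O := subset_insert ρ O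
  have enlarge {x : V} (h : ParksAt f O x σ) : ParksAt f (insert ρ O) x σ :=
    h.trans_of_subset hsub (here (by simp [hσ, h.notMem]))
  constructor
  · intro h
    induction h with
    | here hv => exact .inl (here fun h => hv (hsub h))
    | step hv _ ih =>
      rcases mem_insert.1 hv with rfl | hv
      · exact .inr ⟨here hρ, (ih hσ enlarge).elim id And.right⟩
      · exact (ih hσ enlarge).imp (step hv) (And.imp_left (step hv))
  · rintro (h | ⟨h₁, h₂⟩)
    · exact enlarge h
    · exact h₁.trans_of_subset hsub (step (mem_insert_self ρ O) (enlarge h₂))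

end ParksAt

lemma parkAux_cons_isSome_iff {n : ℕ} (f : Fin n → Fin n) (occ rest : List (Fin n)) (v : Fin n) :
    (parkAux n f occ (v :: rest)).isSome ↔
      ∃ ρ, ParksAt f occ.toFinset v ρ ∧ (parkAux n f (ρ :: occ) rest).isSome := by
  rw [parkAux]
  cases hfind : (List.range n).find? (fun i => decide (f^[i] v ∉ occ)) with
  | none =>
    refine iff_of_false (by simp) ?_
    rintro ⟨ρ, hρ, -⟩
    obtain ⟨i, hi, rfl⟩ := hρ.exists_iterate_lt_card
    rw [List.find?_range_eq_none] at hfind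
    exact hρ.notMem (by simpa using hfind i (by simpa using hi))
  | some i =>
    rw [List.find?_range_eq_some] at hfind
    have hpark : ParksAt f occ.toFinset v (f^[i] v) :=
      .of_iterate (fun j hj => by simpa using hfind.2.2 j hj) (by simpa using hfind.1)
    exact ⟨fun h => ⟨_, hpark, h⟩, fun ⟨ρ, hρ, h⟩ => by rwa [← hpark.unique hρ] at h⟩

open scoped Classical in
lemma sum_ite_parksAt {M : Type*} [AddCommMonoid M] {f : V → V} {O T : Finset V} {v τ : V}
    (hτ : τ ∈ T) (h : ParksAt f O v τ) (a : V → M) :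
    ∑ σ ∈ T, (if ParksAt f O v σ then a σ else 0) = a τ := by
  rw [sum_eq_single_of_mem τ hτ fun σ _ hne => if_neg fun h' => hne (h'.unique h), if_pos h]

lemma eqOn_update [DecidableEq V] {f : V → V} {O : Finset V} {ρ : V} (hρ : ρ ∉ O) (u : V) :
    Set.EqOn (Function.update f ρ u) f O := fun x hx =>
  Function.update_of_ne (fun h : x = ρ => hρ (h ▸ hx)) _ _

section Block

variable [Fintype V]

open scoped Classical in
/-- The size of the block of `ρ`: the number of starting points from which a driver parks at
`ρ`. -/
noncomputable def blockSize (f : V → V) (O : Finset V) (ρ : V) : ℕ := #{v | ParksAt f O v ρ}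

open scoped Classical in
lemma blockSize_nsmul {M : Type*} [AddCommMonoid M] (f : V → V) (O : Finset V) (ρ : V) (c : M) :
    blockSize f O ρ • c = ∑ v, if ParksAt f O v ρ then c else 0 := by
  rw [← sum_filter, sum_const, blockSize]

lemma blockSize_congr {f g : V → V} {O : Finset V} (hfg : Set.EqOn f g O) :
    blockSize f O = blockSize g O := by
  ext ρ
  unfold blockSize
  congr 1
  ext v
  simp only [mem_filter_univ]
  exact ⟨.congr hfg, .congr hfg.symm⟩

lemma sum_eq_of_parksAt {R : Type*} [Ring R] {f : V → V} {O T : Finset V} {g a : V → R} {b : R}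
    (ha : ∀ v, ∀ τ ∈ T, ParksAt f O v τ → g v = a τ)
    (hb : ∀ v, (∀ τ ∈ T, ¬ ParksAt f O v τ) → g v = b) :
    ∑ v, g v = ∑ τ ∈ T, blockSize f O τ * a τ +
      (Fintype.card V - ∑ τ ∈ T, (blockSize f O τ : R)) * b := by
  classical
  have hsub : ∑ v, (g v - b) = ∑ τ ∈ T, blockSize f O τ * (a τ - b) := by
    simp only [← nsmul_eq_mul, blockSize_nsmul]
    rw [sum_comm]
    refine sum_congr rfl fun v _ => ?_
    by_cases h : ∃ τ ∈ T, ParksAt f O v τ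
    · obtain ⟨τ, hτ, hpark⟩ := h
      rw [sum_ite_parksAt hτ hpark, ha v τ hτ hpark]
    · push Not at h
      rw [hb v h, sub_self, sum_eq_zero fun τ hτ => if_neg (h τ hτ)]
  simp only [sum_sub_distrib, sum_const, card_univ, nsmul_eq_mul, mul_sub] at hsub
  rw [sub_mul, sum_mul, ← sub_add_cancel (∑ v, g v), hsub]
  abel

variable [DecidableEq V]

/-- The sizes of the blocks of the unoccupied vertices. -/
noncomputable def blockSizes (f : V → V) (O : Finset V) : Multiset ℕ :=
  (Oᶜ).val.map (blockSize f O)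

lemma blockSizes_empty (f : V → V) :
    blockSizes f ∅ = Multiset.replicate (Fintype.card V) 1 := by
  have hone (ρ : V) : blockSize f ∅ ρ = 1 := by
    rw [blockSize, card_eq_one]
    refine ⟨ρ, eq_singleton_iff_unique_mem.2 ⟨by simpa using .here (notMem_empty ρ), ?_⟩⟩
    simp only [mem_filter_univ]
    exact fun v hv => (ParksAt.here (notMem_empty v)).unique hv
  rw [blockSizes, Multiset.map_congr rfl fun ρ _ => hone ρ]
  simp

variable {f : V → V} {O : Finset V} {ρ : V}

open Function (update)

open scoped Classical in
lemma blockSize_update_insert (hρ : ρ ∉ O) (u : V) {σ : V} (hσ : σ ≠ ρ) :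
    blockSize (update f ρ u) (insert ρ O) σ =
      blockSize f O σ + if ParksAt f O u σ then blockSize f O ρ else 0 := by
  have hagree (v σ : V) : ParksAt (update f ρ u) O v σ ↔ ParksAt f O v σ :=
    ⟨.congr (eqOn_update hρ u), .congr (eqOn_update hρ u).symm⟩
  simp only [blockSize, ParksAt.insert_iff hρ hσ, Function.update_self, hagree]
  split_ifs with h
  · simp only [h, and_true]
    rw [filter_or, card_union_of_disjoint]
    exact disjoint_filter.2 fun v _ h₁ h₂ => hσ (h₁.unique h₂)
  · simp [h]

open scoped Classical in
lemma blockSizes_update_insert (hρ : ρ ∉ O) (u : V) :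
    blockSizes (update f ρ u) (insert ρ O) = (Oᶜ.erase ρ).val.map fun σ =>
      blockSize f O σ + if ParksAt f O u σ then blockSize f O ρ else 0 := by
  rw [blockSizes, compl_insert]
  exact Multiset.map_congr rfl fun σ hσ => blockSize_update_insert hρ u (ne_of_mem_erase hσ)

lemma blockSizes_update_insert_of_parksAt (hρ : ρ ∉ O) {u τ : V} (hτ : τ ∈ Oᶜ.erase ρ)
    (hu : ParksAt f O u τ) :
    blockSizes (update f ρ u) (insert ρ O) =
      (blockSize f O ρ + blockSize f O τ) ::ₘ
        ((Oᶜ.erase ρ).erase τ).val.map (blockSize f O) := by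
  rw [blockSizes_update_insert hρ, ← Multiset.cons_erase hτ, Multiset.map_cons, if_pos hu,
    add_comm, ← erase_val]
  refine congrArg _ (Multiset.map_congr rfl fun σ hσ => ?_)
  rw [if_neg fun h => ne_of_mem_erase hσ (h.unique hu), add_zero]

lemma blockSizes_update_insert_of_not_parksAt (hρ : ρ ∉ O) {u : V}
    (hu : ∀ τ ∈ Oᶜ.erase ρ, ¬ ParksAt f O u τ) :
    blockSizes (update f ρ u) (insert ρ O) = (Oᶜ.erase ρ).val.map (blockSize f O) := by
  rw [blockSizes_update_insert hρ]
  exact Multiset.map_congr rfl fun σ hσ => by rw [if_neg (hu σ hσ), add_zero]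

lemma parkStep_blockSizes (φ : Multiset ℕ → ℚ) (f : V → V) (O : Finset V) :
    parkStep (Fintype.card V) φ (blockSizes f O) = ∑ ρ ∈ Oᶜ, blockSize f O ρ *
      ∑ u, φ (blockSizes (update f ρ u) (insert ρ O)) := by
  rw [parkStep, blockSizes, sumErase_map]
  refine sum_congr rfl fun ρ hρ => congrArg _ ?_
  rw [mem_compl] at hρ
  rw [sumErase_map, Nat.cast_multiset_sum, Multiset.map_map]
  exact (sum_eq_of_parksAt
    (fun u τ hτ hu => congrArg φ (blockSizes_update_insert_of_parksAt hρ hτ hu))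
    fun u hu => congrArg φ (blockSizes_update_insert_of_not_parksAt hρ hu)).symm

/-- The maps that agree with `f` on `O`. -/
def mapsAgreeingOn (f : V → V) (O : Finset V) : Finset (V → V) :=
  Fintype.piFinset fun x => if x ∈ O then {f x} else univ

lemma mem_mapsAgreeingOn {g : V → V} : g ∈ mapsAgreeingOn f O ↔ Set.EqOn g f O := by
  rw [mapsAgreeingOn, Fintype.mem_piFinset]
  refine forall_congr' fun x => ?_
  by_cases hx : x ∈ O <;> simp [hx]

lemma card_mapsAgreeingOn (f : V → V) (O : Finset V) :
    #(mapsAgreeingOn f O) = Fintype.card V ^ #Oᶜ := by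
  rw [mapsAgreeingOn, Fintype.card_piFinset]
  simp only [apply_ite card, card_singleton, card_univ]
  rw [prod_ite, prod_const_one, one_mul, prod_const, filter_not, filter_mem_eq_inter, univ_inter,
    ← compl_eq_univ_sdiff]

lemma sum_mapsAgreeingOn {M : Type*} [AddCommMonoid M] (hρ : ρ ∉ O) (g : (V → V) → M) :
    ∑ h ∈ mapsAgreeingOn f O, g h =
      ∑ u, ∑ h ∈ mapsAgreeingOn (update f ρ u) (insert ρ O), g h := by
  rw [← sum_fiberwise (mapsAgreeingOn f O) (fun h => h ρ)]
  refine sum_congr rfl fun u _ => sum_congr ?_ fun _ _ => rfl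
  ext h
  rw [mem_filter, mem_mapsAgreeingOn, mem_mapsAgreeingOn, coe_insert, Set.insert_eq,
    Set.eqOn_union, Set.eqOn_singleton, Function.update_self, and_comm]
  exact and_congr_right fun _ =>
    ⟨fun hf => hf.trans (eqOn_update hρ u).symm, fun hf => hf.trans (eqOn_update hρ u)⟩

end Block

variable {n : ℕ}

/-- The number of ways in which `m` further drivers can all park when the vertices in `occ` are
occupied. -/
def parkingCount (f : Fin n → Fin n) (m : ℕ) (occ : List (Fin n)) : ℕ :=
  #{s : Fin m → Fin n | (parkAux n f occ (List.ofFn s)).isSome}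

lemma parkingCount_zero (f : Fin n → Fin n) (occ : List (Fin n)) : parkingCount f 0 occ = 1 := by
  simp [parkingCount, parkAux]

lemma parkingCount_succ (f : Fin n → Fin n) (m : ℕ) (occ : List (Fin n)) :
    parkingCount f (m + 1) occ =
      ∑ ρ ∈ occ.toFinsetᶜ, blockSize f occ.toFinset ρ * parkingCount f m (ρ :: occ) := by
  classical
  have hfirst : parkingCount f (m + 1) occ =
      ∑ v, #{s : Fin m → Fin n | (parkAux n f occ (v :: List.ofFn s)).isSome} := by
    simp only [parkingCount, card_filter]
    rw [← (Fin.consEquiv fun _ => Fin n).sum_comp, Fintype.sum_prod_type]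
    simp [Fin.consEquiv]
  simp only [← smul_eq_mul, blockSize_nsmul]
  rw [hfirst, sum_comm]
  refine sum_congr rfl fun v _ => ?_
  simp only [parkAux_cons_isSome_iff]
  by_cases h : ∃ ρ, ParksAt f occ.toFinset v ρ
  · obtain ⟨ρ, hρ⟩ := h
    rw [sum_ite_parksAt (mem_compl.2 hρ.notMem) hρ, parkingCount]
    congr 1
    ext s
    simp only [mem_filter_univ]
    exact ⟨fun ⟨σ, hσ, hs⟩ => hρ.unique hσ ▸ hs, fun hs => ⟨ρ, hρ, hs⟩⟩
  · push Not at h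
    simp [h]

/-- Revealing the image of a vertex only when a driver parks there turns the count into the block
process. -/
lemma pow_mul_sum_parkingCount (f : Fin n → Fin n) (m : ℕ) (occ : List (Fin n)) :
    (n : ℚ) ^ m * ∑ g ∈ mapsAgreeingOn f occ.toFinset, (parkingCount g m occ : ℚ) =
      n ^ #occ.toFinsetᶜ * parkCount n m (blockSizes f occ.toFinset) := by
  induction m generalizing f occ with
  | zero => simp [parkingCount_zero, parkCount, card_mapsAgreeingOn]
  | succ m ih =>
    have hreveal : ∑ g ∈ mapsAgreeingOn f occ.toFinset, (parkingCount g (m + 1) occ : ℚ) =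
        ∑ ρ ∈ occ.toFinsetᶜ, blockSize f occ.toFinset ρ * ∑ u,
          ∑ g ∈ mapsAgreeingOn (Function.update f ρ u) (ρ :: occ).toFinset,
            (parkingCount g m (ρ :: occ) : ℚ) := by
      simp only [parkingCount_succ, Nat.cast_sum, Nat.cast_mul]
      rw [sum_comm]
      refine sum_congr rfl fun ρ hρ => ?_
      rw [List.toFinset_cons, ← sum_mapsAgreeingOn (mem_compl.1 hρ), mul_sum]
      exact sum_congr rfl fun g hg => by rw [blockSize_congr (mem_mapsAgreeingOn.1 hg)]
    have hstep := parkStep_blockSizes (parkCount n m) f occ.toFinset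
    rw [Fintype.card_fin] at hstep
    rw [hreveal, parkCount, hstep, mul_sum, mul_sum]
    refine sum_congr rfl fun ρ hρ => ?_
    have hcard : #occ.toFinsetᶜ = #(ρ :: occ).toFinsetᶜ + 1 := by
      rw [List.toFinset_cons, compl_insert, card_erase_add_one hρ]
    have hih := sum_congr rfl fun (u : Fin n) (_ : u ∈ univ) =>
      ih (Function.update f ρ u) (ρ :: occ)
    rw [← mul_sum, ← mul_sum, List.toFinset_cons] at hih
    rw [hcard, List.toFinset_cons]
    linear_combination (n * blockSize f occ.toFinset ρ : ℚ) * hih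

lemma pow_mul_MCount (n m : ℕ) :
    (n : ℚ) ^ m * MCount n m = n ^ n * parkCount n m (Multiset.replicate n 1) := by
  have hcount : MCount n m =
      ∑ g ∈ mapsAgreeingOn (id : Fin n → Fin n) ∅, parkingCount g m [] := by
    have huniv : mapsAgreeingOn (id : Fin n → Fin n) ∅ = univ := by simp [mapsAgreeingOn]
    classical
    rw [MCount, Nat.card_eq_fintype_card, Fintype.card_subtype, card_filter,
      Fintype.sum_prod_type, huniv]
    exact sum_congr rfl fun f _ => by rw [parkingCount, card_filter]; congr!
  have h := pow_mul_sum_parkingCount (id : Fin n → Fin n) m []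
  rw [List.toFinset_nil, blockSizes_empty, Fintype.card_fin, compl_empty, card_univ,
    Fintype.card_fin] at h
  rw [hcount, Nat.cast_sum, h]

end Exploration

section ExactFormula

open PowerSeries

lemma factorial_mul_MCount {n m : ℕ} (hn : 0 < n) (h : m ≤ n) :
    ((n - m).factorial : ℚ) * MCount n m = n ^ (n - m) * n.factorial * m.factorial *
      coeff n ((1 - markedSeries)⁻¹ * blockSeries ^ (n - m)) := by
  have hpow : (n : ℚ) ^ n = n ^ m * n ^ (n - m) := by rw [← pow_add, Nat.add_sub_cancel' h]
  have hcount := pow_mul_MCount n m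
  rw [hpow, mul_assoc] at hcount
  rw [mul_left_cancel₀ (by positivity) hcount]
  linear_combination (n : ℚ) ^ (n - m) * parkCount_replicate_one hn h

lemma MCount_two_mul_self {k : ℕ} (hk : 0 < k) :
    (MCount (2 * k) k : ℚ) = (2 * k) ^ k * (2 * k).factorial *
      coeff (2 * k) (markedSeries ^ k * (1 - markedSeries) ^ (k - 1)) := by
  have hcount := factorial_mul_MCount (n := 2 * k) (m := k) (by omega) (by omega)
  obtain ⟨d, rfl⟩ := Nat.exists_eq_add_of_lt hk
  rw [show 2 * (0 + d + 1) - (0 + d + 1) = d + 1 by omega, zero_add,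
    inv_one_sub_markedSeries_mul_blockSeries_pow] at hcount
  apply mul_left_cancel₀ (by positivity : ((d + 1).factorial : ℚ) ≠ 0)
  rw [zero_add, hcount, Nat.add_sub_cancel]
  push_cast
  ring

end ExactFormula

section ContourIntegral

open Complex Polynomial
open scoped Real Interval

lemma circleIntegral_exp_div_pow (x : ℂ) {R : ℝ} (hR : 0 < R) (j : ℕ) :
    ∮ u in C(0, R), exp (x * u) / u ^ (j + 1) = 2 * π * I * (x ^ j / j.factorial) := by
  have hexp : Differentiable ℂ fun u => exp (x * u) := by fun_prop
  have hcauchy := hexp.differentiableOn.circleIntegral_one_div_sub_center_pow_smul hR j (c := 0)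
  simp only [sub_zero, smul_eq_mul, iteratedDeriv_cexp_const_mul, mul_zero, exp_zero,
    mul_one] at hcauchy
  calc ∮ u in C(0, R), exp (x * u) / u ^ (j + 1)
      = ∮ u in C(0, R), 1 / u ^ (j + 1) * exp (x * u) := by congr! 2; ring
    _ = 2 * π * I * (x ^ j / j.factorial) := by rw [hcauchy]; ring

lemma circleIntegrable_div_pow {f : ℂ → ℂ} (hf : Continuous f) {R : ℝ} (hR : 0 < R) (n : ℕ) :
    CircleIntegrable (fun u => f u / u ^ n) 0 R := by
  refine ContinuousOn.circleIntegrable hR.le (hf.continuousOn.div (by fun_prop) fun u hu => ?_)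
  exact pow_ne_zero _ (ne_zero_of_mem_sphere hR.ne' ⟨u, hu⟩)

lemma circleIntegral_pow_mul_exp_div_pow_of_lt (x : ℂ) {R : ℝ} (hR : 0 < R) {k n : ℕ} (h : n < k) :
    (∮ u in C(0, R), u ^ k * exp (x * u) / u ^ (n + 1)) = 0 := by
  obtain ⟨d, rfl⟩ := Nat.exists_eq_add_of_lt h
  have hentire : Differentiable ℂ fun u => u ^ d * exp (x * u) := by fun_prop
  refine Eq.trans (circleIntegral.integral_congr hR.le fun u hu => ?_)
    (hentire.diffContOnCl.circleIntegral_eq_zero hR.le)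
  have hu0 : u ≠ 0 := ne_zero_of_mem_sphere hR.ne' ⟨u, hu⟩
  field_simp
  ring

/-- The difference of the two integrands is the derivative of `u ^ k * exp (2 * n * u) / u ^ n`. -/
lemma natCast_mul_circleIntegral_one_sub_two_mul {R : ℝ} (hR : 0 < R) (k n : ℕ) :
    n * ∮ u in C(0, R), u ^ k * (1 - 2 * u) * exp (2 * n * u) / u ^ (n + 1) =
      k * ∮ u in C(0, R), u ^ k * exp (2 * n * u) / u ^ (n + 1) := by
  have hint {f : ℂ → ℂ} (hf : Continuous f) (c : ℂ) :
      CircleIntegrable (fun u => c * (f u / u ^ (n + 1))) 0 R :=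
    (circleIntegrable_div_pow hf hR (n + 1)).const_smul (a := c)
  rw [← sub_eq_zero, ← circleIntegral.integral_const_mul, ← circleIntegral.integral_const_mul,
    ← circleIntegral.integral_sub (hint (by fun_prop) _) (hint (by fun_prop) _)]
  refine circleIntegral.integral_eq_zero_of_hasDerivWithinAt
    (f := fun u => -(u ^ ((k : ℤ) - n) * exp (2 * n * u))) hR.le fun u hu => ?_
  have hu0 : u ≠ 0 := ne_zero_of_mem_sphere hR.ne' ⟨u, hu⟩
  have hexp : HasDerivAt (fun u : ℂ => exp (2 * n * u)) (exp (2 * n * u) * (2 * n)) u := by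
    simpa using ((hasDerivAt_id u).const_mul (2 * n : ℂ)).cexp
  have hpow := hasDerivAt_zpow ((k : ℤ) - n) u (Or.inl hu0)
  refine (hpow.fun_mul hexp).fun_neg.hasDerivWithinAt.congr_deriv ?_
  rw [zpow_sub₀ hu0, zpow_sub₀ hu0]
  push_cast [zpow_natCast, zpow_one]
  field_simp
  ring

/-- Lagrange inversion for `B = z exp (2 B)` as a contour integral in the variable `u = B`. -/
lemma circleIntegral_eq_coeff_markedSeries_pow {n : ℕ} (hn : 0 < n) {R : ℝ} (hR : 0 < R) (k : ℕ) :
    ∮ u in C(0, R), u ^ k * (1 - 2 * u) * exp (2 * n * u) / u ^ (n + 1) =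
      2 * π * I * (PowerSeries.coeff n (markedSeries ^ k) : ℚ) := by
  have hn0 : (n : ℂ) ≠ 0 := Nat.cast_ne_zero.2 hn.ne'
  apply mul_left_cancel₀ hn0
  rw [natCast_mul_circleIntegral_one_sub_two_mul hR]
  obtain hlt | hle := lt_or_ge n k
  · rw [circleIntegral_pow_mul_exp_div_pow_of_lt _ hR hlt, coeff_markedSeries_pow_of_lt hlt]
    simp
  · obtain ⟨j, rfl⟩ := Nat.exists_eq_add_of_le hle
    have hcoeff := congrArg (Rat.cast : ℚ → ℂ) (coeff_markedSeries_pow k j)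
    push_cast at hcoeff hn0 ⊢
    have hcancel : ∮ u in C(0, R), u ^ k * exp (2 * (k + j) * u) / u ^ (k + j + 1) =
        ∮ u in C(0, R), exp (2 * (k + j) * u) / u ^ (j + 1) :=
      circleIntegral.integral_congr hR.le fun u hu => by
        have hu0 : u ≠ 0 := ne_zero_of_mem_sphere hR.ne' ⟨u, hu⟩
        field_simp
        ring
    rw [hcancel, circleIntegral_exp_div_pow _ hR]
    have hfact : (j.factorial : ℂ) ≠ 0 := Nat.cast_ne_zero.2 j.factorial_ne_zero
    field_simp
    linear_combination -hcoeff

lemma circleIntegral_eq_coeff_aeval_markedSeries {n : ℕ} (hn : 0 < n) {R : ℝ} (hR : 0 < R)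
    (G : ℚ[X]) :
    ∮ u in C(0, R), aeval u G * (1 - 2 * u) * exp (2 * n * u) / u ^ (n + 1) =
      2 * π * I * (PowerSeries.coeff n (aeval markedSeries G) : ℚ) := by
  have hint (G : ℚ[X]) : CircleIntegrable
      (fun u => aeval u G * (1 - 2 * u) * exp (2 * n * u) / u ^ (n + 1)) 0 R :=
    circleIntegrable_div_pow (by fun_prop) hR _
  induction G using Polynomial.induction_on' with
  | add F G hF hG =>
    simp only [map_add, add_mul, add_div, circleIntegral.integral_add (hint F) (hint G), hF, hG,
      Rat.cast_add, mul_add]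
  | monomial k c =>
    have hterm (u : ℂ) : aeval u (monomial k c) * (1 - 2 * u) * exp (2 * n * u) / u ^ (n + 1) =
        c * (u ^ k * (1 - 2 * u) * exp (2 * n * u) / u ^ (n + 1)) := by
      rw [aeval_monomial, eq_ratCast]
      ring
    simp only [hterm, circleIntegral.integral_const_mul]
    rw [circleIntegral_eq_coeff_markedSeries_pow hn hR, aeval_monomial,
      ← Algebra.smul_def, PowerSeries.coeff_smul, smul_eq_mul]
    push_cast
    ring

end ContourIntegral

section Kernel

open Complex Polynomial
open scoped Real Interval

/-- The `k`-th power of this function on the unit circle is, up to a bounded factor, the integrand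
of the Cauchy integral for `M_{2k,k}` on the circle `u = exp (i φ) / 2`. That circle passes through
the double saddle point `u = 1 / 2`, where the kernel is `1 + (2 / 3) i φ ^ 3 + O(φ ^ 4)`. -/
noncomputable def kernel (φ : ℝ) : ℂ := (2 * exp (-(φ * I)) - 1) * exp (2 * exp (φ * I) - 2)

lemma two_sub_exp_ne_zero (φ : ℝ) : 2 - exp (φ * I) ≠ 0 := by
  intro h
  have hnorm := congrArg norm (sub_eq_zero.1 h)
  rw [norm_exp_ofReal_mul_I] at hnorm
  norm_num at hnorm

lemma deriv_circleMap_mul_integrand {k : ℕ} (hk : 0 < k) {u w : ℂ} (hu : u = w / 2) (hw : w ≠ 0)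
    (hw2 : 2 - w ≠ 0) :
    u * I * (u ^ k * (1 - u) ^ (k - 1) * (1 - 2 * u) * exp (4 * k * u) / u ^ (2 * k + 1)) =
      I * exp (2 * k) * (((2 * w⁻¹ - 1) * exp (2 * w - 2)) ^ k * (2 * (1 - w) / (2 - w))) := by
  obtain ⟨d, rfl⟩ := Nat.exists_eq_add_one.2 hk
  have hexp : exp (4 * (d + 1 : ℕ) * u) = exp (2 * (d + 1 : ℕ)) * exp (2 * w - 2) ^ (d + 1) := by
    rw [← exp_nat_mul, ← exp_add, hu]
    congr 1
    ring
  have hinv : 2 * w⁻¹ - 1 = (2 - w) / w := by field_simp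
  have hone : 1 - w / 2 = (2 - w) / 2 := by ring
  rw [hexp, hu, hinv, hone, Nat.add_sub_cancel]
  simp only [mul_pow, div_pow]
  field_simp
  ring

lemma coeff_markedSeries_eq_integral {k : ℕ} (hk : 0 < k) :
    ((PowerSeries.coeff (2 * k) (markedSeries ^ k * (1 - markedSeries) ^ (k - 1)) : ℚ) : ℂ) =
      exp (2 * k) / (2 * π) *
        ∫ φ in -π..π, kernel φ ^ k * (2 * (1 - exp (φ * I)) / (2 - exp (φ * I))) := by
  set g : ℝ → ℂ := fun φ => kernel φ ^ k * (2 * (1 - exp (φ * I)) / (2 - exp (φ * I)))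
  have hcauchy := circleIntegral_eq_coeff_aeval_markedSeries (n := 2 * k) (by omega)
    (one_half_pos (α := ℝ)) (X ^ k * (1 - X) ^ (k - 1))
  simp only [map_mul, map_pow, map_sub, map_one, aeval_X] at hcauchy
  have hshift : ∫ φ in (0 : ℝ)..2 * π, g φ = ∫ φ in -π..π, g φ := by
    have hper : Function.Periodic g (2 * π) := fun φ => by
      have hexp : exp ((φ + 2 * π : ℝ) * I) = exp (φ * I) := by
        push_cast
        rw [add_mul, exp_periodic]
      simp only [g, kernel, exp_neg, hexp]
    have := hper.intervalIntegral_add_eq 0 (-π)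
    rwa [zero_add, show -π + 2 * π = π by ring] at this
  have hintegrand (φ : ℝ) := deriv_circleMap_mul_integrand hk (u := circleMap 0 (1 / 2) φ)
    (by rw [circleMap_zero]; push_cast; ring) (exp_ne_zero (φ * I)) (two_sub_exp_ne_zero φ)
  have hcircle : ∮ u in C(0, 1 / 2), u ^ k * (1 - u) ^ (k - 1) * (1 - 2 * u) *
      exp (2 * (2 * k : ℕ) * u) / u ^ (2 * k + 1) = I * exp (2 * k) * ∫ φ in -π..π, g φ := by
    rw [← hshift, ← intervalIntegral.integral_const_mul, circleIntegral]
    congr! 2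
    simp only [g, kernel, exp_neg, ← hintegrand, deriv_circleMap, smul_eq_mul]
    push_cast
    ring_nf
  rw [hcircle] at hcauchy
  have hpi : (π : ℂ) ≠ 0 := ofReal_ne_zero.2 Real.pi_ne_zero
  field_simp
  apply mul_left_cancel₀ I_ne_zero
  linear_combination -hcauchy

lemma hasDerivAt_kernel (φ : ℝ) :
    HasDerivAt kernel (4 * I * (1 - Real.cos φ) * exp (2 * exp (φ * I) - 2)) φ := by
  have hlin : HasDerivAt (fun φ : ℝ => (φ : ℂ) * I) I φ := by
    simpa using (hasDerivAt_id φ).ofReal_comp.mul_const I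
  have hleft := (hlin.fun_neg.cexp.const_mul 2).sub_const 1
  have hright := ((hlin.cexp.const_mul 2).sub_const 2).cexp
  have hinv : exp (-(φ * I)) * exp (φ * I) = 1 := by rw [← exp_add, neg_add_cancel, exp_zero]
  refine (hleft.fun_mul hright).congr_deriv ?_
  rw [ofReal_cos, Complex.cos, neg_mul]
  linear_combination 4 * I * exp (2 * exp (φ * I) - 2) * hinv

lemma continuous_kernel : Continuous kernel := by unfold kernel; fun_prop

lemma kernel_zero : kernel 0 = 1 := by norm_num [kernel]

lemma norm_exp_two_mul_exp_sub_two_le_one (φ : ℝ) : ‖exp (2 * exp (φ * I) - 2)‖ ≤ 1 := by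
  rw [norm_exp, Real.exp_le_one_iff]
  have := Real.cos_le_one φ
  simp only [sub_re, mul_re, exp_ofReal_mul_I_re, re_ofNat, im_ofNat, zero_mul, sub_zero]
  linarith

/-- This is `1 + x ≤ exp x` at `x = 4 (1 - cos φ)`. -/
lemma norm_kernel_le_one (φ : ℝ) : ‖kernel φ‖ ≤ 1 := by
  have hleft : ‖2 * exp (-(φ * I)) - 1‖ ^ 2 = 1 + 4 * (1 - Real.cos φ) := by
    rw [← normSq_eq_norm_sq, normSq_apply, ← neg_mul, ← ofReal_neg]
    simp only [sub_re, mul_re, exp_ofReal_mul_I_re, exp_ofReal_mul_I_im, sub_im, mul_im, re_ofNat,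
      im_ofNat, one_re, one_im, Real.cos_neg, Real.sin_neg]
    linear_combination 4 * Real.sin_sq_add_cos_sq φ
  have hright : ‖exp (2 * exp (φ * I) - 2)‖ ^ 2 = Real.exp (-(4 * (1 - Real.cos φ))) := by
    rw [norm_exp, ← Real.exp_nat_mul]
    simp only [sub_re, mul_re, exp_ofReal_mul_I_re, re_ofNat, im_ofNat]
    ring_nf
  rw [← sq_le_one_iff₀ (norm_nonneg _), kernel, norm_mul, mul_pow, hleft, hright, Real.exp_neg,
    ← div_eq_mul_inv, div_le_one (Real.exp_pos _), add_comm]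
  exact Real.add_one_le_exp _

lemma norm_sub_le_of_hasDerivAt_of_norm_le {E : Type*} [NormedAddCommGroup E] [NormedSpace ℝ E]
    {f f' : ℝ → E} {C x : ℝ} (n : ℕ) (hC : 0 ≤ C) (hf : ∀ t, HasDerivAt f (f' t) t)
    (hbound : ∀ t, |t| ≤ |x| → ‖f' t‖ ≤ C * |t| ^ n) :
    ‖f x - f 0‖ ≤ C * |x| ^ (n + 1) := by
  have hsegment (t : ℝ) (ht : t ∈ [[0, x]]) : ‖f' t‖ ≤ C * |x| ^ n := by
    have habs : |t| ≤ |x| := by simpa using Set.abs_sub_left_of_mem_uIcc ht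
    exact (hbound t habs).trans (by gcongr)
  have hmvt := (convex_uIcc 0 x).norm_image_sub_le_of_norm_hasDerivWithin_le
    (fun t _ => (hf t).hasDerivWithinAt) hsegment Set.left_mem_uIcc Set.right_mem_uIcc
  rwa [sub_zero, Real.norm_eq_abs, mul_assoc, ← pow_succ] at hmvt

lemma norm_kernel_pow_sub_one_le (k : ℕ) (φ : ℝ) : ‖kernel φ ^ k - 1‖ ≤ 2 * k * |φ| ^ 3 := by
  have hderiv (t : ℝ) := (hasDerivAt_kernel t).fun_pow k
  have hmvt := norm_sub_le_of_hasDerivAt_of_norm_le (x := φ) (C := 2 * k) 2 (by positivity) hderiv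
    fun t _ => ?_
  · simpa only [kernel_zero, one_pow] using hmvt
  have hcos : ‖(4 * I * (1 - Real.cos t) : ℂ)‖ ≤ 2 * |t| ^ 2 := by
    rw [norm_mul, norm_mul, norm_I, ← ofReal_one, ← ofReal_sub, norm_real,
      Real.norm_of_nonneg (sub_nonneg.2 (Real.cos_le_one t)), sq_abs]
    have := Real.one_sub_sq_div_two_le_cos (x := t)
    norm_num
    linarith
  calc ‖k * kernel t ^ (k - 1) * (4 * I * (1 - Real.cos t) * exp (2 * exp (t * I) - 2))‖
      = k * ‖kernel t‖ ^ (k - 1) * (‖(4 * I * (1 - Real.cos t) : ℂ)‖ *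
          ‖exp (2 * exp (t * I) - 2)‖) := by simp only [norm_mul, norm_pow, norm_natCast]
    _ ≤ k * 1 ^ (k - 1) * (2 * |t| ^ 2 * 1) := by
        gcongr
        · exact norm_kernel_le_one t
        · exact norm_exp_two_mul_exp_sub_two_le_one t
    _ = 2 * k * |t| ^ 2 := by ring

lemma abs_four_mul_one_sub_cos_sub_le {t : ℝ} (ht : |t| ≤ 1) :
    |4 * (1 - Real.cos t) - 2 * t ^ 2| ≤ |t| ^ 3 := by
  have hbound := Real.cos_bound ht
  rw [show 4 * (1 - Real.cos t) - 2 * t ^ 2 = -4 * (Real.cos t - (1 - t ^ 2 / 2)) by ring, abs_mul]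
  norm_num
  nlinarith [pow_nonneg (abs_nonneg t) 3]

lemma norm_exp_two_mul_exp_sub_two_sub_one_le {t : ℝ} (ht : |t| ≤ 1 / 2) :
    ‖exp (2 * exp (t * I) - 2) - 1‖ ≤ 4 * |t| := by
  have hsmall : ‖2 * exp (t * I) - 2‖ ≤ 2 * |t| := by
    rw [← mul_sub_one, norm_mul, RCLike.norm_ofNat, mul_comm (t : ℂ)]
    gcongr
    exact Real.norm_exp_I_mul_ofReal_sub_one_le
  exact (norm_exp_sub_one_le (by linarith)).trans (by linarith)

lemma norm_deriv_kernel_sub_le {t : ℝ} (ht : |t| ≤ 1 / 2) :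
    ‖4 * I * (1 - Real.cos t) * exp (2 * exp (t * I) - 2) - 2 * I * t ^ 2‖ ≤ 9 * |t| ^ 3 := by
  calc ‖4 * I * (1 - Real.cos t) * exp (2 * exp (t * I) - 2) - 2 * I * t ^ 2‖
      = ‖I * ((4 * (1 - Real.cos t) - 2 * t ^ 2 : ℝ) * exp (2 * exp (t * I) - 2) +
          2 * t ^ 2 * (exp (2 * exp (t * I) - 2) - 1))‖ := by congr 1; push_cast; ring
    _ ≤ |4 * (1 - Real.cos t) - 2 * t ^ 2| * ‖exp (2 * exp (t * I) - 2)‖ +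
          2 * |t| ^ 2 * ‖exp (2 * exp (t * I) - 2) - 1‖ := by
        rw [norm_mul, norm_I, one_mul]
        refine (norm_add_le _ _).trans_eq ?_
        simp only [norm_mul, norm_pow, norm_real, Real.norm_eq_abs, RCLike.norm_ofNat]
    _ ≤ |t| ^ 3 * 1 + 2 * |t| ^ 2 * (4 * |t|) := by
        gcongr
        · exact abs_four_mul_one_sub_cos_sub_le (ht.trans (by norm_num))
        · exact norm_exp_two_mul_exp_sub_two_le_one t
        · exact norm_exp_two_mul_exp_sub_two_sub_one_le ht
    _ = 9 * |t| ^ 3 := by ring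

lemma norm_kernel_sub_le {φ : ℝ} (hφ : |φ| ≤ 1 / 2) :
    ‖kernel φ - 1 - 2 / 3 * I * φ ^ 3‖ ≤ 9 * |φ| ^ 4 := by
  have hderiv (t : ℝ) : HasDerivAt (fun t : ℝ => kernel t - 2 / 3 * I * t ^ 3)
      (4 * I * (1 - Real.cos t) * exp (2 * exp (t * I) - 2) - 2 * I * t ^ 2) t := by
    refine ((hasDerivAt_kernel t).fun_sub
      (((hasDerivAt_id t).ofReal_comp.fun_pow 3).const_mul (2 / 3 * I))).congr_deriv ?_
    push_cast [id]
    ring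
  have hmvt := norm_sub_le_of_hasDerivAt_of_norm_le 3 (by norm_num) hderiv
    fun t ht => norm_deriv_kernel_sub_le (ht.trans hφ)
  refine le_of_eq_of_le (congrArg norm ?_) hmvt
  rw [kernel_zero]
  push_cast
  ring

end Kernel

section Defect

open Complex MeasureTheory
open scoped Real

/-- The defect `(1 - p ^ k) / |1 - exp (i φ)| ^ 2` of the powers of the kernel `p`, which is what
integration by parts turns the Cauchy integrand into. At `φ = 0` its value is the junk value `0`,
which is also its limit. -/
noncomputable def kernelDefect (k : ℕ) (φ : ℝ) : ℂ :=
  (1 - kernel φ ^ k) / (2 * (1 - Real.cos φ) : ℝ)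

lemma kernelDefect_zero (k : ℕ) : kernelDefect k 0 = 0 := by simp [kernelDefect]

lemma measurable_kernelDefect (k : ℕ) : Measurable (kernelDefect k) := by
  have := continuous_kernel.measurable
  unfold kernelDefect
  fun_prop

lemma four_div_pi_sq_mul_sq_le {φ : ℝ} (hφ : |φ| ≤ π) :
    4 / π ^ 2 * φ ^ 2 ≤ 2 * (1 - Real.cos φ) := by
  have := Real.cos_le_one_sub_mul_cos_sq hφ
  linarith [show 4 / π ^ 2 * φ ^ 2 = 2 * (2 / π ^ 2 * φ ^ 2) by ring]

lemma norm_kernelDefect_le (k : ℕ) {φ : ℝ} (hφ : |φ| ≤ π) :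
    ‖kernelDefect k φ‖ ≤ π ^ 2 / 2 * (min 1 (k * |φ| ^ 3) / φ ^ 2) := by
  obtain rfl | hne := eq_or_ne φ 0
  · simp [kernelDefect_zero]
  have hnum : ‖1 - kernel φ ^ k‖ ≤ 2 * min 1 (k * |φ| ^ 3) := by
    rw [mul_min_of_nonneg _ _ zero_le_two, le_min_iff]
    constructor
    · refine (norm_sub_le _ _).trans ?_
      rw [norm_one, norm_pow]
      linarith [pow_le_one₀ (n := k) (norm_nonneg _) (norm_kernel_le_one φ)]
    · rw [norm_sub_rev, ← mul_assoc]
      exact norm_kernel_pow_sub_one_le k φ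
  have hden := four_div_pi_sq_mul_sq_le hφ
  have hpos : 0 < 4 / π ^ 2 * φ ^ 2 := by positivity
  calc ‖kernelDefect k φ‖ = ‖1 - kernel φ ^ k‖ / (2 * (1 - Real.cos φ)) := by
        rw [kernelDefect, norm_div, norm_real, Real.norm_of_nonneg (hpos.le.trans hden)]
    _ ≤ 2 * min 1 (k * |φ| ^ 3) / (4 / π ^ 2 * φ ^ 2) := by gcongr
    _ = π ^ 2 / 2 * (min 1 (k * |φ| ^ 3) / φ ^ 2) := by field_simp; ring

lemma norm_kernelDefect_le_mul_abs (k : ℕ) {φ : ℝ} (hφ : |φ| ≤ π) :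
    ‖kernelDefect k φ‖ ≤ π ^ 2 / 2 * (k * |φ|) := by
  obtain rfl | hne := eq_or_ne φ 0
  · simp [kernelDefect_zero]
  calc ‖kernelDefect k φ‖ ≤ π ^ 2 / 2 * (min 1 (k * |φ| ^ 3) / φ ^ 2) := norm_kernelDefect_le k hφ
    _ ≤ π ^ 2 / 2 * (k * |φ| ^ 3 / φ ^ 2) := by gcongr; exact min_le_right _ _
    _ = π ^ 2 / 2 * (k * |φ|) := by rw [pow_succ |φ| 2, sq_abs]; field_simp

lemma intervalIntegrable_kernelDefect (k : ℕ) :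
    IntervalIntegrable (kernelDefect k) volume (-π) π := by
  rw [intervalIntegrable_iff_integrableOn_Icc_of_le (by linarith [Real.pi_pos])]
  refine Measure.integrableOn_of_bounded (M := π ^ 2 / 2 * (k * π)) (by simp)
    (measurable_kernelDefect k).aestronglyMeasurable ?_
  filter_upwards [ae_restrict_mem measurableSet_Icc] with φ hφ
  have habs := abs_le.2 hφ
  exact (norm_kernelDefect_le_mul_abs k habs).trans (by gcongr)

lemma one_sub_exp_mul_one_sub_exp_neg (φ : ℝ) :
    (1 - exp (φ * I)) * (1 - exp (-(φ * I))) = (2 * (1 - Real.cos φ) : ℝ) := by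
  have hinv : exp (φ * I) * exp (-(φ * I)) = 1 := by rw [← exp_add, add_neg_cancel, exp_zero]
  push_cast
  rw [Complex.cos, neg_mul]
  linear_combination hinv

lemma exp_ne_one_of_abs_le_pi {φ : ℝ} (hne : φ ≠ 0) (hφ : |φ| ≤ π) : exp (φ * I) ≠ 1 := by
  intro hexp
  have hnorm := one_sub_exp_mul_one_sub_exp_neg φ
  rw [hexp, sub_self, zero_mul, eq_comm, ofReal_eq_zero] at hnorm
  have hpos : 0 < 4 / π ^ 2 * φ ^ 2 := by positivity
  exact (hpos.trans_le (four_div_pi_sq_mul_sq_le hφ)).ne' hnorm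

/-- The boundary term of the integration by parts. Its junk value `0` at `φ = 0` is its limit. -/
noncomputable def boundaryTerm (k : ℕ) (φ : ℝ) : ℂ := I * ((kernel φ ^ k - 1) / (1 - exp (φ * I)))

lemma hasDerivAt_boundaryTerm {k : ℕ} (hk : 0 < k) {φ : ℝ} (hφ : exp (φ * I) ≠ 1) :
    HasDerivAt (boundaryTerm k) (k * (kernel φ ^ k * (2 * (1 - exp (φ * I)) / (2 - exp (φ * I)))) -
        kernelDefect k φ) φ := by
  have hlin : HasDerivAt (fun φ : ℝ => (φ : ℂ) * I) I φ := by
    simpa using (hasDerivAt_id φ).ofReal_comp.mul_const I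
  have hnum := ((hasDerivAt_kernel φ).fun_pow k).sub_const 1
  have hne : 1 - exp (φ * I) ≠ 0 := sub_ne_zero.2 hφ.symm
  refine ((hnum.fun_div (hlin.cexp.const_sub 1) hne).const_mul I).congr_deriv ?_
  obtain ⟨d, rfl⟩ := Nat.exists_eq_add_one.2 hk
  have hnorm := one_sub_exp_mul_one_sub_exp_neg φ
  have hcos : (4 * I * (1 - Real.cos φ) : ℂ) = 2 * I * (2 * (1 - Real.cos φ) : ℝ) := by
    push_cast
    ring
  rw [kernelDefect, hcos, ← hnorm, Nat.add_sub_cancel, pow_succ]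
  have htwo := two_sub_exp_ne_zero φ
  generalize kernel φ ^ d = q
  rw [kernel, exp_neg]
  have hw := exp_ne_zero (φ * I)
  generalize exp (2 * exp (φ * I) - 2) = E
  generalize exp (φ * I) = w at *
  have hne' : w - 1 ≠ 0 := sub_ne_zero.2 hφ
  field_simp
  ring_nf
  simp only [I_sq]
  ring

lemma norm_boundaryTerm_le (k : ℕ) {φ : ℝ} (hφ : |φ| ≤ π) :
    ‖boundaryTerm k φ‖ ≤ k * π ^ 2 / 2 * |φ| ^ 2 := by
  have hterm : boundaryTerm k φ = -I * (kernelDefect k φ * (1 - exp (-(φ * I)))) := by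
    rw [boundaryTerm, kernelDefect, ← one_sub_exp_mul_one_sub_exp_neg, exp_neg]
    have hw := exp_ne_zero (φ * I)
    generalize exp (φ * I) = w at hw
    obtain rfl | h := eq_or_ne w 1
    · simp
    · have hne : 1 - w ≠ 0 := sub_ne_zero.2 h.symm
      have hne' : w - 1 ≠ 0 := sub_ne_zero.2 h
      field_simp
      ring
  have hexp : ‖1 - exp (-(φ * I))‖ ≤ |φ| := by
    rw [norm_sub_rev, ← neg_mul, mul_comm, ← ofReal_neg, ← abs_neg]
    exact Real.norm_exp_I_mul_ofReal_sub_one_le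
  calc ‖boundaryTerm k φ‖ = ‖kernelDefect k φ‖ * ‖1 - exp (-(φ * I))‖ := by
        rw [hterm, norm_mul, norm_neg, norm_I, one_mul, norm_mul]
    _ ≤ π ^ 2 / 2 * (k * |φ|) * |φ| := by
        gcongr
        exact norm_kernelDefect_le_mul_abs k hφ
    _ = k * π ^ 2 / 2 * |φ| ^ 2 := by ring

lemma hasDerivAt_boundaryTerm_zero (k : ℕ) :
    HasDerivAt (boundaryTerm k) 0 0 := by
  have hbig : boundaryTerm k =O[nhds 0] fun φ => ‖φ - 0‖ ^ 2 := by
    refine Asymptotics.IsBigO.of_bound (k * π ^ 2 / 2) ?_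
    filter_upwards [Metric.closedBall_mem_nhds 0 Real.pi_pos] with φ hφ
    rw [mem_closedBall_zero_iff] at hφ
    simpa using norm_boundaryTerm_le k hφ
  simpa using (hbig.hasFDerivAt one_lt_two).hasDerivAt

/-- The primitive of the difference of the integrands is `2 π`-periodic. -/
lemma integral_kernel_pow_mul {k : ℕ} (hk : 0 < k) :
    k * ∫ φ in -π..π, kernel φ ^ k * (2 * (1 - exp (φ * I)) / (2 - exp (φ * I))) =
      ∫ φ in -π..π, kernelDefect k φ := by
  have hderiv (φ : ℝ) (hφ : φ ∈ Set.uIcc (-π) π) :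
      HasDerivAt (boundaryTerm k) (k * (kernel φ ^ k *
        (2 * (1 - exp (φ * I)) / (2 - exp (φ * I)))) - kernelDefect k φ) φ := by
    rw [Set.uIcc_of_le (by linarith [Real.pi_pos]), Set.mem_Icc, ← abs_le] at hφ
    obtain rfl | hne := eq_or_ne φ 0
    · simpa [kernelDefect_zero] using hasDerivAt_boundaryTerm_zero k
    · exact hasDerivAt_boundaryTerm hk (exp_ne_one_of_abs_le_pi hne hφ)
  have hcont : Continuous fun φ : ℝ =>
      k * (kernel φ ^ k * (2 * (1 - exp (φ * I)) / (2 - exp (φ * I)))) := by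
    have := continuous_kernel
    have := two_sub_exp_ne_zero
    fun_prop (disch := assumption)
  have hint := hcont.intervalIntegrable (μ := volume) (-π) π
  rw [← sub_eq_zero, ← intervalIntegral.integral_const_mul, ← intervalIntegral.integral_sub hint
    (intervalIntegrable_kernelDefect k), intervalIntegral.integral_eq_sub_of_hasDerivAt hderiv
    (hint.sub (intervalIntegrable_kernelDefect k)), sub_eq_zero]
  have hexp : exp ((-π : ℝ) * I) = exp (π * I) := by
    rw [ofReal_neg, neg_mul, exp_neg, exp_pi_mul_I]
    norm_num
  simp only [boundaryTerm, kernel, exp_neg, hexp]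

end Defect

section Scaling

open Complex MeasureTheory Topology
open scoped Real

lemma pi_mul_exp_neg_mul_coeff_eq_integral {k : ℕ} (hk : 0 < k) :
    π * (Real.exp (-(2 * k)) * (k * (PowerSeries.coeff (2 * k)
      (markedSeries ^ k * (1 - markedSeries) ^ (k - 1)) : ℚ))) =
      (∫ φ in -π..π, (kernelDefect k φ).re) / 2 := by
  have hre : ∫ φ in -π..π, (kernelDefect k φ).re = (∫ φ in -π..π, kernelDefect k φ).re :=
    reCLM.intervalIntegral_comp_comm (intervalIntegrable_kernelDefect k)
  have hcoeff := coeff_markedSeries_eq_integral hk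
  have hexp : exp (-(2 * k)) * exp (2 * k) = 1 := by rw [← exp_add, neg_add_cancel, exp_zero]
  have hpi : (π : ℂ) ≠ 0 := ofReal_ne_zero.2 Real.pi_ne_zero
  rw [hre, ← integral_kernel_pow_mul hk, ← div_ofNat_re, ← ofReal_re (_ * _)]
  congr 1
  push_cast
  rw [hcoeff]
  generalize (∫ φ in -π..π, kernel φ ^ k * (2 * (1 - exp (φ * I)) / (2 - exp (φ * I)))) = J
  field_simp
  linear_combination k * J * hexp

lemma min_one_pow_three_div_sq_le (x : ℝ) : min 1 (|x| ^ 3) / x ^ 2 ≤ 2 * (1 + x ^ 2)⁻¹ := by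
  obtain rfl | hx := eq_or_ne x 0
  · simp
  rw [← sq_abs, ← div_eq_mul_inv, div_le_div_iff₀ (by positivity) (by positivity)]
  obtain h | h := le_total |x| 1
  · have hcube : |x| ^ 3 ≤ |x| ^ 2 := pow_le_pow_of_le_one (abs_nonneg x) h (by norm_num)
    nlinarith [min_le_right 1 (|x| ^ 3), sq_nonneg |x|, pow_le_one₀ (n := 2) (abs_nonneg x) h]
  · nlinarith [min_le_left 1 (|x| ^ 3), one_le_pow₀ (n := 2) h]

lemma natCast_mul_rpow_neg_third_pow_three {k : ℕ} (hk : 0 < k) :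
    (k : ℝ) * ((k : ℝ) ^ (-(1 / 3) : ℝ)) ^ 3 = 1 := by
  have hk' : (0 : ℝ) < k := Nat.cast_pos.2 hk
  rw [← Real.rpow_mul_natCast hk'.le]
  norm_num [Real.rpow_neg_one, hk'.ne']

lemma rpow_neg_two_thirds (k : ℕ) :
    (k : ℝ) ^ (-(2 / 3) : ℝ) = ((k : ℝ) ^ (-(1 / 3) : ℝ)) ^ 2 := by
  rw [← Real.rpow_mul_natCast k.cast_nonneg]
  norm_num

lemma tendsto_natCast_rpow_neg_third_mul (x : ℝ) :
    Tendsto (fun k : ℕ => (k : ℝ) ^ (-(1 / 3) : ℝ) * x) atTop (𝓝 0) := by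
  simpa using ((tendsto_rpow_neg_atTop (by norm_num : (0 : ℝ) < 1 / 3)).comp
    tendsto_natCast_atTop_atTop).mul_const x

/-- The `k`-th defect on the scale `k ^ (-1 / 3)` of the saddle point. -/
noncomputable def scaledDefect (k : ℕ) (x : ℝ) : ℝ :=
  (k : ℝ) ^ (-(2 / 3) : ℝ) *
    (Set.Ioc (-π) π).indicator (fun φ => (kernelDefect k φ).re) ((k : ℝ) ^ (-(1 / 3) : ℝ) * x)

lemma integral_scaledDefect {k : ℕ} (hk : 0 < k) :
    ∫ x, scaledDefect k x =
      (k : ℝ) ^ (-(1 / 3) : ℝ) * ∫ φ in -π..π, (kernelDefect k φ).re := by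
  have hk' : (0 : ℝ) < k := Nat.cast_pos.2 hk
  simp only [scaledDefect]
  rw [integral_const_mul, Measure.integral_comp_mul_left, abs_of_pos (by positivity),
    integral_indicator measurableSet_Ioc,
    ← intervalIntegral.integral_of_le (by linarith [Real.pi_pos]), smul_eq_mul, ← mul_assoc,
    ← Real.rpow_neg hk'.le, ← Real.rpow_add hk']
  norm_num

lemma measurable_scaledDefect (k : ℕ) : Measurable (scaledDefect k) :=
  (((measurable_re.comp (measurable_kernelDefect k)).indicator measurableSet_Ioc).comp
    (measurable_const_mul _)).const_mul _

lemma abs_scaledDefect_le {k : ℕ} (hk : 0 < k) (x : ℝ) :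
    |scaledDefect k x| ≤ π ^ 2 * (1 + x ^ 2)⁻¹ := by
  rw [scaledDefect, rpow_neg_two_thirds]
  have hε : 0 < (k : ℝ) ^ (-(1 / 3) : ℝ) := by positivity
  have hcube := natCast_mul_rpow_neg_third_pow_three hk
  set ε := (k : ℝ) ^ (-(1 / 3) : ℝ)
  by_cases hmem : ε * x ∈ Set.Ioc (-π) π
  · have habs : |ε * x| ≤ π := abs_le.2 (Set.Ioc_subset_Icc_self hmem)
    have hscale : k * |ε * x| ^ 3 = |x| ^ 3 := by
      rw [abs_mul, abs_of_pos hε]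
      linear_combination |x| ^ 3 * hcube
    rw [Set.indicator_of_mem hmem, abs_mul, abs_of_pos (by positivity)]
    calc ε ^ 2 * |(kernelDefect k (ε * x)).re|
        ≤ ε ^ 2 * (π ^ 2 / 2 * (min 1 (k * |ε * x| ^ 3) / (ε * x) ^ 2)) := by
          gcongr
          exact (abs_re_le_norm _).trans (norm_kernelDefect_le k habs)
      _ = π ^ 2 / 2 * (min 1 (|x| ^ 3) / x ^ 2) := by rw [hscale]; field_simp
      _ ≤ π ^ 2 / 2 * (2 * (1 + x ^ 2)⁻¹) := by gcongr; exact min_one_pow_three_div_sq_le x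
      _ = π ^ 2 * (1 + x ^ 2)⁻¹ := by ring
  · rw [Set.indicator_of_notMem hmem, mul_zero, abs_zero]
    positivity

lemma tendsto_kernel_pow (x : ℝ) :
    Tendsto (fun k : ℕ => kernel ((k : ℝ) ^ (-(1 / 3) : ℝ) * x) ^ k) atTop
      (𝓝 (exp ((2 / 3 * x ^ 3 : ℝ) * I))) := by
  have hscale := tendsto_natCast_rpow_neg_third_mul x
  have hlinear : Tendsto (fun k : ℕ => k * (kernel ((k : ℝ) ^ (-(1 / 3) : ℝ) * x) - 1)) atTop
      (𝓝 ((2 / 3 * x ^ 3 : ℝ) * I)) := by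
    rw [tendsto_iff_norm_sub_tendsto_zero]
    have hbound : Tendsto (fun k : ℕ => 9 * |x| ^ 3 * |(k : ℝ) ^ (-(1 / 3) : ℝ) * x|) atTop
        (𝓝 0) := by simpa using hscale.abs.const_mul (9 * |x| ^ 3)
    refine squeeze_zero' (.of_forall fun _ => norm_nonneg _) ?_ hbound
    filter_upwards [eventually_gt_atTop 0,
      hscale.eventually_mem (Metric.closedBall_mem_nhds 0 one_half_pos)] with k hk hsmall
    have hε : 0 < (k : ℝ) ^ (-(1 / 3) : ℝ) := by positivity
    have hcube := natCast_mul_rpow_neg_third_pow_three hk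
    set ε := (k : ℝ) ^ (-(1 / 3) : ℝ)
    have hcubic := norm_kernel_sub_le (mem_closedBall_zero_iff.1 hsmall)
    have hcube' : (k : ℂ) * ε ^ 3 = 1 := mod_cast hcube
    calc ‖k * (kernel (ε * x) - 1) - (2 / 3 * x ^ 3 : ℝ) * I‖
        = k * ‖kernel (ε * x) - 1 - 2 / 3 * I * (ε * x : ℝ) ^ 3‖ := by
          rw [← norm_natCast k, ← norm_mul]
          congr 1
          push_cast
          linear_combination 2 / 3 * I * x ^ 3 * hcube'
      _ ≤ k * (9 * |ε * x| ^ 4) := by gcongr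
      _ = 9 * |x| ^ 3 * |ε * x| := by
          rw [abs_mul, abs_of_pos hε]
          linear_combination 9 * ε * |x| ^ 4 * hcube
  simpa using tendsto_one_add_pow_exp_of_tendsto hlinear

lemma two_mul_one_sub_cos (t : ℝ) : 2 * (1 - Real.cos t) = (t * Real.sinc (t / 2)) ^ 2 := by
  obtain rfl | ht := eq_or_ne t 0
  · simp
  rw [Real.sinc_of_ne_zero (by positivity), show Real.cos t = Real.cos (2 * (t / 2)) by ring_nf,
    Real.cos_two_mul, Real.cos_sq']
  field_simp
  ring

lemma tendsto_scaledDefect (x : ℝ) :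
    Tendsto (fun k => scaledDefect k x) atTop (𝓝 ((1 - Real.cos (2 / 3 * x ^ 3)) / x ^ 2)) := by
  have hscale := tendsto_natCast_rpow_neg_third_mul x
  have hnum : Tendsto (fun k : ℕ => 1 - (kernel ((k : ℝ) ^ (-(1 / 3) : ℝ) * x) ^ k).re) atTop
      (𝓝 (1 - Real.cos (2 / 3 * x ^ 3))) := by
    rw [← exp_ofReal_mul_I_re]
    exact tendsto_const_nhds.sub ((continuous_re.tendsto _).comp (tendsto_kernel_pow x))
  have hden : Tendsto (fun k : ℕ => (x * Real.sinc ((k : ℝ) ^ (-(1 / 3) : ℝ) * x / 2)) ^ 2) atTop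
      (𝓝 (x ^ 2)) := by
    simpa using (((Real.continuous_sinc.tendsto _).comp (hscale.div_const 2)).const_mul x).pow 2
  obtain rfl | hx := eq_or_ne x 0
  · simp [scaledDefect, Set.indicator_apply, kernelDefect_zero]
  refine (hnum.div hden (by positivity)).congr' ?_
  filter_upwards [eventually_gt_atTop 0,
    hscale.eventually_mem (Ioc_mem_nhds (neg_lt_zero.2 Real.pi_pos) Real.pi_pos)] with k hk hmem
  rw [scaledDefect, Set.indicator_of_mem hmem, rpow_neg_two_thirds, kernelDefect, div_ofReal_re,
    two_mul_one_sub_cos, sub_re, one_re, Pi.div_apply]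
  field_simp

lemma tendsto_integral_kernelDefect :
    Tendsto (fun k : ℕ => (k : ℝ) ^ (-(1 / 3) : ℝ) * ∫ φ in -π..π, (kernelDefect k φ).re) atTop
      (𝓝 (∫ x : ℝ, (1 - Real.cos (2 / 3 * x ^ 3)) / x ^ 2)) := by
  have hdct : Tendsto (fun k => ∫ x, scaledDefect k x) atTop
      (𝓝 (∫ x : ℝ, (1 - Real.cos (2 / 3 * x ^ 3)) / x ^ 2)) := by
    refine tendsto_integral_filter_of_dominated_convergence (fun x => π ^ 2 * (1 + x ^ 2)⁻¹)
      (.of_forall fun k => (measurable_scaledDefect k).aestronglyMeasurable) ?_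
      (integrable_inv_one_add_sq.const_mul _) (.of_forall tendsto_scaledDefect)
    filter_upwards [eventually_gt_atTop 0] with k hk
    exact .of_forall (abs_scaledDefect_le hk)
  refine hdct.congr' ?_
  filter_upwards [eventually_gt_atTop 0] with k hk
  exact integral_scaledDefect hk

end Scaling

section OscillatoryIntegral

open Complex MeasureTheory Set Topology
open scoped Real

lemma integrable_and_integral_eq_of_nonneg_kernel {α β : Type*} [MeasurableSpace α]
    [MeasurableSpace β] {μ : Measure α} {ν : Measure β} [SFinite μ] [SFinite ν] {H : α → β → ℝ}
    {F : α → ℝ} {G : β → ℝ} (hmeas : Measurable (Function.uncurry H))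
    (hnonneg : ∀ᵐ x ∂μ, ∀ᵐ y ∂ν, 0 ≤ H x y) (hH : ∀ᵐ x ∂μ, Integrable (H x) ν)
    (hF : ∀ᵐ x ∂μ, ∫ y, H x y ∂ν = F x) (hFint : Integrable F μ)
    (hG : ∀ᵐ y ∂ν, ∫ x, H x y ∂μ = G y) :
    Integrable G ν ∧ ∫ y, G y ∂ν = ∫ x, F x ∂μ := by
  have hint : Integrable (Function.uncurry H) (μ.prod ν) := by
    refine (integrable_prod_iff hmeas.aestronglyMeasurable).2 ⟨hH, hFint.congr ?_⟩
    filter_upwards [hnonneg, hF] with x hx hFx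
    rw [← hFx]
    refine integral_congr_ae ?_
    filter_upwards [hx] with y hy using (Real.norm_of_nonneg hy).symm
  refine ⟨hint.integral_prod_right.congr hG, ?_⟩
  rw [← integral_congr_ae hF, ← integral_congr_ae hG, integral_integral_swap hint]

lemma integral_rpow_mul_exp_neg_mul_one_add_sq {p v : ℝ} (hp : 0 < p) (hv : 0 < v) :
    ∫ s in Ioi (0 : ℝ), s ^ (p - 1) * Real.exp (-v * (1 + s ^ 2)) =
      Real.Gamma (p / 2) / 2 * (Real.exp (-v) * v ^ ((1 - p / 2) - 1)) := by
  have hGamma := integral_rpow_mul_exp_neg_mul_rpow (p := 2) (q := p - 1) two_pos (by linarith) hv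
  simp only [Real.rpow_two] at hGamma
  simp_rw [mul_one_add, Real.exp_add, mul_left_comm _ (Real.exp (-v))]
  rw [integral_const_mul, hGamma, sub_add_cancel, show -p / 2 = (1 - p / 2) - 1 by ring]
  ring

/-- The weight is a Laplace transform, `1 / (1 + s²) = ∫ exp (-v (1 + s²)) dv`; exchanging the
integrals produces `Γ (p / 2) Γ (1 - p / 2) / 2`. -/
lemma integral_rpow_mul_inv_one_add_sq {p : ℝ} (hp₀ : 0 < p) (hp₂ : p < 2) :
    IntegrableOn (fun s : ℝ => s ^ (p - 1) * (1 + s ^ 2)⁻¹) (Ioi 0) ∧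
      ∫ s in Ioi (0 : ℝ), s ^ (p - 1) * (1 + s ^ 2)⁻¹ = π / (2 * Real.sin (π * p / 2)) := by
  have hpos : ∀ᵐ s ∂volume.restrict (Ioi (0 : ℝ)), 0 < s := ae_restrict_mem measurableSet_Ioi
  have hinner (s : ℝ) : ∫ v in Ioi (0 : ℝ), s ^ (p - 1) * Real.exp (-v * (1 + s ^ 2)) =
      s ^ (p - 1) * (1 + s ^ 2)⁻¹ := by
    have := integral_exp_mul_Ioi (a := -(1 + s ^ 2)) (by nlinarith [sq_nonneg s]) 0
    simp_rw [integral_const_mul, neg_mul, mul_comm _ (1 + s ^ 2), ← neg_mul, this]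
    rw [mul_zero, Real.exp_zero, neg_div_neg_eq, one_div]
  have hq : 0 < 1 - p / 2 := by linarith
  obtain ⟨hint, heq⟩ := integrable_and_integral_eq_of_nonneg_kernel
    (H := fun v s : ℝ => s ^ (p - 1) * Real.exp (-v * (1 + s ^ 2))) (by fun_prop)
    (hpos.mono fun v _ => hpos.mono fun s hs => by positivity)
    (hpos.mono fun v hv => by
      refine Integrable.of_integral_ne_zero ?_
      rw [integral_rpow_mul_exp_neg_mul_one_add_sq hp₀ hv]
      positivity)
    (hpos.mono fun v => integral_rpow_mul_exp_neg_mul_one_add_sq hp₀)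
    ((Real.GammaIntegral_convergent hq).const_mul _) (.of_forall hinner)
  refine ⟨hint, heq.trans ?_⟩
  rw [integral_const_mul, ← Real.Gamma_eq_integral hq, div_mul_eq_mul_div,
    Real.Gamma_mul_Gamma_one_sub, mul_div_assoc, div_div, mul_comm 2]

lemma integral_exp_neg_mul_one_sub_cos {s : ℝ} (hs : 0 < s) :
    IntegrableOn (fun u : ℝ => Real.exp (-(s * u)) * (1 - Real.cos u)) (Ioi 0) ∧
      ∫ u in Ioi (0 : ℝ), Real.exp (-(s * u)) * (1 - Real.cos u) = (s * (1 + s ^ 2))⁻¹ := by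
  have hre₀ : (-s : ℂ).re < 0 := by simpa
  have hre₁ : (-s + I : ℂ).re < 0 := by simpa
  have hsplit (u : ℝ) : Real.exp (-(s * u)) * (1 - Real.cos u) =
      (exp (-s * u) - exp ((-s + I) * u)).re := by
    simp only [neg_mul, sub_re, exp_re, neg_re, mul_re, ofReal_re, ofReal_im, mul_zero, sub_zero,
      neg_im, mul_im, zero_mul, add_zero, neg_zero, Real.cos_zero, mul_one, add_re, I_re, add_im,
      I_im, zero_add, one_mul]
    ring
  have hint₀ := integrableOn_exp_mul_complex_Ioi hre₀ 0
  have hint₁ := integrableOn_exp_mul_complex_Ioi hre₁ 0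
  simp_rw [hsplit]
  refine ⟨(hint₀.sub hint₁).re, (integral_re (hint₀.sub hint₁)).trans ?_⟩
  simp only [Pi.sub_apply]
  rw [integral_sub hint₀ hint₁, integral_exp_mul_complex_Ioi hre₀,
    integral_exp_mul_complex_Ioi hre₁]
  simp only [ofReal_zero, mul_zero, exp_zero, neg_div_neg_eq, one_div, RCLike.re_to_complex, sub_re,
    inv_re, ofReal_re, normSq_apply, ofReal_im, add_zero, div_self_mul_self', div_re, neg_re,
    one_re, add_re, I_re, mul_neg, neg_mul, one_mul, neg_neg, add_im, neg_im, neg_zero, I_im,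
    zero_add, mul_one, one_im, zero_div, mul_inv_rev]
  field_simp
  ring

/-- `Γ a * u ^ (-a)` is the Laplace transform of `s ^ (a - 1)`, and the Laplace transform of
`1 - cos` is rational. -/
lemma integral_one_sub_cos_mul_rpow_neg {a : ℝ} (ha₁ : 1 < a) (ha₃ : a < 3) :
    ∫ u in Ioi (0 : ℝ), (1 - Real.cos u) * u ^ (-a) =
      π / (2 * Real.sin (π * (a - 1) / 2) * Real.Gamma a) := by
  have hpos : ∀ᵐ s ∂volume.restrict (Ioi (0 : ℝ)), 0 < s := ae_restrict_mem measurableSet_Ioi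
  have hcos (u : ℝ) : 0 ≤ 1 - Real.cos u := sub_nonneg.2 (Real.cos_le_one u)
  have ha : 0 < a := by linarith
  obtain ⟨hweight, hweight_eq⟩ :=
    integral_rpow_mul_inv_one_add_sq (p := a - 1) (by linarith) (by linarith)
  have hlaplace {s : ℝ} (hs : 0 < s) :
      ∫ u in Ioi (0 : ℝ), s ^ (a - 1) * (Real.exp (-(s * u)) * (1 - Real.cos u)) =
        s ^ (a - 1 - 1) * (1 + s ^ 2)⁻¹ := by
    rw [integral_const_mul, (integral_exp_neg_mul_one_sub_cos hs).2,
      Real.rpow_sub_one hs.ne' (a - 1), mul_inv, div_eq_mul_inv, mul_assoc]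
  have hgamma {u : ℝ} (hu : 0 < u) :
      ∫ s in Ioi (0 : ℝ), s ^ (a - 1) * (Real.exp (-(s * u)) * (1 - Real.cos u)) =
        Real.Gamma a * ((1 - Real.cos u) * u ^ (-a)) := by
    simp_rw [← mul_assoc, integral_mul_const, mul_comm _ u]
    rw [Real.integral_rpow_mul_exp_neg_mul_Ioi ha hu, one_div, Real.inv_rpow hu.le,
      ← Real.rpow_neg hu.le]
    ring
  have hswap := (integrable_and_integral_eq_of_nonneg_kernel
    (H := fun s u : ℝ => s ^ (a - 1) * (Real.exp (-(s * u)) * (1 - Real.cos u))) (by fun_prop)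
    (hpos.mono fun s hs => .of_forall fun u => mul_nonneg (by positivity)
      (mul_nonneg (by positivity) (hcos u)))
    (hpos.mono fun s hs => (integral_exp_neg_mul_one_sub_cos hs).1.const_mul _)
    (hpos.mono fun s => hlaplace) hweight (hpos.mono fun u => hgamma)).2
  rw [integral_const_mul, hweight_eq] at hswap
  rw [← div_div, eq_div_iff (Real.Gamma_pos_of_pos ha).ne', mul_comm, hswap]

lemma integral_one_sub_cos_mul_rpow_neg_four_thirds :
    ∫ u in Ioi (0 : ℝ), (1 - Real.cos u) * u ^ (-(4 / 3) : ℝ) =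
      3 * (Real.Gamma (2 / 3) * √3 / 2) := by
  have hreflection : Real.Gamma (1 / 3) * Real.Gamma (2 / 3) = π / (√3 / 2) := by
    rw [← Real.sin_pi_div_three, show π / 3 = π * (1 / 3) by ring,
      ← Real.Gamma_mul_Gamma_one_sub]
    norm_num
  have hshift : Real.Gamma (4 / 3) = 1 / 3 * Real.Gamma (1 / 3) := by
    rw [← Real.Gamma_add_one (by norm_num)]
    norm_num
  rw [integral_one_sub_cos_mul_rpow_neg (by norm_num) (by norm_num),
    show π * (4 / 3 - 1) / 2 = π / 6 by ring, Real.sin_pi_div_six, hshift]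
  field_simp at hreflection ⊢
  linear_combination -hreflection

lemma integral_Ioi_one_sub_cos_cube_div_sq {c : ℝ} (hc : 0 < c) :
    ∫ x in Ioi (0 : ℝ), (1 - Real.cos (c * x ^ 3)) / x ^ 2 =
      c ^ ((1 : ℝ) / 3) * (Real.Gamma (2 / 3) * √3 / 2) := by
  have hscale := integral_comp_mul_left_Ioi
    (fun u : ℝ => (1 - Real.cos u) * u ^ (-(4 / 3) : ℝ)) 0 hc
  have hcube := integral_comp_rpow_Ioi_of_pos (p := 3) three_pos
    (g := fun u : ℝ => (1 - Real.cos (c * u)) * (c * u) ^ (-(4 / 3) : ℝ))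
  have hintegrand : EqOn (fun x : ℝ => (3 * x ^ ((3 : ℝ) - 1)) •
        ((1 - Real.cos (c * x ^ (3 : ℝ))) * (c * x ^ (3 : ℝ)) ^ (-(4 / 3) : ℝ)))
      (fun x => 3 * c ^ (-(4 / 3) : ℝ) * ((1 - Real.cos (c * x ^ 3)) / x ^ 2)) (Ioi 0) := by
    intro x hx
    have hx : 0 < x := hx
    have hpow : x ^ ((3 : ℝ) - 1) * (x ^ (3 : ℝ)) ^ (-(4 / 3) : ℝ) = (x ^ 2)⁻¹ := by
      rw [← Real.rpow_mul hx.le, ← Real.rpow_add hx, ← Real.rpow_natCast, ← Real.rpow_neg hx.le]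
      norm_num
    have hnat : x ^ (3 : ℝ) = x ^ 3 := by exact_mod_cast Real.rpow_natCast x 3
    simp only [smul_eq_mul]
    rw [Real.mul_rpow hc.le (by positivity), div_eq_mul_inv _ (x ^ 2), ← hpow, hnat]
    ring
  have hcpow : c ^ (-(4 / 3) : ℝ) * c ^ ((1 : ℝ) / 3) = c⁻¹ := by
    rw [← Real.rpow_add hc, ← Real.rpow_neg_one]
    norm_num
  rw [mul_zero, integral_one_sub_cos_mul_rpow_neg_four_thirds, smul_eq_mul] at hscale
  rw [setIntegral_congr_fun measurableSet_Ioi hintegrand, integral_const_mul, hscale] at hcube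
  refine mul_left_cancel₀ (by positivity : 3 * c ^ (-(4 / 3) : ℝ) ≠ 0) (hcube.trans ?_)
  rw [← hcpow]
  ring

lemma integral_one_sub_cos_cube_div_sq {c : ℝ} (hc : 0 < c) :
    ∫ x : ℝ, (1 - Real.cos (c * x ^ 3)) / x ^ 2 =
      c ^ ((1 : ℝ) / 3) * (Real.Gamma (2 / 3) * √3) := by
  have heven (x : ℝ) : (1 - Real.cos (c * x ^ 3)) / x ^ 2 =
      (1 - Real.cos (c * |x| ^ 3)) / |x| ^ 2 := by
    rw [sq_abs, ← Real.cos_abs, abs_mul, abs_pow, abs_of_pos hc]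
  rw [integral_congr_ae (.of_forall heven),
    integral_comp_abs (f := fun x => (1 - Real.cos (c * x ^ 3)) / x ^ 2),
    integral_Ioi_one_sub_cos_cube_div_sq hc]
  ring

end OscillatoryIntegral

section Asymptotics

open Topology
open scoped Real

lemma tendsto_rescaled_coeff_markedSeries :
    Tendsto (fun k : ℕ => (k : ℝ) ^ (-(1 / 3) : ℝ) * (π * (Real.exp (-(2 * k)) *
      (k * (PowerSeries.coeff (2 * k) (markedSeries ^ k * (1 - markedSeries) ^ (k - 1)) : ℚ)))))
      atTop (𝓝 ((2 / 3 : ℝ) ^ ((1 : ℝ) / 3) * (Real.Gamma (2 / 3) * √3) / 2)) := by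
  have hlimit := tendsto_integral_kernelDefect.div_const 2
  rw [integral_one_sub_cos_cube_div_sq (by norm_num)] at hlimit
  refine hlimit.congr' ?_
  filter_upwards [eventually_gt_atTop 0] with k hk
  rw [pi_mul_exp_neg_mul_coeff_eq_integral hk, mul_div_assoc]

lemma rpow_three_mul_sub_sixth {x : ℝ} (hx : 0 < x) (k : ℕ) :
    x ^ (3 * (k : ℝ) - 1 / 6) = x ^ k * x ^ (2 * k) / x ^ ((1 : ℝ) / 6) := by
  rw [Real.rpow_sub hx, ← pow_add, ← Real.rpow_natCast]
  push_cast
  ring_nf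

lemma sqrt_two_mul_two_mul {x : ℝ} (hx : 0 < x) :
    √(2 * (2 * x)) = 2 * (x * x ^ (-(1 / 3) : ℝ)) / x ^ ((1 : ℝ) / 6) := by
  rw [show 2 * (2 * x) = 2 ^ 2 * x by ring, Real.sqrt_mul (by norm_num),
    Real.sqrt_sq zero_le_two, Real.sqrt_eq_rpow, mul_div_assoc,
    ← Real.rpow_one_add' hx.le (by norm_num), ← Real.rpow_sub hx]
  norm_num

lemma MCount_div_eq_stirlingSeq_mul {k : ℕ} (hk : 0 < k) (c : ℝ) :
    (MCount (2 * k) k : ℝ) / (c * ((2 * k : ℕ) : ℝ) ^ (3 * (k : ℝ) - 1 / 6)) =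
      Stirling.stirlingSeq (2 * k) * ((k : ℝ) ^ (-(1 / 3) : ℝ) * (π * (Real.exp (-(2 * k)) *
        (k * (PowerSeries.coeff (2 * k) (markedSeries ^ k * (1 - markedSeries) ^ (k - 1)) : ℚ))))) *
          (2 * 2 ^ ((1 : ℝ) / 6) / π) / c := by
  have hk' : (0 : ℝ) < k := Nat.cast_pos.2 hk
  have hcount : (MCount (2 * k) k : ℝ) = (2 * k) ^ k * (2 * k).factorial *
      (PowerSeries.coeff (2 * k) (markedSeries ^ k * (1 - markedSeries) ^ (k - 1)) : ℚ) := by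
    exact_mod_cast congrArg (Rat.cast (K := ℝ)) (MCount_two_mul_self hk)
  have hexp : (2 * (k : ℝ) / Real.exp 1) ^ (2 * k) =
      (2 * (k : ℝ)) ^ (2 * k) * Real.exp (-(2 * k)) := by
    rw [div_pow, ← Real.exp_nat_mul, Real.exp_neg, div_eq_mul_inv]
    push_cast
    rw [mul_one]
  rw [hcount, Stirling.stirlingSeq]
  push_cast
  rw [rpow_three_mul_sub_sixth (by positivity), sqrt_two_mul_two_mul hk', hexp,
    Real.mul_rpow zero_le_two hk'.le]
  field_simp

lemma sqrt_pi_mul_oscillatory_constant :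
    √π * ((2 / 3 : ℝ) ^ ((1 : ℝ) / 3) * (Real.Gamma (2 / 3) * √3) / 2) *
        (2 * 2 ^ ((1 : ℝ) / 6) / π) =
      √2 * (3 : ℝ) ^ ((1 : ℝ) / 6) * Real.Gamma (2 / 3) / √π := by
  have hsqrt {x : ℝ} (hx : 0 < x) : √x = x ^ ((1 : ℝ) / 3) * x ^ ((1 : ℝ) / 6) := by
    rw [Real.sqrt_eq_rpow, ← Real.rpow_add hx]
    norm_num
  have hpi : √π ^ 2 = π := Real.sq_sqrt Real.pi_pos.le
  rw [hsqrt two_pos, hsqrt three_pos, Real.div_rpow zero_le_two zero_le_three]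
  field_simp
  rw [hpi]

end Asymptotics

end MappingParking

/-- (Lackner–Panholzer, Theorem 4.10, critical case `m = n/2`) Along even `n = 2k`,
`M_{n,n/2} ∼ (√2 · 3^(1/6) · Γ(2/3) / √π) · n^(3n/2 - 1/6)`, i.e. the ratio
`M_{2k,k} / ((√2 · 3^(1/6) · Γ(2/3) / √π) · (2k)^(3k - 1/6))` tends to `1` as `k → ∞`. -/
theorem lackner_panholzer_theorem_4_10_critical :
    Tendsto
      (fun k : ℕ =>
        (MCount (2 * k) k : ℝ) /
          ((Real.sqrt 2 * (3 : ℝ) ^ ((1 : ℝ) / 6) * Real.Gamma (2 / 3) / Real.sqrt Real.pi) *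
            ((2 * k : ℕ) : ℝ) ^ (3 * (k : ℝ) - 1 / 6)))
      atTop (nhds 1) := by
  have hstirling : Tendsto (fun k : ℕ => Stirling.stirlingSeq (2 * k)) atTop
      (nhds (Real.sqrt Real.pi)) :=
    Stirling.tendsto_stirlingSeq_sqrt_pi.comp (tendsto_id.const_mul_atTop' two_pos)
  have hconst :
      Real.sqrt 2 * (3 : ℝ) ^ ((1 : ℝ) / 6) * Real.Gamma (2 / 3) / Real.sqrt Real.pi ≠ 0 := by
    positivity
  have hlimit := ((hstirling.mul MappingParking.tendsto_rescaled_coeff_markedSeries).mul_const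
    (2 * 2 ^ ((1 : ℝ) / 6) / Real.pi)).div_const
      (Real.sqrt 2 * (3 : ℝ) ^ ((1 : ℝ) / 6) * Real.Gamma (2 / 3) / Real.sqrt Real.pi)
  rw [MappingParking.sqrt_pi_mul_oscillatory_constant, div_self hconst] at hlimit
  refine hlimit.congr' ?_
  filter_upwards [eventually_gt_atTop 0] with k hk
  exact (MappingParking.MCount_div_eq_stirlingSeq_mul hk _).symm
end

section
/- (Lackner–Panholzer, Corollary 4.11, subcritical case) Fix ρ ∈ (0, 1/2) and set m = m(n) = ⌊ρn⌋. Then the probability p_{n,m} = M_{n,m} / n^(n+m) that a uniformly random pair (f,s), with f an n-mapping and s ∈ {1,…,n}^m, is a mapping parking function satisfies lim_{n→∞} p_{n,m} = √(1−2ρ)/(1−ρ). -/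
open Filter

/-!
Recording which driver occupies which vertex turns a successful pair `(f, s)` into a choice of the
`m` parking places, a partial map between drivers and, for each driver, a preference in its basin:
the drivers from which it is led to its own place. Removing the basin of the last driver gives a
recursion for the exponential generating function of these weights, and Lagrange inversion yields
`M_{n,m} = n^{\underline m} n^{n-m} m! [w^m] e^{2nw} (1-w)^{n-m-1} (1-2w)`.

The coefficient is Cauchy's integral over the circle `|w| = m/n`, which passes through the saddle
point of the integrand. Laplace's method there and Stirling's formula for the factorials give the
limit.
-/

namespace LacknerPanholzer

open Finset Function

section ParkingOutcome

variable {V ι : Type*}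

/-- With step map `f` and set `occ` of occupied vertices, a driver starting at `v` parks
at `u`. -/
def ParksAt (f : V → V) (occ : Set V) (v u : V) : Prop :=
  ∃ i, f^[i] v = u ∧ u ∉ occ ∧ ∀ j < i, f^[j] v ∈ occ

theorem ParksAt.unique {f : V → V} {occ : Set V} {v u u' : V} (h : ParksAt f occ v u)
    (h' : ParksAt f occ v u') : u = u' := by
  obtain ⟨i, rfl, hi, hlt⟩ := h
  obtain ⟨i', rfl, hi', hlt'⟩ := h'
  rcases lt_trichotomy i i' with hii' | rfl | hii'
  · exact absurd (hlt' i hii') hi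
  · rfl
  · exact absurd (hlt i' hii') hi'

theorem iterate_injOn_Iic_of_first_exit {f : V → V} {occ : Set V} {v : V} {i : ℕ}
    (hi : f^[i] v ∉ occ) (hlt : ∀ j < i, f^[j] v ∈ occ) :
    Set.InjOn (fun j ↦ f^[j] v) (Set.Iic i) := by
  have not_eq_of_lt : ∀ a b, a < b → b ≤ i → f^[a] v ≠ f^[b] v := by
    intro a b hab hbi hf
    have hexit : f^[i - b + a] v = f^[i] v := by
      rw [iterate_add_apply, hf, ← iterate_add_apply, Nat.sub_add_cancel hbi]
    exact hi (hexit ▸ hlt (i - b + a) (by lia))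
  intro a ha b hb hab
  by_contra hne
  rcases lt_or_gt_of_ne hne with h | h
  · exact not_eq_of_lt a b h hb hab
  · exact not_eq_of_lt b a h ha hab.symm

theorem lt_card_of_first_exit [Fintype V] {f : V → V} {occ : Set V} {v : V} {i : ℕ}
    (hi : f^[i] v ∉ occ) (hlt : ∀ j < i, f^[j] v ∈ occ) : i < Fintype.card V := by
  have hinj : Set.InjOn (fun j ↦ f^[j] v) (Finset.range (i + 1)) := by
    refine (iterate_injOn_Iic_of_first_exit hi hlt).mono fun j hj ↦ ?_
    exact Nat.lt_succ_iff.mp (Finset.mem_range.mp hj)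
  simpa using Finset.card_le_card_of_injOn (t := Finset.univ) _ (by simp) hinj

theorem find?_range_iterate_eq_some_iff {n : ℕ} {f : Fin n → Fin n} {occ : List (Fin n)}
    {v : Fin n} {i : ℕ} :
    (List.range n).find? (fun i ↦ decide (f^[i] v ∉ occ)) = some i ↔
      f^[i] v ∉ occ ∧ ∀ j < i, f^[j] v ∈ occ := by
  simp only [List.find?_range_eq_some, decide_eq_true_eq, List.mem_range, decide_not,
    Bool.not_not, Bool.not_eq_true', decide_eq_false_iff_not]
  refine ⟨fun ⟨hi, _, hlt⟩ ↦ ⟨hi, hlt⟩, fun ⟨hi, hlt⟩ ↦ ⟨hi, ?_, hlt⟩⟩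
  simpa using lt_card_of_first_exit (occ := {x | x ∈ occ}) hi hlt

theorem parkAux_cons_isSome_iff {n : ℕ} {f : Fin n → Fin n} {occ rest : List (Fin n)}
    {v : Fin n} :
    (parkAux n f occ (v :: rest)).isSome ↔
      ∃ u, ParksAt f {x | x ∈ occ} v u ∧ (parkAux n f (u :: occ) rest).isSome := by
  cases hfind : (List.range n).find? (fun i ↦ decide (f^[i] v ∉ occ)) with
  | none =>
    simp only [parkAux, hfind, Option.isSome_none, Bool.false_eq_true, false_iff]
    rintro ⟨_, ⟨i, rfl, hi, hlt⟩, -⟩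
    exact Option.some_ne_none i
      ((find?_range_iterate_eq_some_iff.mpr ⟨hi, hlt⟩).symm.trans hfind)
  | some i =>
    have hparks : ParksAt f {x | x ∈ occ} v (f^[i] v) :=
      ⟨i, rfl, find?_range_iterate_eq_some_iff.mp hfind⟩
    simp only [parkAux, hfind]
    exact ⟨fun h ↦ ⟨_, hparks, h⟩, fun ⟨u, hu, h⟩ ↦ hparks.unique hu ▸ h⟩

theorem image_Iio_succ {m : ℕ} (σ : Fin (m + 1) → V) (k : Fin m) :
    σ '' Set.Iio k.succ = insert (σ 0) ((fun j ↦ σ j.succ) '' Set.Iio k) := by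
  ext x
  simp [Fin.exists_fin_succ, eq_comm]

theorem parkAux_ofFn_isSome_iff {n m : ℕ} {f : Fin n → Fin n} {occ : List (Fin n)}
    {s : Fin m → Fin n} :
    (parkAux n f occ (List.ofFn s)).isSome ↔
      ∃ σ : Fin m → Fin n, ∀ k, ParksAt f ({x | x ∈ occ} ∪ σ '' Set.Iio k) (s k) (σ k) := by
  induction m generalizing occ with
  | zero => simp [parkAux]
  | succ m ih =>
    have hocc (u : Fin n) (σ : Fin m → Fin n) (k : Fin m) :
        {x | x ∈ u :: occ} ∪ σ '' Set.Iio k = {x | x ∈ occ} ∪ insert u (σ '' Set.Iio k) := by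
      ext x; simp only [List.mem_cons, Set.mem_union, Set.mem_ofPred_eq, Set.mem_insert_iff]; tauto
    simp only [List.ofFn_succ, parkAux_cons_isSome_iff, ih, Fin.exists_fin_succ_pi,
      Fin.forall_fin_succ, image_Iio_succ, Fin.cons_zero, Fin.cons_succ, hocc]
    simp

/-- `σ k` is the vertex where driver `k` ends up when the drivers, arriving in the order of
`ι`, have preferences `s` and all succeed. -/
def IsOutcome [Preorder ι] (f : V → V) (s σ : ι → V) : Prop :=
  ∀ k, ParksAt f (σ '' Set.Iio k) (s k) (σ k)

theorem parkingSucceeds_iff_exists_isOutcome {n m : ℕ} {f : Fin n → Fin n}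
    {s : Fin m → Fin n} : ParkingSucceeds f s ↔ ∃ σ, IsOutcome f s σ := by
  simp [ParkingSucceeds, parkAux_ofFn_isSome_iff, IsOutcome]

theorem IsOutcome.unique [Preorder ι] [WellFoundedLT ι] {f : V → V} {s σ σ' : ι → V}
    (h : IsOutcome f s σ) (h' : IsOutcome f s σ') : σ = σ' := by
  funext k
  induction k using WellFoundedLT.induction with
  | ind k ih =>
    have himage : σ '' Set.Iio k = σ' '' Set.Iio k := Set.image_congr fun j hj ↦ ih j hj
    exact (h k).unique (himage ▸ h' k)

theorem IsOutcome.injective [LinearOrder ι] {f : V → V} {s σ : ι → V}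
    (h : IsOutcome f s σ) : Injective σ := by
  refine .of_lt_imp_ne fun j k hjk hσ ↦ ?_
  obtain ⟨_, _, hfree, _⟩ := h k
  exact hfree ⟨j, hjk, hσ⟩

theorem parkingSucceeds_iff_exists_embedding {n m : ℕ} {f : Fin n → Fin n}
    {s : Fin m → Fin n} : ParkingSucceeds f s ↔ ∃ σ : Fin m ↪ Fin n, IsOutcome f s σ := by
  rw [parkingSucceeds_iff_exists_isOutcome]
  exact ⟨fun ⟨σ, h⟩ ↦ ⟨⟨σ, h.injective⟩, h⟩, fun ⟨σ, h⟩ ↦ ⟨σ, h⟩⟩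

open scoped Classical in
theorem card_filter_exists_of_unique {α β : Type*} [Fintype α] [Fintype β] {R : α → β → Prop}
    (hR : ∀ a b b', R a b → R a b' → b = b') :
    #{a | ∃ b, R a b} = ∑ b, #{a | R a b} := by
  rw [← Finset.card_biUnion]
  · congr 1; ext a; simp
  · refine fun b _ b' _ hbb' ↦ Finset.disjoint_left.mpr fun a ha ha' ↦ hbb' ?_
    exact hR a b b' (by simpa using ha) (by simpa using ha')

open scoped Classical in
theorem MCount_eq_sum_embedding (n m : ℕ) :
    MCount n m = ∑ σ : Fin m ↪ Fin n, ∑ f : Fin n → Fin n,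
      ∏ k, #{v | ParksAt f (σ '' Set.Iio k) v (σ k)} := by
  have hpairs (f : Fin n → Fin n) (σ : Fin m ↪ Fin n) : #{s | IsOutcome f s σ} =
      ∏ k, #{v | ParksAt f (σ '' Set.Iio k) v (σ k)} := by
    rw [← Fintype.card_piFinset]
    congr 1; ext s
    simp only [mem_filter_univ, Fintype.mem_piFinset]; rfl
  have hsum (f : Fin n → Fin n) : #{s : Fin m → Fin n | ParkingSucceeds f s} =
      ∑ σ : Fin m ↪ Fin n, #{s | IsOutcome f s σ} := by
    simp only [parkingSucceeds_iff_exists_embedding]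
    exact card_filter_exists_of_unique fun s σ σ' h h' ↦ DFunLike.coe_injective (h.unique h')
  calc MCount n m = ∑ f : Fin n → Fin n, #{s : Fin m → Fin n | ParkingSucceeds f s} := by
        simp only [MCount, Nat.card_eq_fintype_card, Fintype.card_subtype, card_filter,
          Fintype.sum_prod_type]
    _ = _ := by simp only [hsum, hpairs]; exact sum_comm

end ParkingOutcome

section PartialMap

variable {α : Type*} [LinearOrder α]

/-- The partial self-map `h` leads from `v` to `k` through elements that, except for `k`
itself, are all smaller than `k`. -/
inductive ReachesBelow (h : α → Option α) (k : α) : α → Prop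
  | refl : ReachesBelow h k k
  | step {v w : α} : v < k → h v = some w → ReachesBelow h k w → ReachesBelow h k v

theorem reachesBelow_iff {h : α → Option α} {k v : α} :
    ReachesBelow h k v ↔ v = k ∨ v < k ∧ ∃ w, h v = some w ∧ ReachesBelow h k w := by
  constructor
  · rintro (_ | ⟨hlt, hv, hw⟩)
    · exact .inl rfl
    · exact .inr ⟨hlt, _, hv, hw⟩
  · rintro (rfl | ⟨hlt, w, hv, hw⟩)
    · exact .refl
    · exact .step hlt hv hw

variable [Fintype α]

open scoped Classical in
/-- The drivers `v` such that driver `k`, when starting at the vertex of `v`, is led to its own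
parking place; here `h` sends a driver to the driver occupying the next vertex. -/
noncomputable def basin (h : α → Option α) (k : α) : Finset α := {v | ReachesBelow h k v}

theorem mem_basin {h : α → Option α} {k v : α} : v ∈ basin h k ↔ ReachesBelow h k v := by
  simp [basin]

/-- The partial self-maps whose domain and range are contained in `A`. -/
noncomputable def partialMapsOn (A : Finset α) : Finset (α → Option α) :=
  {h | ∀ a, ∀ b ∈ h a, a ∈ A ∧ b ∈ A}

theorem mem_partialMapsOn {A : Finset α} {h : α → Option α} :
    h ∈ partialMapsOn A ↔ ∀ a, ∀ b ∈ h a, a ∈ A ∧ b ∈ A := by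
  simp [partialMapsOn]

/-- The partial self-maps of `A` weighted by the number of ways to realize them as the action of
an `n`-mapping on the occupied vertices (`N` is the number of vertices left free) together
with the preferences leading to this occupation. -/
noncomputable def mapWeight (N : ℕ) (A : Finset α) : ℕ :=
  ∑ h ∈ partialMapsOn A, ∏ k ∈ A, (h k).elim N (fun _ ↦ 1) * #(basin h k)

end PartialMap

section OccupiedSucc

variable {V ι : Type*} (σ : ι ↪ V)

/-- The driver, if any, parked at the vertex following that of driver `k`. -/
noncomputable def occupiedSucc (f : V → V) (k : ι) : Option ι :=
  partialInv σ (f (σ k))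

theorem partialInv_eq_some_iff {v : V} {k : ι} : partialInv σ v = some k ↔ σ k = v :=
  σ.injective.isPartialInv k v

theorem partialInv_apply_self (k : ι) : partialInv σ (σ k) = some k :=
  (partialInv_eq_some_iff σ).mpr rfl

section Order

variable {σ} [LinearOrder ι] {f : V → V} {k : ι}

theorem ParksAt.exists_reachesBelow {v : V}
    (hv : ParksAt f (σ '' Set.Iio k) v (σ k)) :
    ∃ j, ReachesBelow (occupiedSucc σ f) k j ∧ σ j = v := by
  obtain ⟨i, hi, -, hlt⟩ := hv
  induction i generalizing v with
  | zero => exact ⟨k, .refl, hi.symm⟩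
  | succ i ih =>
    obtain ⟨j, hjk, rfl⟩ := hlt 0 i.succ_pos
    obtain ⟨w, hw, hσw⟩ := ih hi fun j hj ↦ hlt (j + 1) (Nat.succ_lt_succ hj)
    exact ⟨j, .step hjk ((partialInv_eq_some_iff σ).mpr hσw) hw, rfl⟩

theorem ReachesBelow.parksAt {j : ι}
    (hj : ReachesBelow (occupiedSucc σ f) k j) :
    ParksAt f (σ '' Set.Iio k) (σ j) (σ k) := by
  have hfree : σ k ∉ σ '' Set.Iio k := by simp
  induction hj with
  | refl => exact ⟨0, rfl, hfree, by simp⟩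
  | @step v w hvk hvw _ ih =>
    obtain ⟨i, hi, -, hlt⟩ := ih
    have hw : σ w = f (σ v) := (partialInv_eq_some_iff σ).mp hvw
    rw [hw] at hi hlt
    refine ⟨i + 1, hi, hfree, fun j hj ↦ ?_⟩
    cases j with
    | zero => exact ⟨v, hvk, rfl⟩
    | succ j => exact hlt j (Nat.succ_lt_succ_iff.mp hj)

open scoped Classical in
theorem card_filter_parksAt [Fintype V] [Fintype ι] (σ : ι ↪ V) (f : V → V) (k : ι) :
    #{v | ParksAt f (σ '' Set.Iio k) v (σ k)} = #(basin (occupiedSucc σ f) k) := by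
  rw [← card_map σ]
  congr 1; ext v
  simp only [mem_filter_univ, Finset.mem_map, mem_basin]
  refine ⟨ParksAt.exists_reachesBelow, ?_⟩
  rintro ⟨j, hj, rfl⟩
  exact hj.parksAt

end Order

section Fiber

variable [Fintype V] [Fintype ι]

@[to_additive sum_comp_partialInv]
theorem prod_comp_partialInv {M : Type*} [CommMonoid M] (F : Option ι → M) :
    ∏ v, F (partialInv σ v) =
      F none ^ (Fintype.card V - Fintype.card ι) * ∏ k, F (some k) := by
  classical
  have hcompl : ∀ v ∈ (univ.map σ)ᶜ, F (partialInv σ v) = F none := by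
    intro v hv
    congr 1
    refine Option.eq_none_iff_forall_ne_some.mpr fun k hk ↦ ?_
    exact mem_compl.mp hv (Finset.mem_map.mpr ⟨k, mem_univ k, (partialInv_eq_some_iff σ).mp hk⟩)
  rw [← prod_compl_mul_prod (univ.map σ), prod_congr rfl hcompl, prod_const, card_compl, card_map,
    card_univ, prod_map]
  simp only [partialInv_apply_self]

variable [DecidableEq ι]

theorem card_filter_partialInv_eq (o : Option ι) :
    #{v | partialInv σ v = o} = o.elim (Fintype.card V - Fintype.card ι) fun _ ↦ 1 := by
  rw [card_filter, sum_comp_partialInv σ fun p ↦ if p = o then 1 else 0]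
  cases o <;> simp

theorem card_filter_occupiedSucc_eq [DecidableEq V] (h : ι → Option ι) :
    #{f | occupiedSucc σ f = h} =
      Fintype.card V ^ (Fintype.card V - Fintype.card ι) *
        ∏ k, (h k).elim (Fintype.card V - Fintype.card ι) fun _ ↦ 1 := by
  let allowed (o : Option ι) : Finset V :=
    o.elim univ fun k ↦ univ.filter fun y ↦ partialInv σ y = h k
  have hfiber : univ.filter (fun f ↦ occupiedSucc σ f = h) =
      Fintype.piFinset fun v ↦ allowed (partialInv σ v) := by
    ext f
    simp only [mem_filter_univ, Fintype.mem_piFinset, funext_iff, occupiedSucc]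
    constructor
    · intro hf v
      cases hv : partialInv σ v with
      | none => simp [allowed]
      | some k => simp [allowed, ← hf k, (partialInv_eq_some_iff σ).mp hv]
    · intro hf k
      simpa [allowed, partialInv_apply_self] using hf (σ k)
  rw [hfiber, Fintype.card_piFinset, prod_comp_partialInv σ fun o ↦ #(allowed o)]
  simp [allowed, card_filter_partialInv_eq]

end Fiber

end OccupiedSucc

theorem sum_prod_card_basin_occupiedSucc {V ι : Type*} [Fintype V] [Fintype ι]
    [DecidableEq V] [LinearOrder ι] (σ : ι ↪ V) :
    ∑ f : V → V, ∏ k, #(basin (occupiedSucc σ f) k) =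
      Fintype.card V ^ (Fintype.card V - Fintype.card ι) *
        mapWeight (Fintype.card V - Fintype.card ι) (univ : Finset ι) := by
  have huniv : partialMapsOn (univ : Finset ι) = univ := by ext h; simp [mem_partialMapsOn]
  rw [← sum_fiberwise univ (occupiedSucc σ), mapWeight, huniv, mul_sum]
  refine sum_congr rfl fun h _ ↦ ?_
  have hconst : ∀ f ∈ ({f | occupiedSucc σ f = h} : Finset (V → V)),
      ∏ k, #(basin (occupiedSucc σ f) k) = ∏ k, #(basin h k) := by
    intro f hf
    rw [(mem_filter_univ f).mp hf]
  rw [sum_congr rfl hconst, sum_const, card_filter_occupiedSucc_eq, prod_mul_distrib, smul_eq_mul,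
    mul_assoc]

theorem MCount_eq (n m : ℕ) :
    MCount n m =
      n.descFactorial m * (n ^ (n - m) * mapWeight (n - m) (univ : Finset (Fin m))) := by
  simp only [MCount_eq_sum_embedding, card_filter_parksAt, sum_prod_card_basin_occupiedSucc]
  simp [Fintype.card_embedding_eq]

section Induced

variable {α : Type*}

/-- The partial self-map `h` has no cycle. -/
def IsAcyclic (h : α → Option α) : Prop := WellFounded fun w v ↦ h v = some w

/-- The restriction of the partial self-map `h` to `D`, undefined where `h` leaves `D`. -/
def inducedOn [DecidableEq α] (D : Finset α) (h : α → Option α) (v : α) : Option α :=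
  if v ∈ D then (h v).filter (· ∈ D) else none

theorem inducedOn_eq_some_iff [DecidableEq α] {D : Finset α} {h : α → Option α} {v w : α} :
    inducedOn D h v = some w ↔ v ∈ D ∧ h v = some w ∧ w ∈ D := by
  by_cases hv : v ∈ D <;> simp [inducedOn, hv]

theorem inducedOn_apply_of_forall_mem [DecidableEq α] {D : Finset α} {h : α → Option α} {v : α}
    (hv : v ∈ D) (hD : ∀ w, h v = some w → w ∈ D) : inducedOn D h v = h v := by
  ext w
  simpa [inducedOn_eq_some_iff, hv] using hD w

theorem isAcyclic_inducedOn [DecidableEq α] {h : α → Option α} (hh : IsAcyclic h)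
    (D : Finset α) : IsAcyclic (inducedOn D h) :=
  Subrelation.wf (fun hvw ↦ (inducedOn_eq_some_iff.mp hvw).2.1) hh

variable [LinearOrder α]

theorem ReachesBelow.reflTransGen {h : α → Option α} {k v : α} (hv : ReachesBelow h k v) :
    Relation.ReflTransGen (fun w v ↦ h v = some w) k v := by
  induction hv with
  | refl => exact .refl
  | step _ hvw _ ih => exact ih.tail hvw

theorem IsAcyclic.not_reachesBelow {h : α → Option α} (hh : IsAcyclic h) {k w : α}
    (hk : h k = some w) : ¬ ReachesBelow h k w := fun hw ↦
  hh.transGen.irrefl.irrefl k (.tail' hw.reflTransGen hk)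

theorem isAcyclic_inducedOn_of_reachesBelow {h : α → Option α} {k : α} {C : Finset α}
    (hk : k ∉ C) (hC : ∀ v ∈ C, ReachesBelow h k v) : IsAcyclic (inducedOn C h) := by
  have acc_of_reachesBelow : ∀ v, ReachesBelow h k v →
      Acc (fun w v ↦ inducedOn C h v = some w) v := by
    intro v hv
    induction hv with
    | refl => exact ⟨_, fun w hw ↦ absurd (inducedOn_eq_some_iff.mp hw).1 hk⟩
    | step _ hvw _ ih =>
      refine ⟨_, fun w' hw' ↦ ?_⟩
      rwa [← Option.some.inj (hvw.symm.trans (inducedOn_eq_some_iff.mp hw').2.1)]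
  refine ⟨fun v ↦ ?_⟩
  by_cases hv : v ∈ C
  · exact acc_of_reachesBelow v (hC v hv)
  · exact ⟨_, fun w hw ↦ absurd (inducedOn_eq_some_iff.mp hw).1 hv⟩

theorem reachesBelow_inducedOn_iff {h : α → Option α} {k v : α} {D : Finset α} (hk : k ∈ D)
    (hD : ∀ v w, v < k → h v = some w → w ∈ D → v ∈ D) :
    ReachesBelow (inducedOn D h) k v ↔ ReachesBelow h k v := by
  constructor <;> intro hv
  · induction hv with
    | refl => exact .refl
    | step hlt hvw _ ih => exact .step hlt (inducedOn_eq_some_iff.mp hvw).2.1 ih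
  · suffices v ∈ D ∧ ReachesBelow (inducedOn D h) k v from this.2
    induction hv with
    | refl => exact ⟨hk, .refl⟩
    | step hlt hvw _ ih =>
      have hvD := hD _ _ hlt hvw ih.1
      exact ⟨hvD, .step hlt (inducedOn_eq_some_iff.mpr ⟨hvD, hvw, ih.1⟩) ih.2⟩

variable [Fintype α]

theorem basin_inducedOn {h : α → Option α} {k : α} {D : Finset α} (hk : k ∈ D)
    (hD : ∀ v w, v < k → h v = some w → w ∈ D → v ∈ D) :
    basin (inducedOn D h) k = basin h k := by
  ext v
  rw [mem_basin, mem_basin, reachesBelow_inducedOn_iff hk hD]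

theorem inducedOn_mem_partialMapsOn (D : Finset α) (h : α → Option α) :
    inducedOn D h ∈ partialMapsOn D :=
  mem_partialMapsOn.mpr fun _ _ hvw ↦
    have hvw := inducedOn_eq_some_iff.mp hvw
    ⟨hvw.1, hvw.2.2⟩

open scoped Classical in
/-- The acyclic partial self-maps of `A`, that is, the parent maps of rooted forests on `A`. -/
noncomputable def forestsOn (A : Finset α) : Finset (α → Option α) :=
  {h ∈ partialMapsOn A | IsAcyclic h}

theorem mem_forestsOn {A : Finset α} {h : α → Option α} :
    h ∈ forestsOn A ↔ h ∈ partialMapsOn A ∧ IsAcyclic h := by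
  simp [forestsOn]

/-- The forests on `A`, weighted by the product of the sizes of their basins. -/
noncomputable def forestWeight (A : Finset α) : ℕ :=
  ∑ h ∈ forestsOn A, ∏ k ∈ A, #(basin h k)

end Induced

section Glue

variable {α : Type*} [DecidableEq α]

/-- The inverse of `h ↦ (h m, inducedOn C h, inducedOn (A \ C) h)` on `mapsWithBasin m A C`:
the roots of the forest `g` on `C` are attached to `m`. -/
def glue (m : α) (C : Finset α) (p : Option α × (α → Option α) × (α → Option α)) (v : α) :
    Option α :=
  if v = m then p.1 else if v ∈ C then some ((p.2.1 v).getD m) else p.2.2 v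

variable {m v : α} {C : Finset α} {o : Option α} {g h' : α → Option α}

@[simp]
theorem glue_self : glue m C (o, g, h') m = o := if_pos rfl

theorem glue_of_mem (hmC : m ∉ C) (hv : v ∈ C) :
    glue m C (o, g, h') v = some ((g v).getD m) := by
  simp [glue, hv, ne_of_mem_of_not_mem hv hmC]

theorem glue_of_notMem (hv : v ∉ insert m C) : glue m C (o, g, h') v = h' v := by
  rw [mem_insert, not_or] at hv
  simp [glue, hv]

end Glue

theorem prod_insert_of_subset {α M : Type*} [DecidableEq α] [CommMonoid M] {m : α}
    {A C : Finset α} (hm : m ∉ A) (hC : C ⊆ A) (φ : α → M) :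
    ∏ k ∈ insert m A, φ k = φ m * (∏ k ∈ C, φ k) * ∏ k ∈ A \ C, φ k := by
  rw [prod_insert hm, ← prod_sdiff hC, mul_assoc, mul_comm (∏ k ∈ C, φ k)]

section SplitAtMax

variable {α : Type*} [LinearOrder α] [Fintype α]

/-- The partial self-maps of `insert m A` for which exactly the elements of `C` lead to `m`. -/
noncomputable def mapsWithBasin (m : α) (A C : Finset α) : Finset (α → Option α) :=
  {h ∈ partialMapsOn (insert m A) | basin h m = insert m C}

variable {m v w : α} {A C : Finset α} {h : α → Option α}

theorem mem_mapsWithBasin :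
    h ∈ mapsWithBasin m A C ↔ h ∈ partialMapsOn (insert m A) ∧ basin h m = insert m C := by
  simp [mapsWithBasin]

theorem mem_iff_exists_of_mem_mapsWithBasin (hh : h ∈ mapsWithBasin m A C) (hv : v < m) :
    v ∈ C ↔ ∃ w, h v = some w ∧ w ∈ insert m C := by
  rw [← (mem_mapsWithBasin.mp hh).2, ← mem_insert.trans (or_iff_right hv.ne),
    ← (mem_mapsWithBasin.mp hh).2, mem_basin, reachesBelow_iff]
  simp only [mem_basin, hv.ne, hv, false_or, true_and]

theorem mem_iff_of_mem_mapsWithBasin (hh : h ∈ mapsWithBasin m A C) (hv : v < m)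
    (hvw : h v = some w) : v ∈ C ↔ w ∈ insert m C := by
  simp [mem_iff_exists_of_mem_mapsWithBasin hh hv, hvw]

theorem reachesBelow_of_mem_mapsWithBasin (hh : h ∈ mapsWithBasin m A C) (hv : v ∈ insert m C) :
    ReachesBelow h m v := by
  rwa [← mem_basin, (mem_mapsWithBasin.mp hh).2]

theorem mem_of_eq_some_of_mem_mapsWithBasin (hh : h ∈ mapsWithBasin m A C)
    (hvw : h v = some w) : v ∈ insert m A ∧ w ∈ insert m A :=
  mem_partialMapsOn.mp (mem_mapsWithBasin.mp hh).1 v w hvw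

theorem inducedOn_mem_forestsOn_of_mem_mapsWithBasin (hmC : m ∉ C)
    (hh : h ∈ mapsWithBasin m A C) : inducedOn C h ∈ forestsOn C :=
  mem_forestsOn.mpr ⟨inducedOn_mem_partialMapsOn C h, isAcyclic_inducedOn_of_reachesBelow hmC
    fun _ hv ↦ reachesBelow_of_mem_mapsWithBasin hh (mem_insert_of_mem hv)⟩

theorem basin_inducedOn_of_mem_mapsWithBasin (hA : ∀ a ∈ A, a < m) (hC : C ⊆ A)
    (hh : h ∈ mapsWithBasin m A C) {k : α} (hk : k ∈ C) :
    basin (inducedOn C h) k = basin h k :=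
  basin_inducedOn hk fun _ _ hvk hvw hw ↦
    (mem_iff_of_mem_mapsWithBasin hh (hvk.trans (hA k (hC hk))) hvw).mpr (mem_insert_of_mem hw)

theorem mem_sdiff_of_eq_some_of_mem_mapsWithBasin (hA : ∀ a ∈ A, a < m)
    (hh : h ∈ mapsWithBasin m A C) (hv : v ∈ A \ C) (hvw : h v = some w) : w ∈ A \ C := by
  have hwC := (mem_iff_of_mem_mapsWithBasin hh (hA v (mem_sdiff.mp hv).1) hvw).not.mp
    (mem_sdiff.mp hv).2
  have hwA := (mem_of_eq_some_of_mem_mapsWithBasin hh hvw).2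
  grind

theorem inducedOn_sdiff_apply_of_mem_mapsWithBasin (hA : ∀ a ∈ A, a < m)
    (hh : h ∈ mapsWithBasin m A C) (hv : v ∈ A \ C) : inducedOn (A \ C) h v = h v :=
  inducedOn_apply_of_forall_mem hv fun _ ↦
    mem_sdiff_of_eq_some_of_mem_mapsWithBasin hA hh hv

theorem basin_inducedOn_sdiff_of_mem_mapsWithBasin (hA : ∀ a ∈ A, a < m)
    (hh : h ∈ mapsWithBasin m A C) {k : α} (hk : k ∈ A \ C) :
    basin (inducedOn (A \ C) h) k = basin h k := by
  refine basin_inducedOn hk fun v w hvk hvw hw ↦ ?_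
  have hvm := hvk.trans (hA k (mem_sdiff.mp hk).1)
  have hvC := mem_iff_of_mem_mapsWithBasin hh hvm hvw
  have hvA := (mem_of_eq_some_of_mem_mapsWithBasin hh hvw).1
  have hwm := hA w (mem_sdiff.mp hw).1
  grind

theorem IsAcyclic.of_mem_mapsWithBasin (hA : ∀ a ∈ A, a < m) (hh : h ∈ mapsWithBasin m A C)
    (hm : ∀ w ∈ insert m C, h m ≠ some w) (hind : IsAcyclic (inducedOn (A \ C) h)) :
    IsAcyclic h := by
  have acc_outside : ∀ v ∉ insert m C, Acc (fun w v ↦ h v = some w) v := by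
    intro v
    induction v using hind.induction with
    | _ v ih =>
      refine fun hv ↦ ⟨_, fun w hvw ↦ ?_⟩
      have hvA : v ∈ A \ C := by have := (mem_of_eq_some_of_mem_mapsWithBasin hh hvw).1; grind
      have hwA := mem_sdiff_of_eq_some_of_mem_mapsWithBasin hA hh hvA hvw
      have hwm := hA w (mem_sdiff.mp hwA).1
      exact ih w (inducedOn_eq_some_iff.mpr ⟨hvA, hvw, hwA⟩) (by grind)
  have acc_below : ∀ v, ReachesBelow h m v → Acc (fun w v ↦ h v = some w) v := by
    intro v hv
    induction hv with
    | refl => exact ⟨_, fun w hmw ↦ acc_outside w fun hw ↦ hm w hw hmw⟩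
    | step _ hvw _ ih => exact ⟨_, fun w' hvw' ↦ Option.some.inj (hvw.symm.trans hvw') ▸ ih⟩
  refine ⟨fun v ↦ ?_⟩
  by_cases hv : v ∈ insert m C
  · exact acc_below v (reachesBelow_of_mem_mapsWithBasin hh hv)
  · exact acc_outside v hv

theorem isAcyclic_iff_of_mem_mapsWithBasin (hA : ∀ a ∈ A, a < m)
    (hh : h ∈ mapsWithBasin m A C) :
    IsAcyclic h ↔
      (∀ w ∈ insert m C, h m ≠ some w) ∧ IsAcyclic (inducedOn (A \ C) h) :=
  ⟨fun hacyc ↦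
      ⟨fun _ hw hmw ↦ hacyc.not_reachesBelow hmw (reachesBelow_of_mem_mapsWithBasin hh hw),
        isAcyclic_inducedOn hacyc _⟩,
    fun ⟨hm, hind⟩ ↦ .of_mem_mapsWithBasin hA hh hm hind⟩

variable {o : Option α} {g h' : α → Option α}

theorem getD_mem_insert_of_mem_partialMapsOn (hg : g ∈ partialMapsOn C) :
    (g v).getD m ∈ insert m C := by
  cases hv : g v with
  | none => simp
  | some w => simp [(mem_partialMapsOn.mp hg v w hv).2]

theorem glue_mem_partialMapsOn (hC : C ⊆ A) (hmC : m ∉ C) (ho : o ∈ insertNone (insert m A))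
    (hg : g ∈ partialMapsOn C) (hh' : h' ∈ partialMapsOn (A \ C)) :
    glue m C (o, g, h') ∈ partialMapsOn (insert m A) := by
  refine mem_partialMapsOn.mpr fun v w hvw ↦ ?_
  rw [Option.mem_def] at hvw
  by_cases hvm : v = m
  · rw [hvm, glue_self] at hvw
    subst hvm hvw
    simpa using ho
  by_cases hvC : v ∈ C
  · rw [glue_of_mem hmC hvC, Option.some.injEq] at hvw
    have := getD_mem_insert_of_mem_partialMapsOn (v := v) (m := m) hg
    grind
  · rw [glue_of_notMem (by grind)] at hvw
    have := mem_partialMapsOn.mp hh' v w hvw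
    grind

theorem reachesBelow_glue (hA : ∀ a ∈ A, a < m) (hC : C ⊆ A) (hg : g ∈ forestsOn C)
    (hv : v ∈ C) : ReachesBelow (glue m C (o, g, h')) m v := by
  have hmC : m ∉ C := fun hm ↦ (hA m (hC hm)).false
  obtain ⟨hgC, hacyc⟩ := mem_forestsOn.mp hg
  induction v using hacyc.induction with
  | _ v ih =>
    refine .step (hA v (hC hv)) (glue_of_mem hmC hv) ?_
    cases hvw : g v with
    | none => exact .refl
    | some w => exact ih w hvw (mem_partialMapsOn.mp hgC v w hvw).2

theorem basin_glue (hA : ∀ a ∈ A, a < m) (hC : C ⊆ A) (hg : g ∈ forestsOn C)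
    (hh' : h' ∈ partialMapsOn (A \ C)) : basin (glue m C (o, g, h')) m = insert m C := by
  ext v
  rw [mem_basin]
  refine ⟨fun hv ↦ ?_, fun hv ↦ ?_⟩
  · induction hv with
    | refl => exact mem_insert_self m C
    | @step v w _ hvw _ ih =>
      by_contra hv
      rw [glue_of_notMem hv] at hvw
      have hw := mem_sdiff.mp (mem_partialMapsOn.mp hh' v w hvw).2
      have hwm := hA w hw.1
      grind
  · obtain rfl | hv := mem_insert.mp hv
    · exact .refl
    · exact reachesBelow_glue hA hC hg hv

theorem glue_inducedOn (hA : ∀ a ∈ A, a < m) (hC : C ⊆ A) (hh : h ∈ mapsWithBasin m A C) :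
    glue m C (h m, inducedOn C h, inducedOn (A \ C) h) = h := by
  have hmC : m ∉ C := fun hm ↦ (hA m (hC hm)).false
  funext v
  by_cases hvm : v = m
  · rw [hvm, glue_self]
  by_cases hvC : v ∈ C
  · rw [glue_of_mem hmC hvC]
    obtain ⟨w, hvw, hw⟩ := (mem_iff_exists_of_mem_mapsWithBasin hh (hA v (hC hvC))).mp hvC
    obtain rfl | hw := mem_insert.mp hw
    · simp [inducedOn, Option.filter, hvC, hvw, hmC]
    · simp [inducedOn, Option.filter, hvC, hvw, hw]
  · rw [glue_of_notMem (by grind)]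
    by_cases hvA : v ∈ A
    · exact inducedOn_sdiff_apply_of_mem_mapsWithBasin hA hh (mem_sdiff.mpr ⟨hvA, hvC⟩)
    · have hnone : h v = none := Option.eq_none_iff_forall_ne_some.mpr fun w hvw ↦ by
        have := (mem_of_eq_some_of_mem_mapsWithBasin hh hvw).1
        grind
      simp [inducedOn, hvA, hnone]

theorem inducedOn_glue (hmC : m ∉ C) (hg : g ∈ partialMapsOn C) :
    inducedOn C (glue m C (o, g, h')) = g := by
  funext v
  ext w
  simp only [inducedOn_eq_some_iff]
  constructor
  · rintro ⟨hv, hvw, hw⟩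
    rw [glue_of_mem hmC hv, Option.some.injEq] at hvw
    cases hgv : g v <;> grind
  · intro hvw
    obtain ⟨hv, hw⟩ := mem_partialMapsOn.mp hg v w hvw
    exact ⟨hv, by simp [glue_of_mem hmC hv, hvw], hw⟩

theorem inducedOn_sdiff_glue (hmA : m ∉ A) (hh' : h' ∈ partialMapsOn (A \ C)) :
    inducedOn (A \ C) (glue m C (o, g, h')) = h' := by
  have hglue (v : α) (hv : v ∈ A \ C) : glue m C (o, g, h') v = h' v :=
    glue_of_notMem (by grind)
  funext v
  ext w
  simp only [inducedOn_eq_some_iff]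
  constructor
  · rintro ⟨hv, hvw, -⟩
    rwa [hglue v hv] at hvw
  · intro hvw
    obtain ⟨hv, hw⟩ := mem_partialMapsOn.mp hh' v w hvw
    exact ⟨hv, (hglue v hv).trans hvw, hw⟩

theorem sum_mapsWithBasin {M : Type*} [AddCommMonoid M] (hA : ∀ a ∈ A, a < m) (hC : C ⊆ A)
    (φ : Option α → (α → Option α) → (α → Option α) → M) :
    ∑ h ∈ mapsWithBasin m A C, φ (h m) (inducedOn C h) (inducedOn (A \ C) h) =
      ∑ o ∈ insertNone (insert m A), ∑ g ∈ forestsOn C, ∑ h' ∈ partialMapsOn (A \ C),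
        φ o g h' := by
  have hmA : m ∉ A := fun hm ↦ (hA m hm).false
  have hmC : m ∉ C := fun hm ↦ hmA (hC hm)
  simp only [← sum_product']
  refine sum_nbij' (fun h ↦ (h m, inducedOn C h, inducedOn (A \ C) h)) (glue m C) ?_ ?_
    (fun h hh ↦ glue_inducedOn hA hC hh) ?_ (fun _ _ ↦ rfl)
  · intro h hh
    simp only [mem_product, mem_insertNone]
    exact ⟨fun w hw ↦ (mem_of_eq_some_of_mem_mapsWithBasin hh hw).2,
      inducedOn_mem_forestsOn_of_mem_mapsWithBasin hmC hh, inducedOn_mem_partialMapsOn _ _⟩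
  · rintro ⟨o, g, h'⟩ hp
    obtain ⟨ho, hg, hh'⟩ : o ∈ _ ∧ g ∈ _ ∧ h' ∈ _ := by simpa only [mem_product] using hp
    exact mem_mapsWithBasin.mpr
      ⟨glue_mem_partialMapsOn hC hmC ho (mem_forestsOn.mp hg).1 hh', basin_glue hA hC hg hh'⟩
  · rintro ⟨o, g, h'⟩ hp
    obtain ⟨-, hg, hh'⟩ : o ∈ _ ∧ g ∈ _ ∧ h' ∈ _ := by simpa only [mem_product] using hp
    rw [glue_self, inducedOn_glue hmC (mem_forestsOn.mp hg).1, inducedOn_sdiff_glue hmA hh']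

theorem sum_partialMapsOn_insert {M : Type*} [AddCommMonoid M] (hA : ∀ a ∈ A, a < m)
    (φ : (α → Option α) → M) :
    ∑ h ∈ partialMapsOn (insert m A), φ h =
      ∑ C ∈ A.powerset, ∑ h ∈ mapsWithBasin m A C, φ h := by
  have hmA : m ∉ A := fun hm ↦ (hA m hm).false
  have hself (h : α → Option α) : m ∈ basin h m := mem_basin.mpr .refl
  have hmaps : ∀ h ∈ partialMapsOn (insert m A), (basin h m).erase m ∈ A.powerset := by
    refine fun h hh ↦ mem_powerset.mpr fun v hv ↦ ?_
    obtain ⟨hvm, hv⟩ := mem_erase.mp hv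
    obtain rfl | ⟨-, w, hvw, -⟩ := reachesBelow_iff.mp (mem_basin.mp hv)
    · exact absurd rfl hvm
    · exact (mem_insert.mp (mem_partialMapsOn.mp hh v w hvw).1).resolve_left hvm
  rw [← sum_fiberwise_of_maps_to hmaps]
  refine sum_congr rfl fun C hC ↦ sum_congr (filter_congr fun h _ ↦ ?_) fun _ _ ↦ rfl
  exact erase_eq_iff_eq_insert (hself h) fun hm ↦ hmA (mem_powerset.mp hC hm)

theorem prod_card_basin_of_mem_mapsWithBasin (hA : ∀ a ∈ A, a < m) (hC : C ⊆ A)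
    (hh : h ∈ mapsWithBasin m A C) :
    ∏ k ∈ insert m A, #(basin h k) =
      (#C + 1) * (∏ k ∈ C, #(basin (inducedOn C h) k)) *
        ∏ k ∈ A \ C, #(basin (inducedOn (A \ C) h) k) := by
  have hmA : m ∉ A := fun hm ↦ (hA m hm).false
  have hmC : m ∉ C := fun hm ↦ hmA (hC hm)
  rw [prod_insert_of_subset hmA hC, (mem_mapsWithBasin.mp hh).2, card_insert_of_notMem hmC]
  congr 1
  · congr 1
    exact prod_congr rfl fun k hk ↦ by rw [basin_inducedOn_of_mem_mapsWithBasin hA hC hh hk]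
  · exact prod_congr rfl fun k hk ↦ by rw [basin_inducedOn_sdiff_of_mem_mapsWithBasin hA hh hk]

theorem prod_elim_of_mem_mapsWithBasin (hA : ∀ a ∈ A, a < m) (hC : C ⊆ A)
    (hh : h ∈ mapsWithBasin m A C) (N : ℕ) :
    ∏ k ∈ insert m A, (h k).elim N (fun _ ↦ 1) =
      (h m).elim N (fun _ ↦ 1) * ∏ k ∈ A \ C, (inducedOn (A \ C) h k).elim N (fun _ ↦ 1) := by
  rw [prod_insert_of_subset (fun hm ↦ (hA m hm).false) hC]
  congr 1
  · rw [prod_eq_one, mul_one]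
    intro k hk
    obtain ⟨w, hw, -⟩ := (mem_iff_exists_of_mem_mapsWithBasin hh (hA k (hC hk))).mp hk
    simp [hw]
  · exact prod_congr rfl fun k hk ↦ by rw [inducedOn_sdiff_apply_of_mem_mapsWithBasin hA hh hk]

theorem mapWeight_insert (hA : ∀ a ∈ A, a < m) (N : ℕ) :
    mapWeight N (insert m A) = ∑ C ∈ A.powerset,
      (N + #A + 1) * ((#C + 1) * forestWeight C) * mapWeight N (A \ C) := by
  have hroot : ∑ o ∈ insertNone (insert m A), o.elim N (fun _ ↦ 1) = N + #A + 1 := by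
    rw [sum_insertNone, Option.elim_none]
    simp [card_insert_of_notMem fun hm ↦ (hA m hm).false, add_assoc]
  simp only [mapWeight, sum_partialMapsOn_insert hA]
  refine sum_congr rfl fun C hC ↦ ?_
  have hCA := mem_powerset.mp hC
  calc
    _ = ∑ h ∈ mapsWithBasin m A C, (h m).elim N (fun _ ↦ 1) * ((#C + 1) *
          (∏ k ∈ C, #(basin (inducedOn C h) k)) * ∏ k ∈ A \ C,
            (inducedOn (A \ C) h k).elim N (fun _ ↦ 1) * #(basin (inducedOn (A \ C) h) k)) := by
      refine sum_congr rfl fun h hh ↦ ?_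
      rw [prod_mul_distrib, prod_mul_distrib, prod_elim_of_mem_mapsWithBasin hA hCA hh,
        prod_card_basin_of_mem_mapsWithBasin hA hCA hh]
      ring
    _ = _ := by
      rw [sum_mapsWithBasin hA hCA fun o g h' ↦ o.elim N (fun _ ↦ 1) * ((#C + 1) *
        (∏ k ∈ C, #(basin g k)) * ∏ k ∈ A \ C, (h' k).elim N (fun _ ↦ 1) * #(basin h' k))]
      simp only [← mul_sum, ← sum_mul, hroot, forestWeight]
      ring

theorem forestWeight_insert (hA : ∀ a ∈ A, a < m) :
    forestWeight (insert m A) = ∑ C ∈ A.powerset,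
      (#(A \ C) + 1) * ((#C + 1) * forestWeight C) * forestWeight (A \ C) := by
  classical
  simp only [forestWeight, forestsOn, sum_filter, sum_partialMapsOn_insert hA]
  refine sum_congr rfl fun C hC ↦ ?_
  have hCA := mem_powerset.mp hC
  have hroot : ∑ o ∈ insertNone (insert m A), (if ∀ w ∈ insert m C, o ≠ some w then 1 else 0) =
      #(A \ C) + 1 := by
    rw [← card_filter, ← card_insertNone]
    congr 1; ext o
    cases o with
    | none => simp
    | some w =>
      simp only [mem_filter, some_mem_insertNone, ne_eq, Option.some.injEq]
      grind
  calc
    _ = ∑ h ∈ mapsWithBasin m A C, (if ∀ w ∈ insert m C, h m ≠ some w then 1 else 0) *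
          ((#C + 1) * (∏ k ∈ C, #(basin (inducedOn C h) k)) *
            if IsAcyclic (inducedOn (A \ C) h) then
              ∏ k ∈ A \ C, #(basin (inducedOn (A \ C) h) k) else 0) := by
      refine sum_congr rfl fun h hh ↦ ?_
      rw [prod_card_basin_of_mem_mapsWithBasin hA hCA hh]
      simp only [isAcyclic_iff_of_mem_mapsWithBasin hA hh, ite_and]
      split_ifs <;> simp
    _ = _ := by
      rw [sum_mapsWithBasin hA hCA fun o g h' ↦ (if ∀ w ∈ insert m C, o ≠ some w then 1 else 0) *
        ((#C + 1) * (∏ k ∈ C, #(basin g k)) *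
          if IsAcyclic h' then ∏ k ∈ A \ C, #(basin h' k) else 0)]
      simp only [← mul_sum, ← sum_mul, hroot, forestsOn, sum_filter]
      ring

theorem partialMapsOn_empty : partialMapsOn (∅ : Finset α) = {fun _ ↦ none} := by
  ext h
  simp [mem_partialMapsOn, funext_iff, Option.eq_none_iff_forall_ne_some]

@[simp]
theorem mapWeight_empty (N : ℕ) : mapWeight N (∅ : Finset α) = 1 := by
  simp [mapWeight, partialMapsOn_empty]

@[simp]
theorem forestWeight_empty : forestWeight (∅ : Finset α) = 1 := by
  have hacyc : IsAcyclic fun _ : α ↦ (none : Option α) := ⟨fun _ ↦ ⟨_, fun _ hw ↦ by cases hw⟩⟩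
  simp [forestWeight, forestsOn, partialMapsOn_empty, filter_singleton, hacyc]

end SplitAtMax

section LagrangeInversion

open PowerSeries

variable {𝕜 : Type*} [Field 𝕜] [CharZero 𝕜]

/-- The formal power series `exp (a X)`. -/
noncomputable def scaledExp (a : 𝕜) : 𝕜⟦X⟧ := rescale a (exp 𝕜)

theorem scaledExp_mul_scaledExp (a b : 𝕜) :
    scaledExp a * scaledExp b = scaledExp (a + b) := exp_mul_exp_eq_exp_add a b

@[simp]
theorem scaledExp_zero : scaledExp (0 : 𝕜) = 1 := by simp [scaledExp]

theorem scaledExp_neg_mul_scaledExp (a : 𝕜) : scaledExp (-a) * scaledExp a = 1 := by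
  rw [scaledExp_mul_scaledExp, neg_add_cancel, scaledExp_zero]

theorem coeff_scaledExp (a : 𝕜) (k : ℕ) : coeff k (scaledExp a) = a ^ k / k.factorial := by
  simp [scaledExp, coeff_rescale, coeff_exp, div_eq_mul_inv]

@[simp]
theorem constantCoeff_scaledExp (a : 𝕜) : constantCoeff (scaledExp a) = 1 := by
  simp [← coeff_zero_eq_constantCoeff_apply, coeff_scaledExp]

theorem derivative_scaledExp (a : 𝕜) : d⁄dX 𝕜 (scaledExp a) = C a * scaledExp a := by
  ext k
  have hk : (k.factorial : 𝕜) ≠ 0 := mod_cast k.factorial_ne_zero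
  have hk' : (k + 1 : 𝕜) ≠ 0 := mod_cast k.succ_ne_zero
  rw [coeff_derivative, coeff_C_mul, coeff_scaledExp, coeff_scaledExp, Nat.factorial_succ]
  push_cast
  field_simp
  ring

/-- The coefficient of `z ^ m` in `F (T z)`, where `T` is the solution of `T = z * exp (a T)`, as
given by the Lagrange inversion formula. -/
noncomputable def lagrangeCoeff (a : 𝕜) (m : ℕ) (F : 𝕜⟦X⟧) : 𝕜 :=
  coeff m (F * scaledExp (a * m) * (1 - C a * X))

variable (a : 𝕜) (m : ℕ) (F G H : 𝕜⟦X⟧)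

theorem lagrangeCoeff_add :
    lagrangeCoeff a m (F + G) = lagrangeCoeff a m F + lagrangeCoeff a m G := by
  simp only [lagrangeCoeff, add_mul, map_add]

theorem lagrangeCoeff_C_mul (c : 𝕜) :
    lagrangeCoeff a m (C c * F) = c * lagrangeCoeff a m F := by
  simp only [lagrangeCoeff, mul_assoc, coeff_C_mul]

@[simp]
theorem lagrangeCoeff_zero : lagrangeCoeff a 0 F = constantCoeff F := by simp [lagrangeCoeff]

theorem scaledExp_mul_succ : scaledExp (a * (m + 1 : ℕ)) = scaledExp a * scaledExp (a * m) := by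
  rw [scaledExp_mul_scaledExp]
  congr 1
  push_cast
  ring

-- `X * scaledExp (-a)` is the compositional inverse of `T`, so it represents the factor `z`.
theorem lagrangeCoeff_succ_X_mul :
    lagrangeCoeff a (m + 1) (X * scaledExp (-a) * F) = lagrangeCoeff a m F := by
  have hseries : X * scaledExp (-a) * F * scaledExp (a * (m + 1 : ℕ)) * (1 - C a * X) =
      X * (F * scaledExp (a * m) * (1 - C a * X)) := by
    rw [scaledExp_mul_succ]
    linear_combination X * F * scaledExp (a * m) * (1 - C a * X) * scaledExp_neg_mul_scaledExp a
  rw [lagrangeCoeff, hseries, coeff_succ_X_mul, lagrangeCoeff]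

theorem lagrangeCoeff_succ_one : lagrangeCoeff a (m + 1) 1 = 0 := by
  have hm : (m.factorial : 𝕜) ≠ 0 := mod_cast m.factorial_ne_zero
  have hm' : (m + 1 : 𝕜) ≠ 0 := mod_cast m.succ_ne_zero
  rw [lagrangeCoeff, one_mul, mul_sub, mul_one, map_sub, mul_left_comm, coeff_C_mul,
    coeff_succ_mul_X, coeff_scaledExp, coeff_scaledExp, Nat.factorial_succ]
  push_cast
  field_simp
  ring

theorem exists_eq_C_add_X_mul_scaledExp_mul :
    ∃ F₁, F = C (constantCoeff F) + X * scaledExp (-a) * F₁ := by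
  obtain ⟨F₁, hF₁⟩ : X ∣ F - C (constantCoeff F) := by simp [X_dvd_iff]
  refine ⟨scaledExp a * F₁, ?_⟩
  linear_combination hF₁ - X * F₁ * scaledExp_neg_mul_scaledExp a

theorem lagrangeCoeff_mul :
    lagrangeCoeff a m (F * G) =
      ∑ p ∈ antidiagonal m, lagrangeCoeff a p.1 F * lagrangeCoeff a p.2 G := by
  induction m generalizing F with
  | zero => simp
  | succ m ih =>
    obtain ⟨F₁, hF⟩ := exists_eq_C_add_X_mul_scaledExp_mul a F
    have hshift (i : ℕ) : lagrangeCoeff a (i + 1) F = lagrangeCoeff a i F₁ := by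
      rw [hF, lagrangeCoeff_add, lagrangeCoeff_succ_X_mul, ← mul_one (C _), lagrangeCoeff_C_mul,
        lagrangeCoeff_succ_one, mul_zero, zero_add]
    rw [Nat.sum_antidiagonal_succ]
    simp only [hshift]
    rw [← ih, lagrangeCoeff_zero]
    conv_lhs => rw [hF]
    rw [add_mul, lagrangeCoeff_add, lagrangeCoeff_C_mul, mul_assoc, lagrangeCoeff_succ_X_mul]

variable {a F H}

-- The hypothesis says that `H (T z)` is the derivative of `F (T z)`, since
-- `T' = exp (a T) / (1 - a T)`.
theorem succ_mul_lagrangeCoeff_succ (hH : H * (1 - C a * X) = d⁄dX 𝕜 F * scaledExp a) :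
    (m + 1) * lagrangeCoeff a (m + 1) F = lagrangeCoeff a m H := by
  have hderiv : coeff m (d⁄dX 𝕜 (F * scaledExp (a * (m + 1 : ℕ)))) =
      lagrangeCoeff a m H + a * (m + 1) * coeff m (F * scaledExp (a * (m + 1 : ℕ))) := by
    have hseries : d⁄dX 𝕜 (F * scaledExp (a * (m + 1 : ℕ))) =
        H * scaledExp (a * m) * (1 - C a * X) +
          C (a * (m + 1 : ℕ)) * (F * scaledExp (a * (m + 1 : ℕ))) := by
      rw [Derivation.leibniz, derivative_scaledExp, smul_eq_mul, smul_eq_mul, scaledExp_mul_succ]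
      linear_combination -scaledExp (a * m) * hH
    rw [hseries, map_add, coeff_C_mul, lagrangeCoeff, Nat.cast_succ]
  rw [coeff_derivative] at hderiv
  rw [lagrangeCoeff, mul_sub, mul_one, map_sub, mul_left_comm, coeff_C_mul, coeff_succ_mul_X]
  linear_combination hderiv

theorem natCast_mul_lagrangeCoeff (hH : H * (1 - C a * X) = d⁄dX 𝕜 F * scaledExp a) :
    m * lagrangeCoeff a m F = lagrangeCoeff a m (X * scaledExp (-a) * H) := by
  cases m with
  | zero => simp
  | succ m => rw [lagrangeCoeff_succ_X_mul, ← succ_mul_lagrangeCoeff_succ m hH, Nat.cast_succ]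

end LagrangeInversion

section GeneratingFunctions

open PowerSeries

theorem C_two (R : Type*) [Semiring R] : C (2 : R) = 2 := map_ofNat C 2

variable (𝕜 : Type*) [Field 𝕜] [CharZero 𝕜]

/-- The coefficients of the exponential generating function `exp (2 T) * (1 - T)` of
`forestWeight`, where `T = z * exp (2 T)`. -/
noncomputable def forestCoeff (i : ℕ) : 𝕜 := lagrangeCoeff 2 i (scaledExp 2 * (1 - X))

/-- The series `G` for which `G (T z)`, where `T = z * exp (2 T)`, is the exponential generating
function of `mapWeight (K + 1)`. -/
noncomputable def mapSeries (K : ℕ) : 𝕜⟦X⟧ := scaledExp (2 * (K + 1) : 𝕜) * (1 - X) ^ K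

/-- The coefficients of the exponential generating function of `mapWeight (K + 1)`. -/
noncomputable def mapCoeff (K i : ℕ) : 𝕜 := lagrangeCoeff 2 i (mapSeries 𝕜 K)

@[simp]
theorem forestCoeff_zero : forestCoeff 𝕜 0 = 1 := by simp [forestCoeff]

@[simp]
theorem mapCoeff_zero (K : ℕ) : mapCoeff 𝕜 K 0 = 1 := by simp [mapCoeff, mapSeries]

theorem derivative_forestSeries :
    scaledExp 4 * (1 - C 2 * X) = d⁄dX 𝕜 (scaledExp 2 * (1 - X)) * scaledExp 2 := by
  have hfour : scaledExp (4 : 𝕜) = scaledExp 2 * scaledExp 2 := by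
    rw [scaledExp_mul_scaledExp]
    norm_num
  rw [Derivation.leibniz, derivative_scaledExp, smul_eq_mul, smul_eq_mul, map_sub, derivative_X,
    derivative_one, hfour, C_two 𝕜]
  ring

theorem succ_mul_forestCoeff (i : ℕ) :
    (i + 1) * forestCoeff 𝕜 i = lagrangeCoeff 2 i (scaledExp 2) := by
  have hexp : scaledExp (-2 : 𝕜) * scaledExp 4 = scaledExp 2 := by
    rw [scaledExp_mul_scaledExp]
    norm_num
  rw [add_mul, one_mul, forestCoeff, natCast_mul_lagrangeCoeff i (derivative_forestSeries 𝕜),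
    ← lagrangeCoeff_add]
  congr 1
  linear_combination X * hexp

theorem succ_mul_forestCoeff_succ (k : ℕ) :
    (k + 1) * forestCoeff 𝕜 (k + 1) = ∑ p ∈ antidiagonal k,
      (p.1 + 1) * forestCoeff 𝕜 p.1 * ((p.2 + 1) * forestCoeff 𝕜 p.2) := by
  simp only [succ_mul_forestCoeff]
  rw [← lagrangeCoeff_mul, forestCoeff,
    succ_mul_lagrangeCoeff_succ k (derivative_forestSeries 𝕜), scaledExp_mul_scaledExp]
  norm_num

theorem derivative_mapSeries (K : ℕ) :
    d⁄dX 𝕜 (mapSeries 𝕜 K) * (1 - X) =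
      mapSeries 𝕜 K * ((K : 𝕜⟦X⟧) + 2 - 2 * ((K : 𝕜⟦X⟧) + 1) * X) := by
  have hC : C (2 * (K + 1) : 𝕜) = 2 * (K + 1) := by simp [C_two 𝕜]
  have hpow : d⁄dX 𝕜 ((1 - X : 𝕜⟦X⟧) ^ K) * (1 - X) =
      -(K : 𝕜⟦X⟧) * (1 - X) ^ K := by
    cases K with
    | zero => simp
    | succ K =>
      rw [derivative_pow, map_sub, derivative_X, derivative_one, Nat.add_sub_cancel]
      ring
  rw [mapSeries, Derivation.leibniz, derivative_scaledExp, smul_eq_mul, smul_eq_mul, hC]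
  linear_combination scaledExp (2 * (K + 1) : 𝕜) * hpow

theorem succ_mul_mapCoeff_succ (K k : ℕ) :
    (k + 1) * mapCoeff 𝕜 K (k + 1) = (K + 1 + k + 1) * ∑ p ∈ antidiagonal k,
      (p.1 + 1) * forestCoeff 𝕜 p.1 * mapCoeff 𝕜 K p.2 := by
  simp only [succ_mul_forestCoeff, mapCoeff]
  rw [← lagrangeCoeff_mul]
  set G := mapSeries 𝕜 K
  set u : 𝕜⟦X⟧ := (1 - C 2 * X)⁻¹
  have hu : u * (1 - C 2 * X) = 1 := PowerSeries.inv_mul_cancel _ (by simp)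
  have hC : C (K + 2 : 𝕜) = K + 2 := by simp [C_two 𝕜]
  have hseries : d⁄dX 𝕜 G * scaledExp 2 * u =
      C (K + 2 : 𝕜) * (scaledExp 2 * G) +
        X * scaledExp (-2) * (d⁄dX 𝕜 (scaledExp 2 * G) * scaledExp 2 * u) := by
    rw [Derivation.leibniz, derivative_scaledExp, smul_eq_mul, smul_eq_mul, hC]
    rw [C_two] at hu ⊢
    linear_combination (scaledExp 2 * u) * derivative_mapSeries 𝕜 K +
      (K + 2 : 𝕜⟦X⟧) * scaledExp 2 * G * hu -
      X * u * (scaledExp 2 * d⁄dX 𝕜 G + G * (2 * scaledExp 2)) *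
        scaledExp_neg_mul_scaledExp (2 : 𝕜)
  calc
    _ = lagrangeCoeff 2 k (d⁄dX 𝕜 G * scaledExp 2 * u) :=
      succ_mul_lagrangeCoeff_succ k (by rw [mul_assoc _ u, hu, mul_one])
    _ = (K + 2 : 𝕜) * lagrangeCoeff 2 k (scaledExp 2 * G) +
          k * lagrangeCoeff 2 k (scaledExp 2 * G) := by
      rw [natCast_mul_lagrangeCoeff k (H := d⁄dX 𝕜 (scaledExp 2 * G) * scaledExp 2 * u)
        (by rw [mul_assoc _ u, hu, mul_one]), hseries, lagrangeCoeff_add, lagrangeCoeff_C_mul]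
    _ = _ := by ring

end GeneratingFunctions

section ClosedForm

theorem sum_powerset_factorial_mul {α R : Type*} [DecidableEq α] [CommSemiring R]
    (A : Finset α) (f g : ℕ → R) :
    ∑ C ∈ A.powerset, ((#C).factorial * f #C) * ((#(A \ C)).factorial * g #(A \ C)) =
      (#A).factorial * ∑ p ∈ antidiagonal #A, f p.1 * g p.2 := by
  calc
    _ = ∑ C ∈ A.powerset, (fun i ↦ (i.factorial * f i) *
          ((#A - i).factorial * g (#A - i))) #C :=
      sum_congr rfl fun C hC ↦ by simp only [card_sdiff_of_subset (mem_powerset.mp hC)]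
    _ = _ := by
      rw [sum_powerset_apply_card (fun i ↦ (i.factorial * f i) *
        ((#A - i).factorial * g (#A - i))), Nat.sum_antidiagonal_eq_sum_range_succ_mk, mul_sum]
      refine sum_congr rfl fun i hi ↦ ?_
      rw [← Nat.choose_mul_factorial_mul_factorial (mem_range_succ_iff.mp hi), nsmul_eq_mul]
      push_cast
      ring

theorem induction_on_insert_max {α : Type*} [LinearOrder α] {P : Finset α → Prop}
    (A : Finset α) (empty : P ∅)
    (insert : ∀ (m : α) (A : Finset α), (∀ a ∈ A, a < m) → (∀ C ⊆ A, P C) → P (insert m A)) :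
    P A := by
  induction A using Finset.strongInduction with
  | _ A ih =>
    obtain rfl | hA := A.eq_empty_or_nonempty
    · exact empty
    · rw [← insert_erase (A.max'_mem hA)]
      exact insert _ _ (fun a ha ↦ A.lt_max'_of_mem_erase_max' hA ha) fun C hC ↦
        ih C (hC.trans_ssubset (erase_ssubset (A.max'_mem hA)))

variable {α : Type*} [LinearOrder α] [Fintype α] (𝕜 : Type*) [Field 𝕜] [CharZero 𝕜]

theorem forestWeight_eq_factorial_mul_forestCoeff (A : Finset α) :
    (forestWeight A : 𝕜) = (#A).factorial * forestCoeff 𝕜 #A := by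
  induction A using induction_on_insert_max with
  | empty => simp
  | insert m A hA ih =>
    have hterm : ∀ C ∈ A.powerset,
        (#(A \ C) + 1 : 𝕜) * ((#C + 1) * forestWeight C) * forestWeight (A \ C) =
          (#C).factorial * ((#C + 1) * forestCoeff 𝕜 #C) *
            ((#(A \ C)).factorial * ((#(A \ C) + 1) * forestCoeff 𝕜 #(A \ C))) := by
      intro C hC
      rw [ih C (mem_powerset.mp hC), ih (A \ C) sdiff_subset]
      ring
    rw [forestWeight_insert hA, card_insert_of_notMem fun hm ↦ (hA m hm).false,
      Nat.factorial_succ]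
    push_cast
    rw [sum_congr rfl hterm, sum_powerset_factorial_mul A
      (fun i ↦ (i + 1) * forestCoeff 𝕜 i) (fun i ↦ (i + 1) * forestCoeff 𝕜 i),
      ← succ_mul_forestCoeff_succ]
    ring

theorem mapWeight_succ_eq_factorial_mul_mapCoeff (K : ℕ) (A : Finset α) :
    (mapWeight (K + 1) A : 𝕜) = (#A).factorial * mapCoeff 𝕜 K #A := by
  induction A using induction_on_insert_max with
  | empty => simp
  | insert m A hA ih =>
    have hterm : ∀ C ∈ A.powerset,
        (K + 1 + #A + 1 : 𝕜) * ((#C + 1) * forestWeight C) * mapWeight (K + 1) (A \ C) =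
          (K + 1 + #A + 1) * ((#C).factorial * ((#C + 1) * forestCoeff 𝕜 #C) *
            ((#(A \ C)).factorial * mapCoeff 𝕜 K #(A \ C))) := by
      intro C _
      rw [forestWeight_eq_factorial_mul_forestCoeff, ih (A \ C) sdiff_subset]
      ring
    rw [mapWeight_insert hA, card_insert_of_notMem fun hm ↦ (hA m hm).false, Nat.factorial_succ]
    push_cast
    rw [sum_congr rfl hterm, ← mul_sum, sum_powerset_factorial_mul A
      (fun i ↦ (i + 1) * forestCoeff 𝕜 i)]
    linear_combination -(#A).factorial * succ_mul_mapCoeff_succ 𝕜 K #A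

end ClosedForm

section CoefficientIntegral

open PowerSeries Complex MeasureTheory

/-- The power series `F` converges absolutely on all of `ℂ`, with sum `g`. -/
def HasEntireSum (F : ℂ⟦X⟧) (g : ℂ → ℂ) : Prop :=
  ∀ w, (Summable fun k ↦ ‖coeff k F * w ^ k‖) ∧ HasSum (fun k ↦ coeff k F * w ^ k) (g w)

theorem hasEntireSum_scaledExp (a : ℂ) : HasEntireSum (scaledExp a) fun w ↦ exp (a * w) := by
  intro w
  have hterm (k : ℕ) : coeff k (scaledExp a) * w ^ k = (a * w) ^ k / k.factorial := by
    rw [coeff_scaledExp, mul_pow]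
    ring
  simp only [hterm, exp_eq_exp_ℂ]
  exact ⟨NormedSpace.norm_expSeries_div_summable _, NormedSpace.expSeries_div_hasSum_exp _⟩

theorem hasEntireSum_coe (p : Polynomial ℂ) : HasEntireSum (p : ℂ⟦X⟧) fun w ↦ p.eval w := by
  intro w
  have hterm : ∀ k ∉ p.support, coeff k (p : ℂ⟦X⟧) * w ^ k = 0 := fun k hk ↦ by
    rw [Polynomial.coeff_coe, Polynomial.notMem_support_iff.mp hk, zero_mul]
  refine
    ⟨summable_of_ne_finset_zero (s := p.support) fun k hk ↦ by rw [hterm k hk, norm_zero], ?_⟩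
  simpa only [Polynomial.coeff_coe, Polynomial.eval_eq_sum, Polynomial.sum] using
    hasSum_sum_of_ne_finset_zero hterm

theorem HasEntireSum.mul {F G : ℂ⟦X⟧} {f g : ℂ → ℂ} (hF : HasEntireSum F f)
    (hG : HasEntireSum G g) : HasEntireSum (F * G) fun w ↦ f w * g w := by
  intro w
  have hterm (k : ℕ) : coeff k (F * G) * w ^ k =
      ∑ p ∈ antidiagonal k, coeff p.1 F * w ^ p.1 * (coeff p.2 G * w ^ p.2) := by
    rw [coeff_mul, sum_mul]
    refine sum_congr rfl fun p hp ↦ ?_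
    rw [← mem_antidiagonal.mp hp, pow_add]
    ring
  have hsummable := summable_norm_sum_mul_antidiagonal_of_summable_norm (hF w).1 (hG w).1
  simp only [hterm]
  refine ⟨hsummable, ?_⟩
  rw [← (hF w).2.tsum_eq, ← (hG w).2.tsum_eq,
    tsum_mul_tsum_eq_tsum_sum_antidiagonal_of_summable_norm (hF w).1 (hG w).1]
  exact hsummable.of_norm.hasSum

theorem integral_exp_int_mul_I (k : ℤ) :
    ∫ θ in -Real.pi..Real.pi, exp (k * (θ * I)) = if k = 0 then 2 * (Real.pi : ℂ) else 0 := by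
  split_ifs with hk
  · simp only [hk, Int.cast_zero, zero_mul, exp_zero, intervalIntegral.integral_const,
      sub_neg_eq_add, ← two_mul, real_smul, mul_one]
    push_cast
    ring
  · have hkI : (k * I : ℂ) ≠ 0 := by simp [hk]
    have hperiod : exp (k * I * Real.pi) = exp (k * I * (-Real.pi : ℝ)) := by
      rw [exp_eq_exp_iff_exists_int]
      exact ⟨k, by push_cast; ring⟩
    have hcongr (θ : ℝ) : (k * (θ * I) : ℂ) = k * I * θ := by ring
    simp only [hcongr]
    rw [integral_exp_mul_complex hkI, hperiod, sub_self, zero_div]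

theorem norm_exp_neg_natCast_mul_I (m : ℕ) (θ : ℝ) : ‖exp (-(m * (θ * I)))‖ = 1 := by
  rw [← norm_exp_ofReal_mul_I (-(m * θ))]
  congr 2
  push_cast
  ring

theorem integral_monomial_mul_exp (c : ℂ) (R : ℝ) (k m : ℕ) :
    ∫ θ in -Real.pi..Real.pi, c * (R * exp (θ * I)) ^ k * exp (-(m * (θ * I))) =
      if k = m then 2 * (Real.pi : ℂ) * (R ^ m * c) else 0 := by
  have hcongr (θ : ℝ) : c * (R * exp (θ * I)) ^ k * exp (-(m * (θ * I))) =
      c * R ^ k * exp (((k - m : ℤ) : ℂ) * (θ * I)) := by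
    rw [mul_pow, ← exp_nat_mul, mul_assoc, mul_assoc, ← exp_add, ← mul_assoc]
    congr 2
    push_cast
    ring
  simp only [hcongr]
  rw [intervalIntegral.integral_const_mul, integral_exp_int_mul_I]
  simp only [sub_eq_zero, Nat.cast_inj]
  split_ifs with hkm
  · rw [hkm]
    ring
  · rw [mul_zero]

theorem HasEntireSum.integral_mul_exp {F : ℂ⟦X⟧} {g : ℂ → ℂ} (hF : HasEntireSum F g) (R : ℝ)
    (m : ℕ) :
    ∫ θ in -Real.pi..Real.pi, g (R * exp (θ * I)) * exp (-(m * (θ * I))) =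
      2 * Real.pi * (R ^ m * coeff m F) := by
  have hsum : HasSum
      (fun k ↦ ∫ θ in -Real.pi..Real.pi,
        coeff k F * (R * exp (θ * I)) ^ k * exp (-(m * (θ * I))))
      (∫ θ in -Real.pi..Real.pi, g (R * exp (θ * I)) * exp (-(m * (θ * I)))) := by
    refine intervalIntegral.hasSum_integral_of_dominated_convergence
      (fun k _ ↦ ‖coeff k F * (R : ℂ) ^ k‖) (fun k ↦ ?_) (fun k ↦ ?_) ?_ ?_ ?_
    · exact Continuous.aestronglyMeasurable (by fun_prop)
    · refine .of_forall fun θ _ ↦ le_of_eq ?_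
      rw [norm_mul, norm_exp_neg_natCast_mul_I, mul_pow, ← mul_assoc, norm_mul, norm_pow,
        norm_exp_ofReal_mul_I, one_pow, mul_one, mul_one]
    · exact .of_forall fun _ _ ↦ (hF R).1
    · simp
    · exact .of_forall fun _ _ ↦ (hF _).2.mul_right _
  simp only [integral_monomial_mul_exp] at hsum
  exact (hsum.unique (hasSum_single m fun k hk ↦ if_neg hk)).trans (if_pos rfl)

end CoefficientIntegral

section ExactFormula

open PowerSeries Complex Stirling

theorem MCount_eq_coeff (𝕜 : Type*) [Field 𝕜] [CharZero 𝕜] {n m : ℕ} (hmn : m < n) :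
    (MCount n m : 𝕜) = n.descFactorial m * n ^ (n - m) * m.factorial *
      coeff m (scaledExp (2 * n : 𝕜) * ((1 - X) ^ (n - m - 1) * (1 - C 2 * X))) := by
  obtain ⟨K, rfl⟩ := Nat.exists_eq_add_of_lt hmn
  have hK : m + K + 1 - m = K + 1 := by omega
  have hexp : scaledExp (2 * (m + K + 1 : ℕ) : 𝕜) =
      scaledExp (2 * (K + 1) : 𝕜) * scaledExp (2 * m : 𝕜) := by
    rw [scaledExp_mul_scaledExp]
    congr 1
    push_cast
    ring
  rw [MCount_eq, hK, Nat.add_sub_cancel]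
  push_cast [mapWeight_succ_eq_factorial_mul_mapCoeff 𝕜, card_univ, Fintype.card_fin]
  push_cast at hexp
  rw [mapCoeff, lagrangeCoeff, mapSeries, hexp]
  ring_nf

/-- The integrand of Cauchy's formula for the coefficient of `w ^ m` in
`exp (2 n w) * (1 - w) ^ (n - m - 1) * (1 - 2 w)` on the circle `w = m / n * exp (I θ)` through the
saddle point, normalised so that its first two factors are `1` at `θ = 0`. -/
noncomputable def saddleIntegrand (n m : ℕ) (θ : ℝ) : ℂ :=
  exp (2 * m * (exp (θ * I) - 1) - m * (θ * I)) *
    ((1 - (m / n : ℝ) * exp (θ * I)) / (1 - (m / n : ℝ))) ^ (n - m) *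
    ((1 - 2 * ((m / n : ℝ) * exp (θ * I))) / (1 - (m / n : ℝ) * exp (θ * I)))

theorem one_sub_mul_exp_ne_zero {r : ℝ} (h0 : 0 ≤ r) (h1 : r < 1) (θ : ℝ) :
    1 - r * exp (θ * I) ≠ 0 := by
  intro h
  have hnorm : ‖r * exp (θ * I)‖ = 1 := by rw [← sub_eq_zero.mp h, norm_one]
  rw [norm_mul, norm_exp_ofReal_mul_I, mul_one, norm_real, Real.norm_of_nonneg h0] at hnorm
  exact h1.ne hnorm

theorem integrand_eq_mul_saddleIntegrand {n m : ℕ} (hmn : m < n) (θ : ℝ) :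
    exp (2 * n * ((m / n : ℝ) * exp (θ * I))) *
        ((1 - (m / n : ℝ) * exp (θ * I)) ^ (n - m - 1) *
          (1 - 2 * ((m / n : ℝ) * exp (θ * I)))) * exp (-(m * (θ * I))) =
      (Real.exp (2 * m) * (1 - m / n) ^ (n - m) : ℝ) * saddleIntegrand n m θ := by
  have hn : (0 : ℝ) < n := mod_cast hmn.pos
  have hr : (m / n : ℝ) < 1 := (div_lt_one hn).mpr (mod_cast hmn)
  have hexp : exp (2 * m * (exp (θ * I) - 1) - m * (θ * I)) * exp (2 * m) =
      exp (2 * n * ((m / n : ℝ) * exp (θ * I))) * exp (-(m * (θ * I))) := by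
    have hn' : (n : ℂ) ≠ 0 := mod_cast hn.ne'
    rw [← exp_add, ← exp_add]
    congr 1
    push_cast
    field_simp
    ring
  have hne := one_sub_mul_exp_ne_zero (by positivity) hr θ
  have hne' : (1 - (m / n : ℝ) : ℂ) ^ (n - m) ≠ 0 :=
    pow_ne_zero _ (sub_ne_zero.mpr (mod_cast hr.ne'))
  have hpow : (1 - (m / n : ℝ) * exp (θ * I)) ^ (n - m) =
      (1 - (m / n : ℝ) * exp (θ * I)) ^ (n - m - 1) * (1 - (m / n : ℝ) * exp (θ * I)) := by
    rw [← pow_succ, Nat.sub_add_cancel (Nat.sub_pos_of_lt hmn)]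
  have hcast : ((Real.exp (2 * m) * (1 - m / n) ^ (n - m) : ℝ) : ℂ) =
      exp (2 * m) * (1 - (m / n : ℝ)) ^ (n - m) := by push_cast; rfl
  rw [saddleIntegrand, div_pow, hpow, hcast, mul_right_comm, ← hexp]
  generalize (1 - (m / n : ℝ) : ℂ) ^ (n - m) = d at hne' ⊢
  generalize exp (2 * m * (exp (θ * I) - 1) - m * (θ * I)) = c
  field_simp

theorem coeff_eq_integral_saddleIntegrand {n m : ℕ} (hmn : m < n) :
    2 * Real.pi * ((m / n : ℝ) ^ m *
        coeff m (scaledExp (2 * n : ℂ) * ((1 - X) ^ (n - m - 1) * (1 - C 2 * X)))) =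
      (Real.exp (2 * m) * (1 - m / n) ^ (n - m) : ℝ) *
        ∫ θ in -Real.pi..Real.pi, saddleIntegrand n m θ := by
  let p : Polynomial ℂ := (1 - Polynomial.X) ^ (n - m - 1) * (1 - Polynomial.C 2 * Polynomial.X)
  have hp : (p : ℂ⟦X⟧) = (1 - X) ^ (n - m - 1) * (1 - C 2 * X) := by simp [p]
  have heval (w : ℂ) : p.eval w = (1 - w) ^ (n - m - 1) * (1 - 2 * w) := by simp [p]
  have hentire := (hasEntireSum_scaledExp (2 * n)).mul (hasEntireSum_coe p)
  rw [← hp, ← hentire.integral_mul_exp, ← intervalIntegral.integral_const_mul]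
  simp only [heval, integrand_eq_mul_saddleIntegrand hmn]

theorem descFactorial_mul_factorial_eq_stirlingSeq {n m : ℕ} (hm : 0 < m) (hmn : m < n) :
    n.descFactorial m * m.factorial * (Real.exp (2 * m) * (1 - m / n) ^ (n - m)) /
        (n ^ (2 * m) * (m / n) ^ m) =
      stirlingSeq n * stirlingSeq m / stirlingSeq (n - m) * √(2 * n * m / (n - m)) := by
  obtain ⟨k, rfl⟩ := Nat.exists_eq_add_of_le hmn.le
  have hk : (0 : ℝ) < k := by
    have : 0 < k := by omega
    exact_mod_cast this
  have hdesc : ((m + k).factorial : ℝ) = k.factorial * (m + k).descFactorial m := by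
    rw [← Nat.factorial_mul_descFactorial hmn.le, Nat.add_sub_cancel_left, Nat.cast_mul]
  have hsqrt : √(2 * (m + k) * m / k) = √(2 * (m + k)) * √(2 * m) / √(2 * k) := by
    rw [← Real.sqrt_mul (by positivity), ← Real.sqrt_div (by positivity)]
    congr 1
    field_simp
  have hexp : Real.exp (2 * m) * Real.exp 1 ^ k = Real.exp 1 ^ (m + k) * Real.exp 1 ^ m := by
    rw [← Real.exp_nat_mul, ← Real.exp_nat_mul, ← Real.exp_nat_mul, ← Real.exp_add,
      ← Real.exp_add]
    congr 1
    push_cast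
    ring
  have hsub : 1 - (m : ℝ) / (m + k) = k / (m + k) := by field_simp; ring
  have hkfac : (k.factorial : ℝ) ≠ 0 := mod_cast k.factorial_ne_zero
  have hn_sqrt : √(2 * (m + k) : ℝ) ≠ 0 := by positivity
  have hm_sqrt : √(2 * m : ℝ) ≠ 0 := by positivity
  have hk_sqrt : √(2 * k : ℝ) ≠ 0 := by positivity
  rw [Nat.add_sub_cancel_left]
  push_cast
  rw [add_sub_cancel_left, hsqrt, hsub]
  simp only [stirlingSeq, hdesc, div_pow, Nat.cast_add]
  field_simp
  linear_combination ((m + k : ℝ) ^ (m * 2) * (m + k) ^ k) * hexp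

theorem MCount_div_eq_integral {n m : ℕ} (hm : 0 < m) (hmn : m < n) :
    (MCount n m / n ^ (n + m) : ℂ) =
      (stirlingSeq n * stirlingSeq m / stirlingSeq (n - m) * √(2 * n * m / (n - m)) /
          (2 * Real.pi) : ℝ) * ∫ θ in -Real.pi..Real.pi, saddleIntegrand n m θ := by
  have hn : (n : ℂ) ≠ 0 := mod_cast hmn.pos.ne'
  have hr : (m / n : ℂ) ≠ 0 := div_ne_zero (mod_cast hm.ne') hn
  have hpi : (Real.pi : ℂ) ≠ 0 := mod_cast Real.pi_ne_zero
  have hpow : (n : ℂ) ^ (n + m) = n ^ (n - m) * n ^ (2 * m) := by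
    rw [← pow_add]
    congr 1
    omega
  rw [← descFactorial_mul_factorial_eq_stirlingSeq hm hmn, MCount_eq_coeff ℂ hmn, hpow]
  have hcoeff := coeff_eq_integral_saddleIntegrand hmn
  generalize ∫ θ in -Real.pi..Real.pi, saddleIntegrand n m θ = J at hcoeff ⊢
  generalize coeff m (scaledExp (2 * n : ℂ) * ((1 - X) ^ (n - m - 1) * (1 - C 2 * X))) = c
    at hcoeff ⊢
  push_cast at hcoeff ⊢
  generalize (m / n : ℂ) = r at hcoeff hr ⊢
  field_simp
  linear_combination n.descFactorial m * m.factorial * hcoeff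

end ExactFormula

section LaplaceMethod

open MeasureTheory Topology

theorem tendsto_sqrt_natCast_atTop : Tendsto (fun n : ℕ ↦ √(n : ℝ)) atTop atTop :=
  Real.tendsto_sqrt_atTop.comp tendsto_natCast_atTop_atTop

variable {E : Type*} [NormedAddCommGroup E]

theorem norm_indicator_comp_div_sqrt_le {h : ℝ → E} {δ κ C : ℝ} (hδ : 0 ≤ δ) {n : ℕ} (hn : 0 < n)
    (hbound : ∀ θ, |θ| ≤ δ → ‖h θ‖ ≤ C * Real.exp (-κ * (n * θ ^ 2))) (t : ℝ) :
    ‖(Set.Ioc (-δ * √n) (δ * √n)).indicator (fun t ↦ h (t / √n)) t‖ ≤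
      C * Real.exp (-κ * t ^ 2) := by
  have hs : 0 < √(n : ℝ) := by positivity
  have hC : 0 ≤ C := by simpa using (norm_nonneg _).trans (hbound 0 (by simpa))
  by_cases ht : t ∈ Set.Ioc (-δ * √n) (δ * √n)
  · have habs : |t / √n| ≤ δ := by
      rw [abs_div, abs_of_pos hs, div_le_iff₀ hs, abs_le, ← neg_mul]
      exact ⟨ht.1.le, ht.2⟩
    have hsq : n * (t / √n) ^ 2 = t ^ 2 := by
      rw [div_pow, Real.sq_sqrt n.cast_nonneg, mul_div_cancel₀ _ (by positivity)]
    rw [Set.indicator_of_mem ht]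
    simpa only [hsq] using hbound _ habs
  · rw [Set.indicator_of_notMem ht, norm_zero]
    positivity

variable [NormedSpace ℝ E]

theorem sqrt_smul_intervalIntegral_eq_integral_indicator (h : ℝ → E) {δ : ℝ} (hδ : 0 ≤ δ) {n : ℕ}
    (hn : 0 < n) :
    √(n : ℝ) • ∫ θ in -δ..δ, h θ =
      ∫ t, (Set.Ioc (-δ * √n) (δ * √n)).indicator (fun t ↦ h (t / √n)) t := by
  have hs : 0 < √(n : ℝ) := by positivity
  rw [integral_indicator measurableSet_Ioc, ← intervalIntegral.integral_of_le (by nlinarith),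
    intervalIntegral.integral_comp_div h hs.ne', mul_div_cancel_right₀ _ hs.ne',
    mul_div_cancel_right₀ _ hs.ne']

theorem tendsto_sqrt_smul_intervalIntegral {h : ℕ → ℝ → E} {G : ℝ → E} {δ κ C : ℝ} (hδ : 0 < δ)
    (hκ : 0 < κ) (hmeas : ∀ n, StronglyMeasurable (h n))
    (hbound : ∀ᶠ n : ℕ in atTop, ∀ θ, |θ| ≤ δ → ‖h n θ‖ ≤ C * Real.exp (-κ * (n * θ ^ 2)))
    (hlim : ∀ t, Tendsto (fun n : ℕ ↦ h n (t / √n)) atTop (𝓝 (G t))) :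
    Tendsto (fun n : ℕ ↦ √(n : ℝ) • ∫ θ in -δ..δ, h n θ) atTop (𝓝 (∫ t, G t)) := by
  have hdom : Tendsto
      (fun n : ℕ ↦ ∫ t, (Set.Ioc (-δ * √n) (δ * √n)).indicator (fun t ↦ h n (t / √n)) t)
      atTop (𝓝 (∫ t, G t)) := by
    apply tendsto_integral_filter_of_dominated_convergence fun t ↦ C * Real.exp (-κ * t ^ 2)
    · refine .of_forall fun n ↦ StronglyMeasurable.aestronglyMeasurable ?_
      exact ((hmeas n).comp_measurable (measurable_id.div_const _)).indicator measurableSet_Ioc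
    · filter_upwards [hbound, eventually_gt_atTop 0] with n hn hn_pos
      exact .of_forall (norm_indicator_comp_div_sqrt_le hδ.le hn_pos hn)
    · exact (integrable_exp_neg_mul_sq hκ).const_mul C
    · refine .of_forall fun t ↦ (hlim t).congr' ?_
      filter_upwards [tendsto_sqrt_natCast_atTop.eventually_gt_atTop (|t| / δ)] with n hn
      obtain ⟨hlower, hupper⟩ := abs_lt.mp ((div_lt_iff₀' hδ).mp hn)
      have ht : t ∈ Set.Ioc (-δ * √n) (δ * √n) := ⟨by rwa [neg_mul], hupper.le⟩
      rw [Set.indicator_of_mem ht]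
  refine hdom.congr' ?_
  filter_upwards [eventually_gt_atTop 0] with n hn
  rw [sqrt_smul_intervalIntegral_eq_integral_indicator _ hδ.le hn]

end LaplaceMethod

section SecondOrderExpansion

open Complex Asymptotics Topology

theorem tendsto_zero_of_tendsto_sqrt_mul {x : ℕ → ℂ} {c : ℂ}
    (hx : Tendsto (fun n : ℕ ↦ (√n : ℝ) * x n) atTop (𝓝 c)) : Tendsto x atTop (𝓝 0) := by
  have hinv : Tendsto (fun n : ℕ ↦ (((√n)⁻¹ : ℝ) : ℂ)) atTop (𝓝 0) :=
    (continuous_ofReal.tendsto' 0 0 ofReal_zero).comp tendsto_sqrt_natCast_atTop.inv_tendsto_atTop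
  have hprod := hinv.mul hx
  rw [zero_mul] at hprod
  refine hprod.congr' ?_
  filter_upwards [eventually_gt_atTop 0] with n hn
  have hs : ((√n : ℝ) : ℂ) ≠ 0 := ofReal_ne_zero.mpr (by positivity)
  rw [ofReal_inv, inv_mul_cancel_left₀ hs]

theorem tendsto_natCast_mul_of_isLittleO_sq {f : ℂ → ℂ} {L : ℂ}
    (hf : (fun x ↦ f x - L * x ^ 2) =o[𝓝 0] (· ^ 2)) {x : ℕ → ℂ} {c : ℂ}
    (hx : Tendsto (fun n : ℕ ↦ (√n : ℝ) * x n) atTop (𝓝 c)) :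
    Tendsto (fun n : ℕ ↦ n * f (x n)) atTop (𝓝 (L * c ^ 2)) := by
  have hsqrt (n : ℕ) : ((√n : ℝ) : ℂ) ^ 2 = n := by
    rw [← ofReal_pow, Real.sq_sqrt n.cast_nonneg, ofReal_natCast]
  have hx_zero := tendsto_zero_of_tendsto_sqrt_mul hx
  have hx_sq : Tendsto (fun n ↦ n * x n ^ 2) atTop (𝓝 (c ^ 2)) := by
    simpa only [mul_pow, hsqrt] using hx.pow 2
  have hremainder : Tendsto (fun n : ℕ ↦ n * (f (x n) - L * x n ^ 2)) atTop (𝓝 0) := by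
    rw [← isLittleO_one_iff ℂ]
    exact ((isBigO_refl _ _).mul_isLittleO (hf.comp_tendsto hx_zero)).trans_isBigO
      (hx_sq.isBigO_one ℂ)
  have hsum := hremainder.add (hx_sq.const_mul L)
  rw [zero_add] at hsum
  exact hsum.congr fun n ↦ by ring

theorem exp_sub_one_sub_id_isLittleO :
    (fun x ↦ exp x - 1 - x - 1 / 2 * x ^ 2) =o[𝓝 0] (· ^ 2) := by
  refine (exp_sub_sum_range_succ_isLittleO_pow 2).congr_left fun x ↦ ?_
  simp only [Finset.sum_range_succ, Finset.sum_range_zero, Nat.factorial]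
  push_cast
  ring

theorem log_one_add_sub_id_isLittleO :
    (fun x ↦ log (1 + x) - x - -1 / 2 * x ^ 2) =o[𝓝 0] (· ^ 2) := by
  refine ((log_sub_logTaylor_isBigO 2).congr_left fun x ↦ ?_).trans_isLittleO
    (isLittleO_pow_pow (by norm_num))
  have logTaylor_three : logTaylor 3 x = x - 1 / 2 * x ^ 2 := by
    norm_num [logTaylor_succ, logTaylor_zero]
    ring
  rw [logTaylor_three]
  ring

theorem tendsto_sqrt_mul_exp_sub_one (t : ℝ) :
    Tendsto (fun n : ℕ ↦ (√n : ℝ) * (exp ((t / √n : ℝ) * I) - 1)) atTop (𝓝 (t * I)) := by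
  have hderiv := (hasDerivAt_exp 0).hasFDerivAt.lim (t * I) (c := fun n : ℕ ↦ ((√n : ℝ) : ℂ))
    (l := atTop) (by simpa [abs_of_nonneg] using tendsto_sqrt_natCast_atTop)
  simpa [div_eq_inv_mul, mul_assoc] using hderiv

end SecondOrderExpansion

section SaddlePointLimit

open Complex Topology

/-- The logarithm of the first two factors of `saddleIntegrand n m θ`, where `r = m / n`, arranged
so that each of its two summands is of second order in `θ`. -/
noncomputable def saddleExponent (n : ℕ) (r θ : ℝ) : ℂ :=
  r * (n * (exp (θ * I) - 1 - θ * I)) +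
    (1 - r) * (n * (log (1 + -(r / (1 - r)) * (exp (θ * I) - 1)) -
      -(r / (1 - r)) * (exp (θ * I) - 1)))

theorem saddleIntegrand_eq_exp_saddleExponent_mul {n m : ℕ} (hmn : m < n) (θ : ℝ) :
    saddleIntegrand n m θ = exp (saddleExponent n (m / n) θ) *
      ((1 - 2 * ((m / n : ℝ) * exp (θ * I))) / (1 - (m / n : ℝ) * exp (θ * I))) := by
  have hn : (0 : ℝ) < n := mod_cast hmn.pos
  have hr : (m / n : ℝ) < 1 := (div_lt_one hn).mpr (mod_cast hmn)
  have hne := one_sub_mul_exp_ne_zero (by positivity) hr θ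
  have hm : (m : ℂ) = n * (m / n : ℝ) := by
    rw [← ofReal_natCast n, ← ofReal_mul, mul_div_cancel₀ _ hn.ne', ofReal_natCast]
  have hnm : ((n - m : ℕ) : ℂ) = n * (1 - (m / n : ℝ)) := by
    rw [Nat.cast_sub hmn.le, mul_sub, mul_one, ← hm]
  have hr1 : (1 - (m / n : ℝ) : ℂ) ≠ 0 := sub_ne_zero.mpr (mod_cast hr.ne')
  rw [saddleIntegrand, saddleExponent]
  generalize (m / n : ℝ) = r at hne hm hnm hr1 ⊢
  have hbase : (1 - r * exp (θ * I)) / (1 - r) = 1 + -(r / (1 - r)) * (exp (θ * I) - 1) := by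
    field_simp
    ring
  have hbase_ne : 1 + -(r / (1 - r)) * (exp (θ * I) - 1) ≠ 0 := hbase ▸ div_ne_zero hne hr1
  rw [hbase, ← exp_log hbase_ne, ← exp_nat_mul, ← exp_add, exp_log hbase_ne, hnm, hm]
  congr 2
  field_simp
  ring

theorem tendsto_saddleExponent {ρ : ℝ} {r : ℕ → ℝ} (hr : Tendsto r atTop (𝓝 ρ)) (hρ : ρ ≠ 1)
    (t : ℝ) :
    Tendsto (fun n : ℕ ↦ saddleExponent n (r n) (t / √n)) atTop
      (𝓝 (-(ρ * (1 - 2 * ρ) / (1 - ρ) / 2) * t ^ 2 : ℝ)) := by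
  have hr' : Tendsto (fun n ↦ (r n : ℂ)) atTop (𝓝 ρ) := (continuous_ofReal.tendsto ρ).comp hr
  have hρ' : (1 - ρ : ℂ) ≠ 0 := sub_ne_zero.mpr (mod_cast hρ.symm)
  have hangle : Tendsto (fun n : ℕ ↦ (√n : ℝ) * ((t / √n : ℝ) * I)) atTop (𝓝 (t * I)) := by
    refine tendsto_const_nhds.congr' ?_
    filter_upwards [eventually_gt_atTop 0] with n hn
    have hs : √(n : ℝ) ≠ 0 := by positivity
    rw [← mul_assoc, ← ofReal_mul, mul_div_cancel₀ _ hs]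
  have hscaled : Tendsto
      (fun n : ℕ ↦ (√n : ℝ) * (-(r n / (1 - r n)) * (exp ((t / √n : ℝ) * I) - 1)))
      atTop (𝓝 (-(ρ / (1 - ρ)) * (t * I))) :=
    ((hr'.div (hr'.const_sub 1) hρ').neg.mul (tendsto_sqrt_mul_exp_sub_one t)).congr
      fun n ↦ mul_left_comm _ _ _
  have hexp_term :=
    hr'.mul (tendsto_natCast_mul_of_isLittleO_sq exp_sub_one_sub_id_isLittleO hangle)
  have hlog_term := (hr'.const_sub 1).mul
    (tendsto_natCast_mul_of_isLittleO_sq log_one_add_sub_id_isLittleO hscaled)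
  have hvalue : ((-(ρ * (1 - 2 * ρ) / (1 - ρ) / 2) * t ^ 2 : ℝ) : ℂ) =
      ρ * (1 / 2 * (t * I) ^ 2) + (1 - ρ) * (-1 / 2 * (-(ρ / (1 - ρ)) * (t * I)) ^ 2) := by
    push_cast
    simp only [mul_pow, I_sq]
    field_simp
    ring
  rw [hvalue]
  exact hexp_term.add hlog_term

theorem tendsto_saddleIntegrand {ρ : ℝ} {m : ℕ → ℕ}
    (hm : Tendsto (fun n ↦ (m n / n : ℝ)) atTop (𝓝 ρ)) (hρ : ρ < 1) (t : ℝ) :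
    Tendsto (fun n : ℕ ↦ saddleIntegrand n (m n) (t / √n)) atTop
      (𝓝 (Real.exp (-(ρ * (1 - 2 * ρ) / (1 - ρ) / 2) * t ^ 2) * ((1 - 2 * ρ) / (1 - ρ)) : ℝ)) := by
  have hm' : Tendsto (fun n ↦ ((m n / n : ℝ) : ℂ)) atTop (𝓝 ρ) :=
    (continuous_ofReal.tendsto ρ).comp hm
  have hexp : Tendsto (fun n : ℕ ↦ exp ((t / √n : ℝ) * I)) atTop (𝓝 1) := by
    simpa using (tendsto_zero_of_tendsto_sqrt_mul (tendsto_sqrt_mul_exp_sub_one t)).add_const 1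
  have hw : Tendsto (fun n : ℕ ↦ (m n / n : ℝ) * exp ((t / √n : ℝ) * I)) atTop (𝓝 ρ) := by
    simpa using hm'.mul hexp
  have hfactor := ((hw.const_mul 2).const_sub 1).div (hw.const_sub 1)
    (sub_ne_zero.mpr (mod_cast hρ.ne'))
  have hexponent := (continuous_exp.tendsto _).comp (tendsto_saddleExponent hm hρ.ne t)
  have hlimit : ((1 - 2 * ρ) / (1 - ρ) : ℂ) = ((1 - 2 * ρ) / (1 - ρ) : ℝ) := by push_cast; rfl
  rw [ofReal_mul, ofReal_exp, ← hlimit]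
  refine (hexponent.mul hfactor).congr' ?_
  filter_upwards [hm.eventually_lt_const hρ, eventually_gt_atTop 0] with n hn hn_pos
  have hmn : m n < n := mod_cast (div_lt_one (by positivity : (0 : ℝ) < n)).mp hn
  exact (saddleIntegrand_eq_exp_saddleExponent_mul hmn _).symm

end SaddlePointLimit

section SaddlePointBound

open Complex

theorem norm_exp_mul_exp_sub_one (a θ : ℝ) :
    ‖exp (2 * a * (exp (θ * I) - 1) - a * (θ * I))‖ = Real.exp (-(2 * a * (1 - Real.cos θ))) := by
  have hre : (2 * a * (exp (θ * I) - 1) - a * (θ * I)).re = 2 * a * (Real.cos θ - 1) := by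
    simp [exp_re]
  rw [norm_exp, hre]
  ring_nf

theorem norm_one_sub_mul_exp_sq (r θ : ℝ) :
    ‖1 - r * exp (θ * I)‖ ^ 2 = (1 - r) ^ 2 + 2 * r * (1 - Real.cos θ) := by
  rw [Complex.sq_norm, normSq_apply]
  simp only [sub_re, sub_im, one_re, one_im, re_ofReal_mul, im_ofReal_mul, exp_ofReal_mul_I_re,
    exp_ofReal_mul_I_im]
  linear_combination r ^ 2 * Real.sin_sq_add_cos_sq θ

theorem norm_one_sub_mul_exp_div_le {r : ℝ} (hr : r ≠ 1) (θ : ℝ) :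
    ‖(1 - r * exp (θ * I)) / (1 - r)‖ ≤ Real.exp (r * (1 - Real.cos θ) / (1 - r) ^ 2) := by
  have hr' : 1 - r ≠ 0 := sub_ne_zero.mpr hr.symm
  have hnorm : ‖(1 - r : ℂ)‖ ^ 2 = (1 - r) ^ 2 := by
    rw [← ofReal_one, ← ofReal_sub, norm_real, Real.norm_eq_abs, sq_abs]
  apply le_of_sq_le_sq _ (Real.exp_pos _).le
  calc ‖(1 - r * exp (θ * I)) / (1 - r)‖ ^ 2
      = (2 : ℕ) * (r * (1 - Real.cos θ) / (1 - r) ^ 2) + 1 := by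
        rw [norm_div, div_pow, norm_one_sub_mul_exp_sq, hnorm]
        field_simp
        ring
    _ ≤ Real.exp ((2 : ℕ) * (r * (1 - Real.cos θ) / (1 - r) ^ 2)) := Real.add_one_le_exp _
    _ = Real.exp (r * (1 - Real.cos θ) / (1 - r) ^ 2) ^ 2 := Real.exp_nat_mul _ _

theorem norm_one_sub_two_mul_exp_div_le {r : ℝ} (h0 : 0 ≤ r) (h1 : r ≤ 1 / 2) (θ : ℝ) :
    ‖(1 - 2 * (r * exp (θ * I))) / (1 - r * exp (θ * I))‖ ≤ 4 := by
  have hw : ‖r * exp (θ * I)‖ = r := by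
    rw [norm_mul, norm_exp_ofReal_mul_I, mul_one, norm_real, Real.norm_of_nonneg h0]
  have hnum : ‖1 - 2 * (r * exp (θ * I))‖ ≤ 1 + 2 * r := by
    simpa only [norm_mul, norm_ofNat, hw, norm_one] using norm_sub_le 1 (2 * (r * exp (θ * I)))
  have hden : 1 - r ≤ ‖1 - r * exp (θ * I)‖ := by
    simpa only [hw, norm_one] using norm_sub_norm_le (1 : ℂ) (r * exp (θ * I))
  rw [norm_div, div_le_iff₀ (by linarith)]
  linarith

theorem norm_saddleIntegrand_le {n m : ℕ} (hmn : 2 * m < n) (θ : ℝ) :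
    ‖saddleIntegrand n m θ‖ ≤ 4 * Real.exp
      (-((m / n) * (1 - 2 * (m / n)) / (1 - m / n) * (n * (1 - Real.cos θ))) : ℝ) := by
  have hn : (0 : ℝ) < n := mod_cast hmn.pos
  have hm : (m : ℝ) = n * (m / n) := (mul_div_cancel₀ _ hn.ne').symm
  have hnm : ((n - m : ℕ) : ℝ) = n * (1 - m / n) := by
    rw [Nat.cast_sub (by omega), mul_sub, mul_one, ← hm]
  have h0 : (0 : ℝ) ≤ m / n := by positivity
  have h1 : (m / n : ℝ) < 1 / 2 := by
    rw [div_lt_div_iff₀ hn two_pos]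
    exact_mod_cast (by omega : m * 2 < 1 * n)
  rw [saddleIntegrand, norm_mul, norm_mul, norm_pow, ← ofReal_natCast m, norm_exp_mul_exp_sub_one]
  generalize (m / n : ℝ) = r at h0 h1 hm hnm ⊢
  have hr : 1 - r ≠ 0 := by linarith
  calc _ ≤ Real.exp (-(2 * m * (1 - Real.cos θ))) *
        Real.exp (r * (1 - Real.cos θ) / (1 - r) ^ 2) ^ (n - m) * 4 := by
        gcongr
        · exact norm_one_sub_mul_exp_div_le (by linarith) θ
        · exact norm_one_sub_two_mul_exp_div_le h0 h1.le θ
    _ = _ := by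
        rw [← Real.exp_nat_mul, ← Real.exp_add, mul_comm, hnm, hm]
        congr 2
        field_simp
        ring

theorem norm_saddleIntegrand_le_exp_neg_sq {n m : ℕ} (hmn : 2 * m < n) {q : ℝ} (hq : 0 ≤ q)
    (hqle : q ≤ (m / n) * (1 - 2 * (m / n)) / (1 - m / n)) {θ : ℝ} (hθ : |θ| ≤ Real.pi) :
    ‖saddleIntegrand n m θ‖ ≤ 4 * Real.exp (-(q * (2 / Real.pi ^ 2)) * (n * θ ^ 2)) := by
  have hcos : 2 / Real.pi ^ 2 * θ ^ 2 ≤ 1 - Real.cos θ := by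
    linarith [Real.cos_le_one_sub_mul_cos_sq hθ]
  refine (norm_saddleIntegrand_le hmn θ).trans ?_
  gcongr 4 * Real.exp ?_
  rw [neg_mul, neg_le_neg_iff]
  calc q * (2 / Real.pi ^ 2) * (n * θ ^ 2) = q * (n * (2 / Real.pi ^ 2 * θ ^ 2)) := by ring
    _ ≤ _ := mul_le_mul hqle (by gcongr) (by positivity) (hq.trans hqle)

end SaddlePointBound

section Asymptotics

open Stirling Topology

variable {ρ : ℝ} {m : ℕ → ℕ}

theorem tendsto_atTop_of_tendsto_div (hm : Tendsto (fun n ↦ (m n / n : ℝ)) atTop (𝓝 ρ))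
    (h0 : 0 < ρ) : Tendsto m atTop atTop := by
  rw [← tendsto_natCast_atTop_iff (R := ℝ)]
  refine (hm.pos_mul_atTop h0 tendsto_natCast_atTop_atTop).congr' ?_
  filter_upwards [eventually_ne_atTop 0] with n hn
  exact div_mul_cancel₀ _ (mod_cast hn)

theorem eventually_mul_lt_of_tendsto_div (hm : Tendsto (fun n ↦ (m n / n : ℝ)) atTop (𝓝 ρ)) {k : ℕ}
    (hρ : k * ρ < 1) : ∀ᶠ n in atTop, k * m n < n := by
  filter_upwards [(hm.const_mul (k : ℝ)).eventually_lt_const hρ, eventually_gt_atTop 0]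
    with n hn hn_pos
  rw [← mul_div_assoc, div_lt_one (mod_cast hn_pos)] at hn
  exact_mod_cast hn

theorem tendsto_sub_atTop_of_tendsto_div (hm : Tendsto (fun n ↦ (m n / n : ℝ)) atTop (𝓝 ρ))
    (h1 : ρ < 1) : Tendsto (fun n ↦ n - m n) atTop atTop := by
  refine tendsto_atTop_of_tendsto_div ((hm.const_sub 1).congr' ?_) (sub_pos.mpr h1)
  filter_upwards [eventually_mul_lt_of_tendsto_div hm (k := 1) (by simpa)] with n hn
  rw [one_mul] at hn
  rw [Nat.cast_sub hn.le, sub_div, div_self (mod_cast hn.pos.ne')]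

theorem tendsto_stirlingSeq_mul_sqrt_div_sqrt
    (hm : Tendsto (fun n ↦ (m n / n : ℝ)) atTop (𝓝 ρ)) (h0 : 0 < ρ) (h1 : ρ < 1) :
    Tendsto (fun n : ℕ ↦ stirlingSeq n * stirlingSeq (m n) / stirlingSeq (n - m n) *
        √(2 * n * m n / (n - m n)) / √n) atTop (𝓝 (√Real.pi * √(2 * ρ / (1 - ρ)))) := by
  have hpi : √Real.pi ≠ 0 := by positivity
  have hstirling := (tendsto_stirlingSeq_sqrt_pi.mul
    (tendsto_stirlingSeq_sqrt_pi.comp (tendsto_atTop_of_tendsto_div hm h0))).div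
    (tendsto_stirlingSeq_sqrt_pi.comp (tendsto_sub_atTop_of_tendsto_div hm h1)) hpi
  have hsqrt := ((hm.const_mul 2).div (hm.const_sub 1) (by linarith)).sqrt
  rw [mul_self_div_self] at hstirling
  refine (hstirling.mul hsqrt).congr' ?_
  filter_upwards [eventually_gt_atTop 0] with n hn
  have hn' : (0 : ℝ) < n := mod_cast hn
  have hratio : 2 * (m n / n) / (1 - m n / n) = (2 * n * m n / (n - m n) / n : ℝ) := by
    field_simp
  rw [mul_div_assoc _ _ (√(n : ℝ)), ← Real.sqrt_div' _ hn'.le, ← hratio]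
  rfl

theorem tendsto_sqrt_mul_integral_saddleIntegrand
    (hm : Tendsto (fun n ↦ (m n / n : ℝ)) atTop (𝓝 ρ)) (h0 : 0 < ρ) (h1 : ρ < 1 / 2) :
    Tendsto (fun n : ℕ ↦ √(n : ℝ) • ∫ θ in -Real.pi..Real.pi, saddleIntegrand n (m n) θ) atTop
      (𝓝 (√(Real.pi / (ρ * (1 - 2 * ρ) / (1 - ρ) / 2)) * ((1 - 2 * ρ) / (1 - ρ)) : ℝ)) := by
  have hρ : 0 < 1 - 2 * ρ := by linarith
  have hρ' : 0 < 1 - ρ := by linarith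
  have hq : 0 < ρ * (1 - 2 * ρ) / (1 - ρ) := by positivity
  have hq_lim := (hm.mul ((hm.const_mul 2).const_sub 1)).div (hm.const_sub 1) hρ'.ne'
  have hmeas (n : ℕ) : MeasureTheory.StronglyMeasurable (saddleIntegrand n (m n)) := by
    unfold saddleIntegrand
    fun_prop
  rw [← integral_gaussian, ← MeasureTheory.integral_mul_const, ← integral_complex_ofReal]
  refine tendsto_sqrt_smul_intervalIntegral (C := 4)
    (κ := ρ * (1 - 2 * ρ) / (1 - ρ) / 2 * (2 / Real.pi ^ 2)) Real.pi_pos (by positivity) hmeas ?_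
    (tendsto_saddleIntegrand hm (by linarith))
  filter_upwards [hq_lim.eventually_const_le (half_lt_self hq),
    eventually_mul_lt_of_tendsto_div hm (k := 2) (by push_cast; linarith)] with n hqn hmn θ hθ
  exact norm_saddleIntegrand_le_exp_neg_sq hmn (by positivity) hqn hθ

theorem sqrt_pi_mul_sqrt_mul_sqrt_div_two_pi (h0 : 0 < ρ) (h1 : ρ < 1 / 2) :
    √Real.pi * √(2 * ρ / (1 - ρ)) / (2 * Real.pi) *
        (√(Real.pi / (ρ * (1 - 2 * ρ) / (1 - ρ) / 2)) * ((1 - 2 * ρ) / (1 - ρ))) =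
      √(1 - 2 * ρ) / (1 - ρ) := by
  have hρ : 0 < 1 - 2 * ρ := by linarith
  have hρ' : 0 < 1 - ρ := by linarith
  have hsqrt : √Real.pi * √(2 * ρ / (1 - ρ)) * √(Real.pi / (ρ * (1 - 2 * ρ) / (1 - ρ) / 2)) =
      2 * Real.pi / √(1 - 2 * ρ) := by
    rw [← Real.sqrt_mul Real.pi_pos.le, ← Real.sqrt_mul (by positivity),
      ← Real.sqrt_sq Real.two_pi_pos.le, ← Real.sqrt_div (by positivity)]
    congr 1
    field_simp
  have hs : √(1 - 2 * ρ) ≠ 0 := by positivity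
  have hs_sq : √(1 - 2 * ρ) ^ 2 = 1 - 2 * ρ := Real.sq_sqrt hρ.le
  calc _ = √Real.pi * √(2 * ρ / (1 - ρ)) * √(Real.pi / (ρ * (1 - 2 * ρ) / (1 - ρ) / 2)) /
        (2 * Real.pi) * ((1 - 2 * ρ) / (1 - ρ)) := by ring
    _ = _ := by
      rw [hsqrt]
      field_simp
      exact hs_sq.symm

end Asymptotics

end LacknerPanholzer

open LacknerPanholzer in
theorem lackner_panholzer_corollary_4_11_subcritical_general {ρ : ℝ} (h0 : 0 < ρ) (h1 : ρ < 1 / 2)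
    {m : ℕ → ℕ} (hm : Tendsto (fun n ↦ (m n / n : ℝ)) atTop (nhds ρ)) :
    Tendsto (fun n : ℕ ↦ (MCount n (m n) : ℝ) / (n : ℝ) ^ (n + m n)) atTop
      (nhds (√(1 - 2 * ρ) / (1 - ρ))) := by
  have hstirling := (tendsto_stirlingSeq_mul_sqrt_div_sqrt hm h0 (by linarith)).div_const
    (2 * Real.pi)
  have hintegral := tendsto_sqrt_mul_integral_saddleIntegrand hm h0 h1
  have hprod := ((Complex.continuous_ofReal.tendsto _).comp hstirling).mul hintegral
  rw [← Complex.ofReal_mul, sqrt_pi_mul_sqrt_mul_sqrt_div_two_pi h0 h1] at hprod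
  rw [← tendsto_ofReal_iff]
  refine hprod.congr' ?_
  filter_upwards [eventually_mul_lt_of_tendsto_div hm (k := 1) (by push_cast; linarith),
    (tendsto_atTop_of_tendsto_div hm h0).eventually_gt_atTop 0] with n hmn hm_pos
  rw [one_mul] at hmn
  have hs : ((√n : ℝ) : ℂ) ≠ 0 := Complex.ofReal_ne_zero.mpr (by have := hmn.pos; positivity)
  push_cast [MCount_div_eq_integral hm_pos hmn, Function.comp_apply, Complex.real_smul]
  field_simp

/-- (Lackner–Panholzer, Corollary 4.11, subcritical case) Fix `ρ ∈ (0, 1/2)` and set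
`m = ⌊ρn⌋`.  The probability `p_{n,m} = M_{n,m} / n^(n+m)` that a uniformly random pair
`(f, s)`, with `f` an `n`-mapping and `s ∈ {1,…,n}^m`, is a mapping parking function
satisfies `lim_{n→∞} p_{n,m} = √(1-2ρ)/(1-ρ)`. -/
theorem lackner_panholzer_corollary_4_11_subcritical (ρ : ℝ) (h0 : 0 < ρ) (h1 : ρ < 1 / 2) :
    Tendsto
      (fun n : ℕ =>
        (MCount n ⌊ρ * (n : ℝ)⌋₊ : ℝ) / (n : ℝ) ^ (n + ⌊ρ * (n : ℝ)⌋₊))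
      atTop (nhds (Real.sqrt (1 - 2 * ρ) / (1 - ρ))) := by
  exact lackner_panholzer_corollary_4_11_subcritical_general h0 h1
    ((tendsto_nat_floor_mul_div_atTop h0.le).comp tendsto_natCast_atTop_atTop)
end
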